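/- arXiv:1307.1288 — 4 statements merged into one kernel-verified Lean document; each statement's English description precedes it below -/
import Mathlib

section
/- Let V : [0,∞) → ℝ be a right-continuous function with left limits, of finite variation on every compact interval, with canonical decomposition V = V^c + V^d into its continuous part V^c and pure-jump part V^d. For every t > 0 and every Borel set A ⊆ ℝ, the signed occupation measure satisfies θ_t(A) = ∫_0^t 1_A(V(s)) V^c(ds) = ∫_A ℓ^x(t) dx; i.e., θ_t(dx) is absolutely continuous with respect to Lebesgue measure with density x ↦ ℓ^x(t). -/
open MeasureTheory Set Filter
open scoped ENNReal NNReal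

noncomputable section

/-- `V` increases through the level `x` at time `t`: `t > 0`, `V t = x`, `V` is continuous
at `t` (within the domain `[0,∞)`), and `V s - V t` has the same sign as `s - t` for all
`s ≥ 0` in some neighborhood of `t`. -/
def IncreasesThrough (V : ℝ → ℝ) (x t : ℝ) : Prop :=
  0 < t ∧ V t = x ∧ ContinuousWithinAt V (Set.Ici 0) t ∧
    ∃ ε > 0, ∀ s ∈ Set.Ici (0 : ℝ), |s - t| < ε →
      ((s < t → V s < V t) ∧ (t < s → V t < V s))

/-- `V` decreases through the level `x` at time `t` iff `-V` increases through `-x` at `t`. -/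
def DecreasesThrough (V : ℝ → ℝ) (x t : ℝ) : Prop :=
  IncreasesThrough (fun s => -V s) (-x) t

/-- `(0,t] ∩ ℐ(x)`: the increasing passage times of `V` through `x` up to time `t`. -/
def incSet (V : ℝ → ℝ) (x t : ℝ) : Set ℝ :=
  {s | s ∈ Set.Ioc 0 t ∧ IncreasesThrough V x s}

/-- `(0,t] ∩ 𝒟(x)`: the decreasing passage times of `V` through `x` up to time `t`. -/
def decSet (V : ℝ → ℝ) (x t : ℝ) : Set ℝ :=
  {s | s ∈ Set.Ioc 0 t ∧ DecreasesThrough V x s}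

/-- The signed local time `ℓ^x(t) = Card((0,t] ∩ ℐ(x)) − Card((0,t] ∩ 𝒟(x))`
(meaningful when both sets are finite). -/
def signedLocalTime (V : ℝ → ℝ) (x t : ℝ) : ℤ :=
  ((incSet V x t).ncard : ℤ) - ((decSet V x t).ncard : ℤ)

/-- The absolute local time `λ^x(t) = Card((0,t] ∩ ℐ(x)) + Card((0,t] ∩ 𝒟(x))`
(meaningful when both sets are finite). -/
def absLocalTime (V : ℝ → ℝ) (x t : ℝ) : ℕ :=
  (incSet V x t).ncard + (decSet V x t).ncard

/-- The integral `∫_A f dμ` of `f` against a signed measure `μ`, defined through the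
Jordan decomposition `μ = μ⁺ - μ⁻`. -/
def signedIntegral {Ω : Type*} [MeasurableSpace Ω] (μ : MeasureTheory.SignedMeasure Ω)
    (A : Set Ω) (f : Ω → ℝ) : ℝ :=
  ∫ ω in A, f ω ∂μ.toJordanDecomposition.posPart -
    ∫ ω in A, f ω ∂μ.toJordanDecomposition.negPart

open Topology in
lemma real_ind (P : ℝ → Prop) {a b : ℝ} (hab : a ≤ b) (h0 : P a)
    (hL : ∀ r ∈ Ioc a b, ∀ᶠ u in 𝓝[<] r, P u → P r)
    (hR : ∀ r ∈ Ico a b, P r → ∀ᶠ u in 𝓝[>] r, P u) : P b := by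
  set S : Set ℝ := {r | r ∈ Icc a b ∧ P r} with hS
  have hne : S.Nonempty := ⟨a, ⟨le_rfl, hab⟩, h0⟩
  have hbd : BddAbove S := ⟨b, fun r hr => hr.1.2⟩
  have hs1 : a ≤ sSup S := le_csSup hbd ⟨⟨le_rfl, hab⟩, h0⟩
  have hs2 : sSup S ≤ b := csSup_le hne fun r hr => hr.1.2
  have hP : P (sSup S) := by
    by_contra hn
    have has : a < sSup S := lt_of_le_of_ne hs1 (fun h => hn (h ▸ h0))
    have h1 := hL _ ⟨has, hs2⟩
    obtain ⟨l, hl, hl2⟩ := (mem_nhdsLT_iff_exists_Ioo_subset).1 h1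
    obtain ⟨u, hu, hlu⟩ := exists_lt_of_lt_csSup hne hl
    have hus : u < sSup S := lt_of_le_of_ne (le_csSup hbd hu) (fun h => hn (h ▸ hu.2))
    exact hn (hl2 ⟨hlu, hus⟩ hu.2)
  rcases hs2.eq_or_lt with h | h
  · exact h ▸ hP
  · exfalso
    have h1 := hR _ ⟨hs1, h⟩ hP
    obtain ⟨l, hl, hl2⟩ := (mem_nhdsGT_iff_exists_Ioo_subset).1 h1
    obtain ⟨u, hu1, hu2⟩ := exists_between (lt_min hl h)
    have : u ∈ S := ⟨⟨hs1.trans hu1.le, (hu2.trans_le (min_le_right _ _)).le⟩,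
      hl2 ⟨hu1, hu2.trans_le (min_le_left _ _)⟩⟩
    exact absurd (le_csSup hbd this) (not_le.2 hu1)

open Topology in
lemma jump_sum (h j : ℝ → ℝ) (E : Finset ℝ) {a b : ℝ} (hab : a ≤ b)
    (hE : ∀ s ∈ Ioc a b, j s ≠ 0 → s ∈ E) (hEs : ∀ s ∈ E, s ∈ Ioc a b)
    (hL : ∀ r ∈ Ioc a b, ∀ᶠ u in 𝓝[<] r, h u = h r - j r)
    (hR : ∀ r ∈ Ico a b, ∀ᶠ u in 𝓝[>] r, h u = h r) :
    h b - h a = ∑ s ∈ E, j s := by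
  have key : h b - h a = ∑ s ∈ E.filter (fun s => s ≤ b), j s := by
    refine real_ind (fun r => h r - h a = ∑ s ∈ E.filter (fun s => s ≤ r), j s) hab ?_ ?_ ?_
    · rw [sub_self, Finset.filter_false_of_mem, Finset.sum_empty]
      intro s hs
      exact not_le.2 (hEs s hs).1
    · intro r hr
      have hev : ∀ᶠ u in 𝓝[<] r, ∀ s ∈ E, s < r → s < u := by
        rw [Filter.eventually_all_finset]
        intro s hs
        by_cases hsr : s < r
        · filter_upwards [Ioo_mem_nhdsLT hsr] with u hu _ using hu.1
        · exact Eventually.of_forall fun u h => absurd h hsr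
      filter_upwards [hev, hL r hr, self_mem_nhdsWithin] with u hu1 hu2 hu3 hPu
      have hu3 : u < r := hu3
      have hjr : h r = h u + j r := by rw [hu2]; ring
      have hsum : ∑ s ∈ E.filter (fun s => s ≤ r), j s
          = ∑ s ∈ E.filter (fun s => s ≤ u), j s + j r := by
        by_cases hrE : r ∈ E
        · have : E.filter (fun s => s ≤ r) = insert r (E.filter (fun s => s ≤ u)) := by
            ext s
            simp only [Finset.mem_filter, Finset.mem_insert]
            constructor
            · rintro ⟨h1, h2⟩
              rcases h2.eq_or_lt with h | h
              · exact Or.inl h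
              · exact Or.inr ⟨h1, (hu1 s h1 h).le⟩
            · rintro (h | h)
              · exact ⟨h ▸ hrE, h.le⟩
              · exact ⟨h.1, h.2.trans hu3.le⟩
          rw [this, Finset.sum_insert, add_comm]
          simp [hu3]
        · have hj0 : j r = 0 := by
            by_contra hne
            exact hrE (hE r hr hne)
          rw [hj0, add_zero]
          congr 1
          ext s
          simp only [Finset.mem_filter]
          constructor
          · rintro ⟨h1, h2⟩
            exact ⟨h1, (hu1 s h1 (lt_of_le_of_ne h2 (fun h => hrE (h ▸ h1)))).le⟩
          · rintro ⟨h1, h2⟩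
            exact ⟨h1, h2.trans hu3.le⟩
      rw [hsum, ← hPu, hjr]; ring
    · intro r hr hPr
      have hev : ∀ᶠ u in 𝓝[>] r, ∀ s ∈ E, r < s → u < s := by
        rw [Filter.eventually_all_finset]
        intro s hs
        by_cases hsr : r < s
        · filter_upwards [Ioo_mem_nhdsGT hsr] with u hu _ using hu.2
        · exact Eventually.of_forall fun u h => absurd h hsr
      filter_upwards [hev, hR r hr, self_mem_nhdsWithin] with u hu1 hu2 hu3
      have hu3 : r < u := hu3
      rw [hu2, hPr]
      congr 1
      ext s
      simp only [Finset.mem_filter]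
      constructor
      · rintro ⟨h1, h2⟩
        exact ⟨h1, h2.trans hu3.le⟩
      · rintro ⟨h1, h2⟩
        refine ⟨h1, ?_⟩
        by_contra hn
        exact absurd (hu1 s h1 (not_le.1 hn)) (not_lt.2 h2)
  rw [key]
  congr 1
  exact Finset.filter_true_of_mem fun s hs => (hEs s hs).2

structure GoodLevel (V Vm : ℝ → ℝ) (t x : ℝ) : Prop where
  lev : {s | s ∈ Icc 0 t ∧ V s = x}.Finite
  str : {s | s ∈ Ioc 0 t ∧ V s ≠ Vm s ∧ x ∈ uIcc (Vm s) (V s)}.Finite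
  ne : ∀ s ∈ Ioc 0 t, V s ≠ Vm s → x ≠ V s ∧ x ≠ Vm s
  sup : ∀ p q : ℚ, x ≠ sSup (V '' Icc (p : ℝ) q)
  inf : ∀ p q : ℚ, x ≠ sInf (V '' Icc (p : ℝ) q)

lemma GoodLevel.vm_ne {V Vm : ℝ → ℝ} {t x : ℝ} (g : GoodLevel V Vm t x) {s : ℝ}
    (hs : s ∈ Ioc 0 t) (h : V s ≠ x) : Vm s ≠ x := by
  intro hx
  by_cases hj : V s = Vm s
  · exact h (hj.trans hx)
  · exact (g.ne s hs hj).2 hx.symm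

open Topology in
/-- On an open interval without level points or straddling jumps, the sign is constant. -/
lemma no_cross {V Vm : ℝ → ℝ} {x p q : ℝ}
    (hrc : ∀ s ∈ Ioo p q, ContinuousWithinAt V (Ici s) s)
    (hll : ∀ s ∈ Ioo p q, Tendsto V (𝓝[<] s) (𝓝 (Vm s)))
    (h1 : ∀ s ∈ Ioo p q, V s ≠ x) (h2 : ∀ s ∈ Ioo p q, Vm s ≠ x)
    (h3 : ∀ s ∈ Ioo p q, (x < V s ↔ x < Vm s)) :
    ∀ u ∈ Ioo p q, ∀ v ∈ Ioo p q, u ≤ v → (x < V u ↔ x < V v) := by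
  intro u hu v hv huv
  have hsub : ∀ r ∈ Icc u v, r ∈ Ioo p q := fun r hr => ⟨hu.1.trans_le hr.1, hr.2.trans_lt hv.2⟩
  refine real_ind (fun r => (x < V u ↔ x < V r)) huv Iff.rfl ?_ ?_
  · intro r hr
    have hr' := hsub r ⟨hr.1.le, hr.2⟩
    rcases lt_or_gt_of_ne (h2 r hr') with h | h
    · filter_upwards [(hll r hr').eventually_lt_const h] with w hw hi
      rw [hi, h3 r hr']
      exact ⟨fun h' => absurd h' (not_lt.2 hw.le), fun h' => absurd h' (not_lt.2 h.le)⟩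
    · filter_upwards [(hll r hr').eventually_const_lt h] with w hw hi
      rw [hi, h3 r hr']
      exact ⟨fun _ => h, fun _ => hw⟩
  · intro r hr hP
    have hr' := hsub r ⟨hr.1, hr.2.le⟩
    have hc : Tendsto V (𝓝[>] r) (𝓝 (V r)) :=
      (hrc r hr').tendsto.mono_left (nhdsWithin_mono _ Ioi_subset_Ici_self)
    rcases lt_or_gt_of_ne (h1 r hr') with h | h
    · filter_upwards [hc.eventually_lt_const h] with w hw
      rw [hP]
      exact ⟨fun h' => absurd h' (not_lt.2 h.le), fun h' => absurd h' (not_lt.2 hw.le)⟩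
    · filter_upwards [hc.eventually_const_lt h] with w hw
      rw [hP]
      exact ⟨fun _ => hw, fun _ => h⟩

open Topology in
/-- one-sided sign constancy near a point, avoiding a finite set -/
lemma GoodLevel.straddle {V Vm : ℝ → ℝ} {t x : ℝ} (g : GoodLevel V Vm t x) {s : ℝ}
    (hs : s ∈ Ioc 0 t) (h : V s ≠ x)
    (hn : ¬ (V s ≠ Vm s ∧ x ∈ uIcc (Vm s) (V s))) : (x < V s ↔ x < Vm s) := by
  by_cases hj : V s = Vm s
  · rw [hj]
  · have h4 : x ∉ uIcc (Vm s) (V s) := fun h' => hn ⟨hj, h'⟩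
    rw [mem_uIcc] at h4
    push Not at h4
    have h5 := g.vm_ne hs h
    constructor
    · intro h6
      by_contra h7
      exact absurd (h4.1 (not_lt.1 h7)) (not_lt.2 h6.le)
    · intro h6
      by_contra h7
      exact absurd (h4.2 (not_lt.1 h7)) (not_lt.2 h6.le)

open Topology in
lemma GoodLevel.cross {V Vm : ℝ → ℝ} {t x : ℝ} (g : GoodLevel V Vm t x)
    (hrc : ∀ s ∈ Set.Ici (0 : ℝ), ContinuousWithinAt V (Set.Ici s) s)
    (hll : ∀ s ∈ Set.Ioi (0 : ℝ), Tendsto V (𝓝[<] s) (𝓝 (Vm s)))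
    {r : ℝ} (hr : r ∈ Ioo 0 t) (hx : V r = x) :
    IncreasesThrough V x r ∨ DecreasesThrough V x r := by
  have hrm : V r = Vm r := by
    by_contra h
    exact (g.ne r ⟨hr.1, hr.2.le⟩ h).1 hx.symm
  have hcont : ContinuousAt V r := by
    rw [continuousAt_iff_continuous_left'_right']
    refine ⟨?_, ?_⟩
    · have := hll r hr.1
      rw [← hrm] at this
      exact this
    · exact (hrc r hr.1.le).mono Ioi_subset_Ici_self
  -- neighbourhood
  have hfin := (g.lev.union g.str).subset (t := ({s | s ∈ Icc 0 t ∧ V s = x} ∪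
    {s | s ∈ Ioc 0 t ∧ V s ≠ Vm s ∧ x ∈ uIcc (Vm s) (V s)}) \ {r}) sdiff_subset
  have hnb : (({s | s ∈ Icc 0 t ∧ V s = x} ∪
    {s | s ∈ Ioc 0 t ∧ V s ≠ Vm s ∧ x ∈ uIcc (Vm s) (V s)}) \ {r})ᶜ ∩ Ioo 0 t ∈ 𝓝 r :=
    inter_mem (hfin.isClosed.isOpen_compl.mem_nhds (by simp)) (Ioo_mem_nhds hr.1 hr.2)
  obtain ⟨δ, hδ, hball⟩ := Metric.mem_nhds_iff.1 hnb
  have hgood : ∀ s, |s - r| < δ → s ≠ r → s ∈ Ioo 0 t ∧ V s ≠ x ∧ Vm s ≠ x ∧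
      (x < V s ↔ x < Vm s) := by
    intro s hs hsr
    have hs' := hball (by rw [Metric.mem_ball, Real.dist_eq]; exact hs : s ∈ Metric.ball r δ)
    have hs0 : s ∈ Ioo 0 t := hs'.2
    have h1 := hs'.1
    simp only [mem_compl_iff, Set.mem_sdiff, mem_union, mem_ofPred_eq, mem_singleton_iff, hsr,
      not_false_eq_true, and_true, not_or] at h1
    have h2 : V s ≠ x := fun h => h1.1 ⟨⟨hs0.1.le, hs0.2.le⟩, h⟩
    have h3 : s ∈ Ioc 0 t := ⟨hs0.1, hs0.2.le⟩
    exact ⟨hs0, h2, g.vm_ne h3 h2, g.straddle h3 h2 fun h => h1.2 ⟨h3, h⟩⟩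
  have hl : ∀ s ∈ Ioo (r - δ) r, |s - r| < δ ∧ s ≠ r := fun s hs =>
    ⟨by rw [abs_lt]; constructor <;> linarith [hs.1, hs.2], hs.2.ne⟩
  have hrr : ∀ s ∈ Ioo r (r + δ), |s - r| < δ ∧ s ≠ r := fun s hs =>
    ⟨by rw [abs_lt]; constructor <;> linarith [hs.1, hs.2], hs.1.ne'⟩
  have hL : ∀ u ∈ Ioo (r - δ) r, ∀ v ∈ Ioo (r - δ) r, u ≤ v → (x < V u ↔ x < V v) := by
    apply no_cross (Vm := Vm)
    · intro s hs; exact hrc s (hgood s (hl s hs).1 (hl s hs).2).1.1.le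
    · intro s hs; exact hll s (hgood s (hl s hs).1 (hl s hs).2).1.1
    · intro s hs; exact (hgood s (hl s hs).1 (hl s hs).2).2.1
    · intro s hs; exact (hgood s (hl s hs).1 (hl s hs).2).2.2.1
    · intro s hs; exact (hgood s (hl s hs).1 (hl s hs).2).2.2.2
  have hR : ∀ u ∈ Ioo r (r + δ), ∀ v ∈ Ioo r (r + δ), u ≤ v → (x < V u ↔ x < V v) := by
    apply no_cross (Vm := Vm)
    · intro s hs; exact hrc s (hgood s (hrr s hs).1 (hrr s hs).2).1.1.le
    · intro s hs; exact hll s (hgood s (hrr s hs).1 (hrr s hs).2).1.1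
    · intro s hs; exact (hgood s (hrr s hs).1 (hrr s hs).2).2.1
    · intro s hs; exact (hgood s (hrr s hs).1 (hrr s hs).2).2.2.1
    · intro s hs; exact (hgood s (hrr s hs).1 (hrr s hs).2).2.2.2
  have hL2 : (∀ u ∈ Ioo (r - δ) r, V u < x) ∨ (∀ u ∈ Ioo (r - δ) r, x < V u) := by
    have hm : r - δ / 2 ∈ Ioo (r - δ) r := ⟨by linarith, by linarith⟩
    have hiff : ∀ u ∈ Ioo (r - δ) r, (x < V u ↔ x < V (r - δ / 2)) := by
      intro u hu
      rcases le_total u (r - δ / 2) with h | h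
      · exact hL u hu _ hm h
      · exact (hL _ hm u hu h).symm
    by_cases hc : x < V (r - δ / 2)
    · right; intro u hu; exact (hiff u hu).2 hc
    · left; intro u hu
      exact lt_of_le_of_ne (not_lt.1 fun h => hc ((hiff u hu).1 h))
        (hgood u (hl u hu).1 (hl u hu).2).2.1
  have hR2 : (∀ u ∈ Ioo r (r + δ), V u < x) ∨ (∀ u ∈ Ioo r (r + δ), x < V u) := by
    have hm : r + δ / 2 ∈ Ioo r (r + δ) := ⟨by linarith, by linarith⟩
    have hiff : ∀ u ∈ Ioo r (r + δ), (x < V u ↔ x < V (r + δ / 2)) := by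
      intro u hu
      rcases le_total u (r + δ / 2) with h | h
      · exact hR u hu _ hm h
      · exact (hR _ hm u hu h).symm
    by_cases hc : x < V (r + δ / 2)
    · right; intro u hu; exact (hiff u hu).2 hc
    · left; intro u hu
      exact lt_of_le_of_ne (not_lt.1 fun h => hc ((hiff u hu).1 h))
        (hgood u (hrr u hu).1 (hrr u hu).2).2.1
  obtain ⟨p, hp1, hp2⟩ := exists_rat_btwn (show r - δ < r by linarith)
  obtain ⟨q, hq1, hq2⟩ := exists_rat_btwn (show r < r + δ by linarith)
  rcases hL2 with hL2 | hL2 <;> rcases hR2 with hR2 | hR2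
  · exfalso
    apply g.sup p q
    symm
    apply IsGreatest.csSup_eq
    refine ⟨⟨r, ⟨hp2.le, hq1.le⟩, hx⟩, ?_⟩
    rintro _ ⟨u, hu, rfl⟩
    rcases lt_trichotomy u r with h | h | h
    · exact (hL2 u ⟨hp1.trans_le hu.1, h⟩).le
    · rw [h, hx]
    · exact (hR2 u ⟨h, hu.2.trans_lt hq2⟩).le
  · left
    refine ⟨hr.1, hx, hcont.continuousWithinAt, δ, hδ, ?_⟩
    intro s _ hs
    rw [abs_lt] at hs
    rw [hx]
    exact ⟨fun h => hL2 s ⟨by linarith, h⟩, fun h => hR2 s ⟨h, by linarith⟩⟩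
  · right
    refine ⟨hr.1, by simp [hx], hcont.continuousWithinAt.neg, δ, hδ, ?_⟩
    intro s _ hs
    rw [abs_lt] at hs
    simp only [neg_lt_neg_iff]
    rw [hx]
    exact ⟨fun h => hL2 s ⟨by linarith, h⟩, fun h => hR2 s ⟨h, by linarith⟩⟩
  · exfalso
    apply g.inf p q
    symm
    apply IsLeast.csInf_eq
    refine ⟨⟨r, ⟨hp2.le, hq1.le⟩, hx⟩, ?_⟩
    rintro _ ⟨u, hu, rfl⟩
    rcases lt_trichotomy u r with h | h | h
    · exact (hL2 u ⟨hp1.trans_le hu.1, h⟩).le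
    · rw [h, hx]
    · exact (hR2 u ⟨h, hu.2.trans_lt hq2⟩).le

open Topology in
lemma IncreasesThrough.left {V : ℝ → ℝ} {x r : ℝ} (h : IncreasesThrough V x r) :
    ∀ᶠ u in 𝓝[<] r, V u < x := by
  obtain ⟨h0, hx, -, ε, hε, H⟩ := h
  filter_upwards [Ioo_mem_nhdsLT (show max 0 (r - ε) < r from max_lt h0 (by linarith))] with u hu
  have h1 := (le_max_left _ _).trans_lt hu.1
  have h2 := (le_max_right _ _).trans_lt hu.1
  rw [← hx]
  exact (H u h1.le (by rw [abs_lt]; constructor <;> linarith [hu.2])).1 hu.2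

open Topology in
lemma IncreasesThrough.right {V : ℝ → ℝ} {x r : ℝ} (h : IncreasesThrough V x r) :
    ∀ᶠ u in 𝓝[>] r, x < V u := by
  obtain ⟨h0, hx, -, ε, hε, H⟩ := h
  filter_upwards [Ioo_mem_nhdsGT (show r < r + ε by linarith)] with u hu
  rw [← hx]
  exact (H u (h0.trans hu.1).le (by rw [abs_lt]; constructor <;> linarith [hu.1, hu.2])).2 hu.1

open Topology in
lemma DecreasesThrough.left {V : ℝ → ℝ} {x r : ℝ} (h : DecreasesThrough V x r) :
    ∀ᶠ u in 𝓝[<] r, x < V u := by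
  filter_upwards [IncreasesThrough.left h] with u hu using neg_lt_neg_iff.1 hu

open Topology in
lemma DecreasesThrough.right {V : ℝ → ℝ} {x r : ℝ} (h : DecreasesThrough V x r) :
    ∀ᶠ u in 𝓝[>] r, V u < x := by
  filter_upwards [IncreasesThrough.right h] with u hu using neg_lt_neg_iff.1 hu

lemma DecreasesThrough.eq {V : ℝ → ℝ} {x r : ℝ} (h : DecreasesThrough V x r) : V r = x :=
  neg_inj.1 h.2.1

lemma inc_not_dec {V : ℝ → ℝ} {x r : ℝ} (h : IncreasesThrough V x r) :
    ¬ DecreasesThrough V x r := by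
  intro h'
  obtain ⟨u, h1, h2⟩ := (h.left.and h'.left).exists
  exact lt_asymm h1 h2

def stp (x y : ℝ) : ℝ := if x < y then 1 else 0

def locB (V : ℝ → ℝ) (t : ℝ) (B : Set ℝ) (x : ℝ) : ℝ :=
  ((incSet V x t ∩ B).ncard : ℝ) - ((decSet V x t ∩ B).ncard : ℝ)

lemma stp_pos {x y : ℝ} (h : x < y) : stp x y = 1 := if_pos h
lemma stp_neg {x y : ℝ} (h : y ≤ x) : stp x y = 0 := if_neg (not_lt.2 h)

lemma stp_straddle {x p q : ℝ} (h : stp x p - stp x q ≠ 0) : p ≠ q ∧ x ∈ uIcc q p := by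
  refine ⟨fun h' => h (by rw [h', sub_self]), ?_⟩
  rw [mem_uIcc]
  rcases lt_or_ge x p with h1 | h1 <;> rcases lt_or_ge x q with h2 | h2
  · rw [stp_pos h1, stp_pos h2] at h; simp at h
  · exact Or.inl ⟨h2, h1.le⟩
  · exact Or.inr ⟨h1, h2.le⟩
  · rw [stp_neg h1, stp_neg h2] at h; simp at h

open Topology Classical in
lemma loc_formula {V Vm : ℝ → ℝ} {t x : ℝ} (g : GoodLevel V Vm t x)
    (hrc : ∀ s ∈ Set.Ici (0 : ℝ), ContinuousWithinAt V (Set.Ici s) s)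
    (hll : ∀ s ∈ Set.Ioi (0 : ℝ), Tendsto V (𝓝[<] s) (𝓝 (Vm s)))
    {a b : ℝ} (ha : 0 ≤ a) (hab : a ≤ b) (hb : b ≤ t) (hxa : x ≠ V a) (hxb : x ≠ V b) :
    locB V t (Ioc a b) x = stp x (V b) - stp x (V a)
      - ∑' s : ℝ, (Ioc a b).indicator (fun s => stp x (V s) - stp x (Vm s)) s := by
  have hsub : ∀ s ∈ Ioc a b, s ∈ Ioc 0 t := fun s hs => ⟨ha.trans_lt hs.1, hs.2.trans hb⟩
  have hfin : (({s | s ∈ Icc 0 t ∧ V s = x} ∪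
    {s | s ∈ Ioc 0 t ∧ V s ≠ Vm s ∧ x ∈ uIcc (Vm s) (V s)}) ∩ Ioc a b).Finite :=
    (g.lev.union g.str).subset inter_subset_left
  set E : Finset ℝ := hfin.toFinset with hE
  have hmem : ∀ s, s ∈ E ↔ s ∈ (({s | s ∈ Icc 0 t ∧ V s = x} ∪
    {s | s ∈ Ioc 0 t ∧ V s ≠ Vm s ∧ x ∈ uIcc (Vm s) (V s)}) ∩ Ioc a b) := fun s =>
      hfin.mem_toFinset
  have hincE : ∀ s ∈ Ioc a b, V s = x → s ∈ E := fun s hs h =>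
    (hmem s).2 ⟨Or.inl ⟨⟨(hsub s hs).1.le, (hsub s hs).2⟩, h⟩, hs⟩
  have hstrE : ∀ s ∈ Ioc a b, stp x (V s) - stp x (Vm s) ≠ 0 → s ∈ E := fun s hs h =>
    (hmem s).2 ⟨Or.inr ⟨hsub s hs, stp_straddle h⟩, hs⟩
  have key := jump_sum (fun r => if x < V r ∨ IncreasesThrough V x r then 1 else 0)
    (fun r => (if IncreasesThrough V x r then 1 else 0) - (if DecreasesThrough V x r then 1 else 0)
      + (stp x (V r) - stp x (Vm r))) E hab ?_ ?_ ?_ ?_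
  · have hinc : (incSet V x t ∩ Ioc a b).ncard = (E.filter (IncreasesThrough V x)).card := by
      rw [← Set.ncard_coe_finset]
      congr 1
      ext s
      simp only [incSet, mem_inter_iff, mem_ofPred_eq, Finset.coe_filter]
      constructor
      · rintro ⟨⟨h1, h2⟩, h3⟩
        exact ⟨hincE s h3 h2.2.1, h2⟩
      · rintro ⟨h1, h2⟩
        have := ((hmem s).1 h1).2
        exact ⟨⟨hsub s this, h2⟩, this⟩
    have hdec : (decSet V x t ∩ Ioc a b).ncard = (E.filter (DecreasesThrough V x)).card := by
      rw [← Set.ncard_coe_finset]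
      congr 1
      ext s
      simp only [decSet, mem_inter_iff, mem_ofPred_eq, Finset.coe_filter]
      constructor
      · rintro ⟨⟨h1, h2⟩, h3⟩
        exact ⟨hincE s h3 h2.eq, h2⟩
      · rintro ⟨h1, h2⟩
        have := ((hmem s).1 h1).2
        exact ⟨⟨hsub s this, h2⟩, this⟩
    have htsum : ∑' s : ℝ, (Ioc a b).indicator (fun s => stp x (V s) - stp x (Vm s)) s
        = ∑ s ∈ E, (stp x (V s) - stp x (Vm s)) := by
      rw [tsum_eq_sum (s := E)]
      · apply Finset.sum_congr rfl
        intro s hs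
        rw [indicator_of_mem ((hmem s).1 hs).2]
      · intro s hs
        by_contra h
        have h1 : s ∈ Ioc a b := mem_of_indicator_ne_zero h
        rw [indicator_of_mem h1] at h
        exact hs (hstrE s h1 h)
    have hha : (if x < V a ∨ IncreasesThrough V x a then (1 : ℝ) else 0) = stp x (V a) := by
      have : ¬ IncreasesThrough V x a := fun h => hxa h.2.1.symm
      simp [this, stp]
    have hhb : (if x < V b ∨ IncreasesThrough V x b then (1 : ℝ) else 0) = stp x (V b) := by
      have : ¬ IncreasesThrough V x b := fun h => hxb h.2.1.symm
      simp [this, stp]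
    simp only [hha, hhb, Finset.sum_add_distrib, Finset.sum_sub_distrib, Finset.sum_boole] at key
    simp only [locB, hinc, hdec, htsum, Finset.sum_sub_distrib]
    linarith
  · intro s hs h
    by_cases h1 : V s = x
    · exact hincE s hs h1
    · apply hstrE s hs
      intro h2
      apply h
      have h3 : ¬ IncreasesThrough V x s := fun h => h1 h.2.1
      have h4 : ¬ DecreasesThrough V x s := fun h => h1 h.eq
      simp [h2, h3, h4]
  · intro s hs
    exact ((hmem s).1 hs).2
  · intro r hr
    by_cases h1 : V r = x
    · have hrb : r ≠ b := fun h => hxb (h ▸ h1.symm)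
      have hr2 : r ∈ Ioo 0 t := ⟨(hsub r hr).1, (lt_of_le_of_ne hr.2 hrb).trans_le hb⟩
      have hm : Vm r = x := by
        by_contra h
        have := (g.ne r (hsub r hr) (by rw [h1]; exact fun h' => h h'.symm)).1
        exact this h1.symm
      rcases g.cross hrc hll hr2 h1 with h | h
      · have hd := inc_not_dec h
        filter_upwards [h.left] with u hu
        have h5 : ¬ IncreasesThrough V x u := fun h => hu.ne h.2.1
        simp [h, hd, h1, hm, h5, hu.le]
      · have hd : ¬ IncreasesThrough V x r := fun h' => inc_not_dec h' h
        filter_upwards [h.left] with u hu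
        simp [h, hd, h1, hm, hu]
    · have h2 := g.vm_ne (hsub r hr) h1
      have h3 : ¬ IncreasesThrough V x r := fun h => h1 h.2.1
      have h4 : ¬ DecreasesThrough V x r := fun h => h1 h.eq
      rcases lt_or_gt_of_ne h2 with h | h
      · filter_upwards [(hll r (hsub r hr).1).eventually_lt_const h] with u hu
        have h5 : ¬ IncreasesThrough V x u := fun h => hu.ne h.2.1
        simp [h3, h4, h5, not_lt.2 hu.le, stp, not_lt.2 h.le]
      · filter_upwards [(hll r (hsub r hr).1).eventually_const_lt h] with u hu
        simp [h3, h4, hu, stp, h]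
  · intro r hr
    have hr0 : 0 ≤ r := ha.trans hr.1
    have hc : Tendsto V (𝓝[>] r) (𝓝 (V r)) :=
      (hrc r hr0).tendsto.mono_left (nhdsWithin_mono _ Ioi_subset_Ici_self)
    rcases lt_trichotomy (V r) x with h | h | h
    · have h3 : ¬ IncreasesThrough V x r := fun h' => h.ne h'.2.1
      filter_upwards [hc.eventually_lt_const h] with u hu
      have h5 : ¬ IncreasesThrough V x u := fun h => hu.ne h.2.1
      simp [h3, h5, not_lt.2 hu.le, not_lt.2 h.le]
    · have hra : a ≠ r := fun h' => hxa (h' ▸ h.symm)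
      have hr2 : r ∈ Ioo 0 t := ⟨ha.trans_lt (lt_of_le_of_ne hr.1 hra), hr.2.trans_le hb⟩
      rcases g.cross hrc hll hr2 h with h' | h'
      · filter_upwards [h'.right] with u hu
        simp [hu, h']
      · have hd : ¬ IncreasesThrough V x r := fun h'' => inc_not_dec h'' h'
        filter_upwards [h'.right] with u hu
        have h5 : ¬ IncreasesThrough V x u := fun h => hu.ne h.2.1
        simp [hd, h5, hu.le, h]
    · filter_upwards [hc.eventually_const_lt h] with u hu
      simp [hu, h]

lemma indicatrix (V : ℝ → ℝ) (hbv : ∀ T : ℝ, BoundedVariationOn V (Icc 0 T)) (t : ℝ) :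
    ∃ g : ℝ → ℝ≥0∞, Measurable g ∧ ∫⁻ x, g x ≠ ∞ ∧
      ∀ x, ∀ F : Finset ℝ, (∀ s ∈ F, s ∈ Icc 0 t ∧ V s = x) → (F.card : ℝ≥0∞) ≤ g x := by
  obtain ⟨N, hN⟩ := exists_nat_gt t
  set I : ℕ → ℕ → ℝ := fun n k => (k : ℝ) / (n + 1) with hI
  have hImono : ∀ n, Monotone (I n) := by
    intro n k l hkl
    simp only [hI]
    gcongr
  set U : ℕ → ℕ → Set ℝ := fun n k =>
    toMeasurable volume (V '' Icc (I n k) (I n (k + 1))) with hU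
  set M : ℕ → ℝ → ℝ≥0∞ := fun n x =>
    ∑ k ∈ Finset.range (N * (n + 1)), (U n k).indicator 1 x with hM
  have hUm : ∀ n k, MeasurableSet (U n k) := fun n k => measurableSet_toMeasurable _ _
  have hMm : ∀ n, Measurable (M n) := by
    intro n
    apply Finset.measurable_fun_sum
    intro k _
    exact measurable_one.indicator (hUm n k)
  have hMi : ∀ n, ∫⁻ x, M n x ≤ eVariationOn V (Icc 0 (N : ℝ)) := by
    intro n
    rw [lintegral_finsetSum _ (fun k _ => measurable_one.indicator (hUm n k))]
    have h1 : ∀ k, ∫⁻ x, (U n k).indicator 1 x ≤ eVariationOn V (Icc (I n k) (I n (k + 1))) := by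
      intro k
      rw [lintegral_indicator_one (hUm n k), hU, measure_toMeasurable]
      refine (Real.volume_le_diam _).trans ?_
      apply Metric.ediam_le
      rintro _ ⟨u, hu, rfl⟩ _ ⟨v, hv, rfl⟩
      exact eVariationOn.edist_le V hu hv
    refine (Finset.sum_le_sum fun k _ => h1 k).trans ?_
    rw [eVariationOn.sum' V (hImono n)]
    apply le_of_eq
    have hn : (n : ℝ) + 1 ≠ 0 := by positivity
    congr 2
    · simp [hI]
    · simp [hI, hn]
  refine ⟨fun x => liminf (fun n => M n x) atTop, Measurable.liminf hMm, ?_, ?_⟩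
  · apply ne_top_of_le_ne_top (hbv N)
    refine (lintegral_liminf_le hMm).trans ?_
    refine Filter.liminf_le_of_le (by isBoundedDefault) ?_
    intro b hb
    obtain ⟨n, hn⟩ := hb.exists
    exact hn.trans (hMi n)
  · intro x F hF
    refine Filter.le_liminf_of_le (by isBoundedDefault) ?_
    have hsep : ∀ᶠ n : ℕ in atTop, ∀ s ∈ F, ∀ s' ∈ F, s < s' → 1 < (s' - s) * (n + 1) := by
      rw [Filter.eventually_all_finset]
      intro s _
      rw [Filter.eventually_all_finset]
      intro s' _
      by_cases h : s < s'
      · obtain ⟨m, hm⟩ := exists_nat_gt (1 / (s' - s))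
        filter_upwards [eventually_ge_atTop m] with n hn _
        have h1 : 0 < s' - s := sub_pos.2 h
        rw [div_lt_iff₀ h1] at hm
        have : (m : ℝ) ≤ n := by exact_mod_cast hn
        nlinarith
      · exact Eventually.of_forall fun n h' => absurd h' h
    filter_upwards [hsep] with n hn
    have hn0 : (0 : ℝ) < (n : ℝ) + 1 := by positivity
    set κ : ℝ → ℕ := fun s => ⌊s * (n + 1)⌋₊ with hκ
    have hlt : ∀ s ∈ F, ∀ s' ∈ F, s < s' → κ s < κ s' := by
      intro s hs s' hs' h
      have h1 := hn s hs s' hs' h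
      have h0 : 0 ≤ s * (n + 1) := mul_nonneg (hF s hs).1.1 hn0.le
      have h0' : 0 ≤ s' * (n + 1) := mul_nonneg (hF s' hs').1.1 hn0.le
      simp only [hκ]
      apply Nat.lt_of_succ_le
      rw [Nat.le_floor_iff h0']
      push_cast
      linarith [Nat.floor_le h0]
    have hinj : Set.InjOn κ F := by
      intro s hs s' hs' h
      rcases lt_trichotomy s s' with h' | h' | h'
      · exact absurd h (hlt s hs s' hs' h').ne
      · exact h'
      · exact absurd h (hlt s' hs' s hs h').ne'
    have hcard : (F.card : ℝ≥0∞) = ∑ k ∈ F.image κ, 1 := by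
      rw [Finset.sum_const, Finset.card_image_of_injOn hinj]; simp
    rw [hcard]
    have hle : ∑ k ∈ F.image κ, (1 : ℝ≥0∞) ≤ ∑ k ∈ F.image κ, (U n k).indicator 1 x := by
      apply Finset.sum_le_sum
      intro k hk
      obtain ⟨s, hs, rfl⟩ := Finset.mem_image.1 hk
      have h0 : 0 ≤ s * (n + 1) := mul_nonneg (hF s hs).1.1 hn0.le
      have : x ∈ U n (κ s) := by
        apply subset_toMeasurable
        refine ⟨s, ⟨?_, ?_⟩, (hF s hs).2⟩
        · simp only [hI, hκ]
          rw [div_le_iff₀ hn0]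
          exact Nat.floor_le h0
        · simp only [hI, hκ]
          rw [le_div_iff₀ hn0]
          push_cast
          exact (Nat.lt_floor_add_one _).le
      rw [indicator_of_mem this]; rfl
    refine hle.trans ?_
    apply Finset.sum_le_sum_of_subset
    intro k hk
    obtain ⟨s, hs, rfl⟩ := Finset.mem_image.1 hk
    have h0 : 0 ≤ s * (n + 1) := mul_nonneg (hF s hs).1.1 hn0.le
    rw [Finset.mem_range]
    simp only [hκ]
    rw [Nat.floor_lt h0]
    push_cast
    have := (hF s hs).1.2.trans_lt hN
    gcongr

lemma good_ae (V Vm : ℝ → ℝ) (hbv : ∀ T : ℝ, BoundedVariationOn V (Icc 0 T)) (t : ℝ)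
    (habs : Summable (fun u : Set.Ioc (0 : ℝ) t => |V u.1 - Vm u.1|)) :
    ∀ᵐ x : ℝ ∂volume, GoodLevel V Vm t x := by
  have hJc : {s | s ∈ Ioc 0 t ∧ V s ≠ Vm s}.Countable := by
    have := habs.countable_support.image Subtype.val
    refine this.mono ?_
    rintro s ⟨h1, h2⟩
    refine ⟨⟨s, h1⟩, ?_, rfl⟩
    simp [sub_eq_zero, h2]
  have h1 : ∀ᵐ x : ℝ ∂volume, {s | s ∈ Icc 0 t ∧ V s = x}.Finite := by
    obtain ⟨g, hg, hgi, hgF⟩ := indicatrix V hbv t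
    filter_upwards [ae_lt_top hg hgi] with x hx
    by_contra hinf
    apply hx.ne
    apply ENNReal.eq_top_of_forall_nnreal_le
    intro r
    obtain ⟨n, hn⟩ := exists_nat_ge r
    obtain ⟨F, hF, hc⟩ := Set.Infinite.exists_subset_card_eq hinf n
    refine le_trans ?_ (hgF x F fun s hs => hF hs)
    rw [hc]
    exact_mod_cast hn
  have h2 : ∀ᵐ x : ℝ ∂volume,
      {u : Set.Ioc (0 : ℝ) t | V u.1 ≠ Vm u.1 ∧ x ∈ uIcc (Vm u.1) (V u.1)}.Finite := by
    have := hJc.to_subtype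
    have h := ae_finite_setOfPred_mem (μ := (volume : Measure ℝ))
      (s := fun u : {s | s ∈ Ioc 0 t ∧ V s ≠ Vm s} => uIcc (Vm u.1) (V u.1)) ?_
    · filter_upwards [h] with x hx
      have := hx.image (fun u => (⟨u.1, u.2.1⟩ : Set.Ioc (0 : ℝ) t))
      refine this.subset ?_
      rintro u ⟨h1, h2⟩
      exact ⟨⟨u.1, u.2, h1⟩, h2, rfl⟩
    · simp only [Real.volume_interval]
      have h3 := habs.comp_injective (i := fun u : {s | s ∈ Ioc 0 t ∧ V s ≠ Vm s} =>
        (⟨u.1, u.2.1⟩ : Set.Ioc (0 : ℝ) t)) (by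
          intro u v h
          simpa [Subtype.ext_iff] using h)
      exact h3.tsum_ofReal_ne_top
  have h3 : ∀ᵐ x : ℝ ∂volume, x ∉ V '' {s | s ∈ Ioc 0 t ∧ V s ≠ Vm s} :=
    (hJc.image V).ae_notMem _
  have h4 : ∀ᵐ x : ℝ ∂volume, x ∉ Vm '' {s | s ∈ Ioc 0 t ∧ V s ≠ Vm s} :=
    (hJc.image Vm).ae_notMem _
  have h5 : ∀ᵐ x : ℝ ∂volume, x ∉ range (fun p : ℚ × ℚ => sSup (V '' Icc (p.1 : ℝ) p.2)) :=
    (countable_range _).ae_notMem _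
  have h6 : ∀ᵐ x : ℝ ∂volume, x ∉ range (fun p : ℚ × ℚ => sInf (V '' Icc (p.1 : ℝ) p.2)) :=
    (countable_range _).ae_notMem _
  filter_upwards [h1, h2, h3, h4, h5, h6] with x h1 h2 h3 h4 h5 h6
  refine ⟨h1, ?_, ?_, ?_, ?_⟩
  · refine (h2.image Subtype.val).subset ?_
    rintro s ⟨hs1, hs2⟩
    exact ⟨⟨s, hs1⟩, hs2, rfl⟩
  · intro s hs hj
    exact ⟨fun h => h3 ⟨s, ⟨hs, hj⟩, h.symm⟩, fun h => h4 ⟨s, ⟨hs, hj⟩, h.symm⟩⟩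
  · intro p q h
    exact h5 ⟨(p, q), h.symm⟩
  · intro p q h
    exact h6 ⟨(p, q), h.symm⟩

lemma stp_int (p q : ℝ) : Integrable (fun x => stp x p - stp x q) ∧
    ∫ x, (stp x p - stp x q) = p - q ∧ ∫ x, ‖stp x p - stp x q‖ = |p - q| := by
  have key : ∀ p q : ℝ, q ≤ p → (fun x => stp x p - stp x q) = (Ico q p).indicator 1 := by
    intro p q h
    ext x
    by_cases h1 : x ∈ Ico q p
    · rw [indicator_of_mem h1, stp_pos h1.2, stp_neg h1.1]; simp
    · rw [indicator_of_notMem h1]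
      by_cases h2 : x < q
      · rw [stp_pos h2, stp_pos (h2.trans_le h), sub_self]
      · have h3 : ¬ x < p := fun h3 => h1 ⟨not_lt.1 h2, h3⟩
        rw [stp_neg (not_lt.1 h2), stp_neg (not_lt.1 h3), sub_self]
  have main : ∀ p q : ℝ, q ≤ p → Integrable (fun x => stp x p - stp x q) ∧
    ∫ x, (stp x p - stp x q) = p - q ∧ ∫ x, ‖stp x p - stp x q‖ = |p - q| := by
    intro p q h
    have hi : ∫ x, (stp x p - stp x q) = p - q := by
      rw [key p q h, integral_indicator_one measurableSet_Ico]
      simp [h]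
    refine ⟨?_, hi, ?_⟩
    · rw [key p q h]
      exact (integrable_indicator_iff measurableSet_Ico).2 (integrableOn_const (by simp))
    · rw [abs_of_nonneg (sub_nonneg.2 h), ← hi]
      congr 1
      ext x
      rw [Real.norm_eq_abs, abs_of_nonneg]
      have := congrFun (key p q h) x
      rw [this]
      exact indicator_nonneg (fun _ _ => zero_le_one) _
  rcases le_total q p with h | h
  · exact main p q h
  · obtain ⟨h1, h2, h3⟩ := main q p h
    refine ⟨?_, ?_, ?_⟩
    · have h4 : (fun x => stp x p - stp x q) = -(fun x => stp x q - stp x p) := by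
        ext x
        simp
      rw [h4]
      exact h1.neg
    · rw [← neg_sub q p, ← h2, ← integral_neg]
      congr 1
      ext x
      simp
    · rw [abs_sub_comm, ← h3]
      congr 1
      ext x
      exact norm_sub_rev _ _

lemma locB_abs_le {V : ℝ → ℝ} {t : ℝ} {g : ℝ → ℝ≥0∞}
    (hg : ∀ x, ∀ F : Finset ℝ, (∀ s ∈ F, s ∈ Icc 0 t ∧ V s = x) → (F.card : ℝ≥0∞) ≤ g x)
    {x : ℝ} (hx : g x < ∞) (hlev : {s | s ∈ Icc 0 t ∧ V s = x}.Finite) (B : Set ℝ) :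
    |locB V t B x| ≤ (g x).toReal := by
  have h1 : ∀ S : Set ℝ, S ⊆ {s | s ∈ Icc 0 t ∧ V s = x} → (S.ncard : ℝ) ≤ (g x).toReal := by
    intro S hS
    have hSf := hlev.subset hS
    have := hg x hSf.toFinset (fun s hs => hS (hSf.mem_toFinset.1 hs))
    rw [← Set.ncard_eq_toFinset_card S hSf] at this
    have h2 := ENNReal.toReal_mono hx.ne this
    simpa using h2
  have hi := h1 (incSet V x t ∩ B) (fun s hs => ⟨⟨hs.1.1.1.le, hs.1.1.2⟩, hs.1.2.2.1⟩)
  have hd := h1 (decSet V x t ∩ B) (fun s hs => ⟨⟨hs.1.1.1.le, hs.1.1.2⟩,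
    DecreasesThrough.eq hs.1.2⟩)
  have p1 : (0 : ℝ) ≤ (incSet V x t ∩ B).ncard := Nat.cast_nonneg _
  have p2 : (0 : ℝ) ≤ (decSet V x t ∩ B).ncard := Nat.cast_nonneg _
  rw [locB, abs_le]
  constructor <;> linarith

lemma hasSum_ncard {S : Set ℝ} (hS : S.Finite) {f : ℕ → Set ℝ} (hf : Pairwise (Function.onFun Disjoint f)) :
    HasSum (fun n => ((S ∩ f n).ncard : ℝ)) ((S ∩ ⋃ n, f n).ncard : ℝ) := by
  classical
  have h1 : ∀ B : Set ℝ, ((S ∩ B).ncard : ℝ) = ∑ s ∈ hS.toFinset, B.indicator 1 s := by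
    intro B
    have : S ∩ B = ↑(hS.toFinset.filter (· ∈ B)) := by
      ext s; simp
    rw [this, Set.ncard_coe_finset]
    simp [Set.indicator_apply]
  simp only [h1]
  apply hasSum_sum
  intro s _
  by_cases hs : s ∈ ⋃ n, f n
  · obtain ⟨n, hn⟩ := mem_iUnion.1 hs
    rw [indicator_of_mem hs]
    convert hasSum_single (f := fun n => (f n).indicator (1 : ℝ → ℝ) s) n ?_ using 1
    · rw [indicator_of_mem hn]
    · intro m hm
      exact indicator_of_notMem (fun h => (hf hm).le_bot ⟨h, hn⟩) _
  · rw [indicator_of_notMem hs]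
    have : ∀ n, (f n).indicator (1 : ℝ → ℝ) s = 0 := fun n =>
      indicator_of_notMem (fun h => hs (mem_iUnion.2 ⟨n, h⟩)) _
    simp only [this]
    exact hasSum_zero

lemma ncard_compl {S : Set ℝ} (hS : S.Finite) (B : Set ℝ) :
    ((S ∩ Bᶜ).ncard : ℝ) = (S ∩ univ).ncard - (S ∩ B).ncard := by
  have h := Set.ncard_inter_add_ncard_sdiff_eq_ncard S B hS
  rw [inter_univ, ← h, Set.sdiff_eq]
  push_cast
  ring

open Topology in
lemma loc_Ioc (V Vm Vc Vd : ℝ → ℝ)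
    (hrc : ∀ s ∈ Set.Ici (0 : ℝ), ContinuousWithinAt V (Set.Ici s) s)
    (hll : ∀ s ∈ Set.Ioi (0 : ℝ), Tendsto V (𝓝[<] s) (𝓝 (Vm s)))
    (hbv : ∀ T : ℝ, BoundedVariationOn V (Icc 0 T))
    (hdecomp : ∀ s ∈ Set.Ici (0 : ℝ), V s = Vc s + Vd s)
    (hVd_sum : ∀ s ∈ Set.Ici (0 : ℝ),
      HasSum (fun u : Set.Ioc (0 : ℝ) s => V u.1 - Vm u.1) (Vd s))
    (t : ℝ)
    (habs : Summable (fun u : Set.Ioc (0 : ℝ) t => |V u.1 - Vm u.1|))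
    {a b : ℝ} (ha : 0 ≤ a) (hab : a ≤ b) (hb : b ≤ t) :
    AEStronglyMeasurable (locB V t (Ioc a b)) volume ∧
      ∫ x, locB V t (Ioc a b) x = Vc b - Vc a := by
  have hgood := good_ae V Vm hbv t habs
  set J : Set ℝ := {s | s ∈ Ioc a b ∧ V s ≠ Vm s} with hJ
  have hJc : J.Countable := by
    have := habs.countable_support.image Subtype.val
    refine this.mono ?_
    rintro s ⟨h1, h2⟩
    refine ⟨⟨s, ha.trans_lt h1.1, h1.2.trans hb⟩, ?_, rfl⟩
    simp [sub_eq_zero, h2]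
  have := hJc.to_subtype
  have hsumJ : Summable (fun u : J => |V u.1 - Vm u.1|) :=
    habs.comp_injective (i := fun u : J =>
        (⟨u.1, ha.trans_lt u.2.1.1, u.2.1.2.trans hb⟩ : Set.Ioc (0 : ℝ) t)) (by
          intro u v h
          simpa [Subtype.ext_iff] using h)
  set F : J → ℝ → ℝ := fun u x => stp x (V u.1) - stp x (Vm u.1) with hF
  have hHS := hasSum_integral_of_summable_integral_norm (μ := volume) (F := F)
    (fun u => (stp_int _ _).1) (by
      simp only [hF, fun u : J => (stp_int (V u.1) (Vm u.1)).2.2]; exact hsumJ)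
  simp only [hF, fun u : J => (stp_int (V u.1) (Vm u.1)).2.1] at hHS
  -- the sum of jumps
  have hind : ∀ c, 0 ≤ c →
      HasSum ((Ioc 0 c).indicator (fun u => V u - Vm u)) (Vd c) := fun c hc =>
    hasSum_subtype_iff_indicator.1 (hVd_sum c hc)
  have hjump : HasSum (fun u : J => V u.1 - Vm u.1) (Vd b - Vd a) := by
    have h1 := (hind b (ha.trans hab)).sub (hind a ha)
    have heq : J.indicator (fun u => V u - Vm u) = fun s =>
        (Ioc 0 b).indicator (fun u => V u - Vm u) s
          - (Ioc 0 a).indicator (fun u => V u - Vm u) s := by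
      ext s
      by_cases hsJ : s ∈ J
      · have h2 : s ∈ Ioc 0 b := ⟨ha.trans_lt hsJ.1.1, hsJ.1.2⟩
        have h3 : s ∉ Ioc 0 a := fun h => absurd h.2 (not_le.2 hsJ.1.1)
        rw [indicator_of_mem hsJ, indicator_of_mem h2, indicator_of_notMem h3, sub_zero]
      · rw [indicator_of_notMem hsJ]
        by_cases hj : V s = Vm s
        · simp [indicator_apply, hj]
        · have hs : s ∉ Ioc a b := fun h => hsJ ⟨h, hj⟩
          by_cases h2 : s ∈ Ioc 0 a
          · have h3 : s ∈ Ioc 0 b := ⟨h2.1, h2.2.trans hab⟩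
            rw [indicator_of_mem h2, indicator_of_mem h3, sub_self]
          · have h3 : s ∉ Ioc 0 b := by
              intro h3
              rcases le_or_gt s a with h | h
              · exact h2 ⟨h3.1, h⟩
              · exact hs ⟨h, h3.2⟩
            rw [indicator_of_notMem h2, indicator_of_notMem h3, sub_self]
    refine (hasSum_subtype_iff_indicator (f := fun u => V u - Vm u)).2 ?_
    rw [heq]
    exact h1
  have hval := hHS.unique hjump
  -- the formula
  have hform : ∀ᵐ x : ℝ ∂volume, locB V t (Ioc a b) x =
      (stp x (V b) - stp x (V a)) - ∑' u : J, F u x := by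
    have n1 : ∀ᵐ x : ℝ ∂volume, x ≠ V a := by
      simpa using (countable_singleton (V a)).ae_notMem volume
    have n2 : ∀ᵐ x : ℝ ∂volume, x ≠ V b := by
      simpa using (countable_singleton (V b)).ae_notMem volume
    filter_upwards [hgood, n1, n2] with x g h1 h2
    rw [loc_formula g hrc hll ha hab hb h1 h2]
    congr 1
    have : Function.support ((Ioc a b).indicator (fun s => stp x (V s) - stp x (Vm s))) ⊆ J := by
      intro s hs
      have h3 : s ∈ Ioc a b := mem_of_indicator_ne_zero hs
      rw [Function.mem_support, indicator_of_mem h3] at hs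
      exact ⟨h3, (stp_straddle hs).1⟩
    rw [← tsum_subtype_eq_of_support_subset this]
    apply tsum_congr
    intro u
    rw [indicator_of_mem u.2.1]
  have hsm : AEStronglyMeasurable (fun x => ∑' u : J, F u x) volume := by
    refine aestronglyMeasurable_of_tendsto_ae (u := (atTop : Filter (Finset J)))
      (f := fun (s : Finset J) x => ∑ u ∈ s, F u x) ?_ ?_
    · intro s
      exact Finset.aestronglyMeasurable_fun_sum _ fun u _ => (stp_int _ _).1.1
    · filter_upwards [hgood] with x g
      have : (Function.support fun u : J => F u x).Finite := by
        refine Set.Finite.of_finite_image (f := Subtype.val) (g.str.subset ?_)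
          Subtype.val_injective.injOn
        rintro _ ⟨u, hu, rfl⟩
        exact ⟨⟨ha.trans_lt u.2.1.1, u.2.1.2.trans hb⟩, stp_straddle hu⟩
      have hs : Summable (fun u : J => F u x) := summable_of_hasFiniteSupport this
      simpa [HasSum] using hs.hasSum
  have hti : Integrable (fun x => ∑' u : J, F u x) volume := by
    refine ⟨hsm, ?_⟩
    have hle : ∫⁻ x, ‖∑' u : J, F u x‖ₑ ≤ ∫⁻ x, ∑' u : J, ‖F u x‖ₑ := by
      apply lintegral_mono
      intro x
      exact enorm_tsum_le_tsum_enorm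
    refine lt_of_le_of_lt hle ?_
    rw [lintegral_tsum fun u => (stp_int _ _).1.1.enorm]
    have : ∀ u : J, ∫⁻ x, ‖F u x‖ₑ = ENNReal.ofReal |V u.1 - Vm u.1| := by
      intro u
      rw [← (stp_int (V u.1) (Vm u.1)).2.2,
        ofReal_integral_norm_eq_lintegral_enorm (stp_int _ _).1]
    refine lt_of_eq_of_lt (tsum_congr this) ?_
    exact hsumJ.tsum_ofReal_ne_top.lt_top
  have hstp := stp_int (V b) (V a)
  refine ⟨(hstp.1.1.sub hsm).congr (hform.mono fun x hx => hx.symm), ?_⟩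
  rw [integral_congr_ae hform, integral_sub hstp.1 hti, hstp.2.1, hval,
    hdecomp b (ha.trans hab), hdecomp a ha]
  ring

/-- For a càdlàg function `V` on `[0,∞)` of finite variation on compacts,
with canonical decomposition `V = Vc + Vd`, and `μc` the signed Stieltjes measure of the
continuous part `Vc` (on `[0,t]`), the signed occupation measure
`θ_t(A) = ∫_0^t 1_A(V s) μc(ds)` is absolutely continuous with respect to Lebesgue measure,
with density `x ↦ ℓ^x(t)`; in particular `ℓ^x(t)` is well defined for a.e. `x` and
`θ_t(A) = ∫_A ℓ^x(t) dx` for every Borel set `A`. -/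
theorem signed_occupation_density
    (V Vm Vc Vd : ℝ → ℝ)
    (hV_rc : ∀ s ∈ Set.Ici (0 : ℝ), ContinuousWithinAt V (Set.Ici s) s)
    (hV_ll : ∀ s ∈ Set.Ioi (0 : ℝ),
      Filter.Tendsto V (nhdsWithin s (Set.Iio s)) (nhds (Vm s)))
    (hV_bv : ∀ T : ℝ, BoundedVariationOn V (Set.Icc 0 T))
    (hdecomp : ∀ s ∈ Set.Ici (0 : ℝ), V s = Vc s + Vd s)
    (hVc_cont : ContinuousOn Vc (Set.Ici 0))
    (hVc_bv : ∀ T : ℝ, BoundedVariationOn Vc (Set.Icc 0 T))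
    (hVd_sum : ∀ s ∈ Set.Ici (0 : ℝ),
      HasSum (fun u : Set.Ioc (0 : ℝ) s => V u.1 - Vm u.1) (Vd s))
    (hVd_abs : ∀ s ∈ Set.Ici (0 : ℝ),
      Summable (fun u : Set.Ioc (0 : ℝ) s => |V u.1 - Vm u.1|))
    (t : ℝ) (ht : 0 < t)
    (μc : MeasureTheory.SignedMeasure ℝ)
    (hμc : ∀ a b : ℝ, 0 ≤ a → a ≤ b → b ≤ t → μc (Set.Ioc a b) = Vc b - Vc a) :
    (∀ᵐ x : ℝ ∂volume, (incSet V x t).Finite ∧ (decSet V x t).Finite) ∧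
      MeasureTheory.Integrable (fun x : ℝ => (signedLocalTime V x t : ℝ)) volume ∧
      ∀ A : Set ℝ, MeasurableSet A →
        signedIntegral μc (Set.Ioc 0 t)
            (fun s => A.indicator (fun _ => (1 : ℝ)) (V s)) =
          ∫ x in A, (signedLocalTime V x t : ℝ) ∂volume := by
  have hgood := good_ae V Vm hV_bv t (hVd_abs t ht.le)
  obtain ⟨g, hgm, hgi, hgF⟩ := indicatrix V hV_bv t
  have hfin : ∀ᵐ x : ℝ ∂volume, (incSet V x t).Finite ∧ (decSet V x t).Finite := by
    filter_upwards [hgood] with x hx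
    exact ⟨hx.lev.subset fun s hs => ⟨⟨hs.1.1.le, hs.1.2⟩, hs.2.2.1⟩,
      hx.lev.subset fun s hs => ⟨⟨hs.1.1.le, hs.1.2⟩, DecreasesThrough.eq hs.2⟩⟩
  have hbound : ∀ᵐ x : ℝ ∂volume, ∀ B, |locB V t B x| ≤ (g x).toReal := by
    filter_upwards [hgood, ae_lt_top hgm hgi] with x h1 h2 B
    exact locB_abs_le hgF h2 h1.lev B
  have hgint : Integrable (fun x => (g x).toReal) volume :=
    integrable_toReal_of_lintegral_ne_top hgm.aemeasurable hgi
  have hint : ∀ B, AEStronglyMeasurable (locB V t B) volume → Integrable (locB V t B) volume := by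
    intro B hB
    refine hgint.mono' hB ?_
    filter_upwards [hbound] with x hx
    exact hx B
  have hIoc : ∀ a b : ℝ, 0 ≤ a → a ≤ b → b ≤ t →
      AEStronglyMeasurable (locB V t (Ioc a b)) volume ∧
        ∫ x, locB V t (Ioc a b) x = μc (Ioc a b) := by
    intro a b ha hab hb
    rw [hμc a b ha hab hb]
    exact loc_Ioc V Vm Vc Vd hV_rc hV_ll hV_bv hdecomp hVd_sum t (hVd_abs t ht.le) ha hab hb
  have hcap : ∀ B, locB V t (B ∩ Ioc 0 t) = locB V t B := by
    intro B
    ext x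
    have h1 : incSet V x t ∩ (B ∩ Ioc 0 t) = incSet V x t ∩ B := by
      ext s
      exact ⟨fun h => ⟨h.1, h.2.1⟩, fun h => ⟨h.1, h.2, h.1.1⟩⟩
    have h2 : decSet V x t ∩ (B ∩ Ioc 0 t) = decSet V x t ∩ B := by
      ext s
      exact ⟨fun h => ⟨h.1, h.2.1⟩, fun h => ⟨h.1, h.2, h.1.1⟩⟩
    simp only [locB, h1, h2]
  have huniv : AEStronglyMeasurable (locB V t univ) volume ∧
        ∫ x, locB V t univ x = μc (Ioc 0 t) := by
    have := hIoc 0 t le_rfl ht.le le_rfl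
    have h2 := hcap univ
    rw [univ_inter] at h2
    rw [← h2]
    exact this
  have hall : ∀ B : Set ℝ, MeasurableSet B → AEStronglyMeasurable (locB V t B) volume ∧
      ∫ x, locB V t B x = μc (B ∩ Ioc 0 t) := by
    have hempty : AEStronglyMeasurable (locB V t ∅) volume ∧
      ∫ x, locB V t ∅ x = μc (∅ ∩ Ioc 0 t) := by
      have : locB V t ∅ = fun _ => 0 := by
        ext x
        simp [locB]
      rw [this]
      exact ⟨aestronglyMeasurable_const, by simp⟩
    refine MeasurableSpace.induction_on_inter
      (C := fun B _ => AEStronglyMeasurable (locB V t B) volume ∧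
        ∫ x, locB V t B x = μc (B ∩ Ioc 0 t))
      ((BorelSpace.measurable_eq (α := ℝ)).trans (borel_eq_generateFrom_Ioc ℝ))
      (isPiSystem_Ioc id id) hempty ?_ ?_ ?_
    · rintro _ ⟨l, u, hlu, rfl⟩
      rw [← hcap, Ioc_inter_Ioc]
      by_cases h : max l 0 ≤ min u t
      · exact hIoc _ _ (le_max_right _ _) h (min_le_right _ _)
      · have : Ioc (l ⊔ 0) (u ⊓ t) = ∅ := Ioc_eq_empty_of_le (not_le.1 h).le
        rw [this]
        simpa using hempty
    · intro B hB ⟨h1, h2⟩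
      have hae : ∀ᵐ x ∂volume, locB V t Bᶜ x = locB V t univ x - locB V t B x := by
        filter_upwards [hfin] with x hx
        simp only [locB, ncard_compl hx.1, ncard_compl hx.2]
        ring
      refine ⟨(huniv.1.sub h1).congr (hae.mono fun x hx => hx.symm), ?_⟩
      rw [integral_congr_ae hae, integral_sub (hint _ huniv.1) (hint _ h1), huniv.2, h2]
      have hd : Disjoint (B ∩ Ioc 0 t) (Bᶜ ∩ Ioc 0 t) :=
        disjoint_compl_right.mono inter_subset_left inter_subset_left
      have := VectorMeasure.of_union (v := μc) hd (hB.inter measurableSet_Ioc)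
        (hB.compl.inter measurableSet_Ioc)
      rw [← union_inter_distrib_right, union_compl_self, univ_inter] at this
      rw [this]
      ring
    · intro f hf hfm hC
      have hlim : ∀ᵐ x ∂volume, Tendsto (fun n => ∑ i ∈ Finset.range n, locB V t (f i) x) atTop
          (nhds (locB V t (⋃ i, f i) x)) := by
        filter_upwards [hfin] with x hx
        exact ((hasSum_ncard hx.1 hf).sub (hasSum_ncard hx.2 hf)).tendsto_sum_nat
      have hpm : ∀ n : ℕ, AEStronglyMeasurable (fun x => ∑ i ∈ Finset.range n, locB V t (f i) x)
          volume := fun n => Finset.aestronglyMeasurable_fun_sum _ fun i _ => (hC i).1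
      refine ⟨aestronglyMeasurable_of_tendsto_ae atTop hpm hlim, ?_⟩
      have hT := tendsto_integral_of_dominated_convergence (fun x => (g x).toReal) hpm hgint ?_ hlim
      · have hS : HasSum (fun i => μc (f i ∩ Ioc 0 t)) (μc ((⋃ i, f i) ∩ Ioc 0 t)) := by
          rw [iUnion_inter]
          exact μc.m_iUnion (fun i => (hfm i).inter measurableSet_Ioc)
            fun i j hij => (hf hij).mono inter_subset_left inter_subset_left
        have hS' := hS.tendsto_sum_nat
        refine tendsto_nhds_unique hT (hS'.congr fun n => ?_)
        rw [integral_finsetSum _ fun i _ => hint _ (hC i).1]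
        exact Finset.sum_congr rfl fun i _ => (hC i).2.symm
      · intro n
        filter_upwards [hbound, hfin] with x hx hx2
        have hsum : ∑ i ∈ Finset.range n, locB V t (f i) x
            = locB V t (⋃ i ∈ Finset.range n, f i) x := by
          have hpd : Pairwise (Function.onFun Disjoint
              (fun i => if i < n then f i else (∅ : Set ℝ))) := by
            intro i j hij
            simp only [Function.onFun]
            split_ifs
            · exact hf hij
            · simp
            · simp
            · simp
          have hu : (⋃ i, (if i < n then f i else (∅ : Set ℝ))) = ⋃ i ∈ Finset.range n, f i := by
            ext s
            simp only [mem_iUnion, Finset.mem_range, exists_prop]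
            refine exists_congr fun i => ?_
            split_ifs with h <;> simp [h]
          have hH := (hasSum_ncard hx2.1 hpd).sub (hasSum_ncard hx2.2 hpd)
          rw [hu] at hH
          refine HasSum.unique ?_ hH
          convert hasSum_sum_of_ne_finset_zero (s := Finset.range n) ?_ using 1
          · apply Finset.sum_congr rfl
            intro i hi
            simp [locB, Finset.mem_range.1 hi]
          · intro i hi
            simp only [Finset.mem_range] at hi
            simp [hi]
          · infer_instance
        rw [hsum]
        exact hx _
  have hloc : ∀ x, locB V t univ x = (signedLocalTime V x t : ℝ) := by
    intro x
    simp [locB, signedLocalTime]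
  have hI : Integrable (fun x : ℝ => (signedLocalTime V x t : ℝ)) volume := by
    have := hint _ huniv.1
    rwa [show locB V t univ = _ from funext hloc] at this
  refine ⟨hfin, hI, ?_⟩
  intro A hA
  -- measurability of `V` on `[0,t]`
  obtain ⟨W, hW, hWV⟩ : ∃ W : ℝ → ℝ, Measurable W ∧ ∀ s ∈ Ioc 0 t, W s = V s := by
    obtain ⟨p, q, hp, hq, hpq⟩ :=
      (hV_bv t).locallyBoundedVariationOn.exists_monotoneOn_sub_monotoneOn
    set c : ℝ → ℝ := fun s => max 0 (min s t) with hc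
    have hcm : Monotone c := fun s s' h => max_le_max le_rfl (min_le_min h le_rfl)
    have hcI : ∀ s, c s ∈ Icc 0 t := fun s => ⟨le_max_left _ _, max_le ht.le (min_le_right _ _)⟩
    have hp' : Monotone (fun s => p (c s)) := fun s s' h => hp (hcI s) (hcI s') (hcm h)
    have hq' : Monotone (fun s => q (c s)) := fun s s' h => hq (hcI s) (hcI s') (hcm h)
    refine ⟨fun s => p (c s) - q (c s), hp'.measurable.sub hq'.measurable, ?_⟩
    intro s hs
    have : c s = s := by simp [hc, hs.1.le, hs.2]
    simp only [this, hpq, Pi.sub_apply]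
  have hBm : MeasurableSet (W ⁻¹' A) := hW hA
  have hleft : ∀ μ : Measure ℝ, IsFiniteMeasure μ →
      ∫ s in Ioc 0 t, A.indicator (fun _ => (1 : ℝ)) (V s) ∂μ = μ.real (W ⁻¹' A ∩ Ioc 0 t) := by
    intro μ _
    have h1 : ∫ s in Ioc 0 t, A.indicator (fun _ => (1 : ℝ)) (V s) ∂μ
        = ∫ s in Ioc 0 t, (W ⁻¹' A).indicator 1 s ∂μ := by
      apply setIntegral_congr_fun measurableSet_Ioc
      intro s hs
      show A.indicator (fun _ => (1 : ℝ)) (V s) = (W ⁻¹' A).indicator 1 s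
      have hm : s ∈ W ⁻¹' A ↔ V s ∈ A := by rw [mem_preimage, hWV s hs]
      by_cases h : V s ∈ A
      · rw [indicator_of_mem h, indicator_of_mem (hm.2 h), Pi.one_apply]
      · rw [indicator_of_notMem h, indicator_of_notMem (fun h' => h (hm.1 h'))]
    rw [h1, integral_indicator_one hBm, measureReal_restrict_apply hBm]
  have hL : signedIntegral μc (Set.Ioc 0 t) (fun s => A.indicator (fun _ => (1 : ℝ)) (V s))
      = μc (W ⁻¹' A ∩ Ioc 0 t) := by
    rw [signedIntegral, hleft _ inferInstance, hleft _ inferInstance]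
    conv_rhs => rw [← μc.toSignedMeasure_toJordanDecomposition]
    rw [JordanDecomposition.toSignedMeasure,
      Measure.toSignedMeasure_sub_apply (hBm.inter measurableSet_Ioc)]
  rw [hL, ← (hall _ hBm).2, ← integral_indicator hA]
  congr 1
  ext x
  by_cases hx : x ∈ A
  · rw [indicator_of_mem hx, ← hloc]
    have h1 : incSet V x t ∩ W ⁻¹' A = incSet V x t ∩ univ := by
      ext s
      refine ⟨fun h => ⟨h.1, trivial⟩, fun h => ⟨h.1, ?_⟩⟩
      rw [mem_preimage, hWV s h.1.1, h.1.2.2.1]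
      exact hx
    have h2 : decSet V x t ∩ W ⁻¹' A = decSet V x t ∩ univ := by
      ext s
      refine ⟨fun h => ⟨h.1, trivial⟩, fun h => ⟨h.1, ?_⟩⟩
      rw [mem_preimage, hWV s h.1.1, DecreasesThrough.eq h.1.2]
      exact hx
    simp only [locB, h1, h2]
  · rw [indicator_of_notMem hx]
    have h1 : incSet V x t ∩ W ⁻¹' A = ∅ := by
      ext s
      refine ⟨fun h => hx ?_, fun h => h.elim⟩
      have h2 := h.2
      rw [mem_preimage, hWV s h.1.1, h.1.2.2.1] at h2
      exact h2
    have h2 : decSet V x t ∩ W ⁻¹' A = ∅ := by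
      ext s
      refine ⟨fun h => hx ?_, fun h => h.elim⟩
      have h2 := h.2
      rw [mem_preimage, hWV s h.1.1, DecreasesThrough.eq h.1.2] at h2
      exact h2
    simp [locB, h1, h2]
end
end

section
/- Let V : [0,∞) → ℝ be a right-continuous function with left limits, of finite variation on every compact interval, with canonical decomposition V = V^c + V^d into its continuous part V^c and pure-jump part V^d. For every t > 0 and every Borel set A ⊆ ℝ, the absolute occupation measure satisfies ϑ_t(A) = ∫_0^t 1_A(V(s)) |V^c(ds)| = ∫_A λ^x(t) dx; i.e., ϑ_t(dx) is absolutely continuous with respect to Lebesgue measure with density x ↦ λ^x(t). -/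
open MeasureTheory Set Filter
open scoped ENNReal NNReal

noncomputable section

section Helpers

open scoped Topology

lemma exists_gal_inv (F : ℝ → ℝ) (hF : ∀ a b, a ≤ b → b - a ≤ F b - F a)
    (hrc : ∀ s, ContinuousWithinAt F (Ici s) s) :
    ∃ τ : ℝ → ℝ, Measurable τ ∧ ∀ r a, τ r ≤ a ↔ r ≤ F a := by
  have hmono : StrictMono F := fun a b hab => by have := hF a b hab.le; linarith
  have hbdd : ∀ r, BddBelow {u | r ≤ F u} := by
    intro r
    refine ⟨min 0 (r - F 0), fun u hu => ?_⟩
    by_contra h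
    push Not at h
    have h1 := lt_min_iff.1 h
    have := hF u 0 h1.1.le
    simp only [mem_ofPred_eq] at hu
    linarith
  have hne : ∀ r, {u | r ≤ F u}.Nonempty := by
    intro r
    refine ⟨max 0 (r - F 0), ?_⟩
    have := hF 0 (max 0 (r - F 0)) (le_max_left _ _)
    have := le_max_right 0 (r - F 0)
    simp only [mem_ofPred_eq]
    linarith
  have key : ∀ r a, sInf {u | r ≤ F u} ≤ a ↔ r ≤ F a := by
    intro r a
    constructor
    · intro h
      have h2 : ∀ u, a < u → r ≤ F u := by
        intro u hu
        obtain ⟨v, hv, hvu⟩ := exists_lt_of_csInf_lt (hne r) (lt_of_le_of_lt h hu)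
        exact le_trans hv (hmono hvu).le
      have h3 : Tendsto F (𝓝[>] a) (𝓝 (F a)) := (hrc a).tendsto.mono_left
        (nhdsWithin_mono _ Ioi_subset_Ici_self)
      exact ge_of_tendsto h3 (eventually_nhdsWithin_of_forall h2)
    · intro h
      exact csInf_le (hbdd r) h
  refine ⟨fun r => sInf {u | r ≤ F u}, ?_, key⟩
  apply measurable_of_Iic
  intro a
  have : (fun r => sInf {u | r ≤ F u}) ⁻¹' Iic a = Iic (F a) := by
    ext r; exact key r a
  rw [this]; exact measurableSet_Iic

lemma exists_param (V : ℝ → ℝ)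
    (hV_rc : ∀ s ∈ Set.Ici (0 : ℝ), ContinuousWithinAt V (Set.Ici s) s)
    (T : ℝ) (hT : 0 < T) (hV_bv : BoundedVariationOn V (Set.Icc 0 T)) :
    ∃ F W τ : ℝ → ℝ, StrictMono F ∧ LipschitzWith 1 W ∧ Measurable τ ∧
      (∀ r a, τ r ≤ a ↔ r ≤ F a) ∧ ∀ s ∈ Icc 0 T, W (F s) = V s := by
  set c : ℝ → ℝ := fun s => max 0 (min s T) with hc
  have hcm : Monotone c := fun a b h => by simp only [hc]; gcongr
  have hcc : Continuous c := by fun_prop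
  have hcI : ∀ s, c s ∈ Icc 0 T := fun s => ⟨le_max_left _ _, max_le hT.le (min_le_right _ _)⟩
  set U : ℝ → ℝ := V ∘ c with hU
  have hbv : BoundedVariationOn U univ := by
    have := eVariationOn.comp_le_of_monotoneOn V (s := Icc 0 T) (t := univ) c
      (hcm.monotoneOn _) (fun s _ => hcI s)
    exact ne_top_of_le_ne_top hV_bv this
  have hUrc : ∀ s, ContinuousWithinAt U (Ici s) s := fun s =>
    (hV_rc (c s) (hcI s).1).comp hcc.continuousWithinAt (fun u hu => hcm hu)
  set F : ℝ → ℝ := fun s => s + variationOnFromTo U univ 0 s with hFdef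
  have hlb := hbv.locallyBoundedVariationOn
  have hFU : ∀ a b, a ≤ b → |U b - U a| + (b - a) ≤ F b - F a := by
    intro a b hab
    have := variationOnFromTo.abs_sub_le_sub_of_le hlb (mem_univ 0) (mem_univ a) (mem_univ b) hab
    simp only [hFdef]; linarith
  have hF1 : ∀ a b, a ≤ b → b - a ≤ F b - F a := fun a b h => by
    have := hFU a b h
    have := abs_nonneg (U b - U a)
    linarith
  have hmono : StrictMono F := fun a b hab => by have := hF1 a b hab.le; linarith
  have hFrc : ∀ s, ContinuousWithinAt F (Ici s) s := fun s =>
    continuousWithinAt_id.add (hbv.continuousWithinAt_variationOnFromTo_Ici (hUrc s))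
  obtain ⟨τ, hτ, hτ2⟩ := exists_gal_inv F hF1 hFrc
  have hlip : LipschitzOnWith 1 (U ∘ τ) (range F) := by
    have hτF : ∀ a, τ (F a) = a := fun a => by
      apply le_antisymm ((hτ2 _ _).2 le_rfl)
      exact hmono.le_iff_le.1 ((hτ2 _ _).1 le_rfl)
    refine LipschitzOnWith.of_dist_le_mul ?_
    rintro _ ⟨a, rfl⟩ _ ⟨b, rfl⟩
    simp only [Function.comp, hτF, NNReal.coe_one, one_mul, Real.dist_eq]
    wlog hab : a ≤ b generalizing a b
    · rw [abs_sub_comm, abs_sub_comm (F a)]; exact this b a (le_of_not_ge hab)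
    · rw [abs_sub_comm, abs_sub_comm (F a)]
      have := hFU a b hab
      have := le_abs_self (F b - F a)
      linarith
  obtain ⟨W, hW, hWE⟩ := hlip.extend_real
  refine ⟨F, W, τ, hmono, hW, hτ, hτ2, fun s hs => ?_⟩
  rw [← hWE (mem_range_self s)]
  have hτF : τ (F s) = s := by
    apply le_antisymm ((hτ2 _ _).2 le_rfl)
    exact hmono.le_iff_le.1 ((hτ2 _ _).1 le_rfl)
  simp [hU, hτF, hc, hs.1, hs.2]

lemma null_image (W : ℝ → ℝ) (hW : LipschitzWith 1 W) :
    volume (W '' {r | ¬ (DifferentiableAt ℝ W r ∧ deriv W r ≠ 0)}) = 0 := by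
  have h1 : {r | ¬ (DifferentiableAt ℝ W r ∧ deriv W r ≠ 0)} ⊆
      {r | ¬ DifferentiableAt ℝ W r} ∪ {r | DifferentiableAt ℝ W r ∧ deriv W r = 0} := by
    intro r hr
    simp only [mem_ofPred_eq, mem_union] at *
    tauto
  refine measure_mono_null (image_mono h1) ?_
  rw [image_union]
  refine measure_union_null ?_ ?_
  · have h0 : volume {r | ¬ DifferentiableAt ℝ W r} = 0 := hW.ae_differentiableAt_real
    rw [← hausdorffMeasure_real] at h0 ⊢
    have := (hW.lipschitzOnWith (s := {r | ¬ DifferentiableAt ℝ W r})).hausdorffMeasure_image_le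
      (d := 1) zero_le_one
    rw [h0] at this
    simpa using this
  · refine addHaar_image_eq_zero_of_det_fderivWithin_eq_zero (μ := volume) 
      (f' := fun r => ContinuousLinearMap.toSpanSingleton ℝ (0 : ℝ)) ?_ ?_
    · intro r hr
      have := hr.1.hasDerivAt.hasFDerivAt
      rw [hr.2] at this
      exact this.hasFDerivWithinAt
    · intro r hr
      simp [ContinuousLinearMap.det]

lemma inc_of_deriv_pos (V F W : ℝ → ℝ) (hF : StrictMono F) (t s w : ℝ) (hs : s ∈ Ioc 0 t)
    (hWV : ∀ s ∈ Icc 0 (t+1), W (F s) = V s) (hFc : ContinuousAt F s)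
    (hW : HasDerivAt W w (F s)) (hw : 0 < w) :
    0 < s ∧ ContinuousWithinAt V (Set.Ici 0) s ∧
    ∃ ε > 0, ∀ s' ∈ Set.Ici (0 : ℝ), |s' - s| < ε →
      ((s' < s → V s' < V s) ∧ (s < s' → V s < V s')) := by
  have hsI : s ∈ Icc 0 (t+1) := ⟨hs.1.le, by linarith [hs.2]⟩
  refine ⟨hs.1, ?_, ?_⟩
  · have h1 : ContinuousAt (W ∘ F) s := ContinuousAt.comp hW.continuousAt hFc
    have h2 : (W ∘ F) =ᶠ[𝓝 s] V := by
      filter_upwards [Ioo_mem_nhds hs.1 (show s < t + 1 by linarith [hs.2])] with u hu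
      exact hWV u ⟨hu.1.le, hu.2.le⟩
    exact (h1.congr h2).continuousWithinAt
  · have h1 := hasDerivAt_iff_tendsto_slope.1 hW
    have h2 : ∀ᶠ r in 𝓝[≠] (F s), 0 < slope W (F s) r := h1.eventually_const_lt hw
    have h3 : Tendsto F (𝓝[≠] s) (𝓝[≠] (F s)) :=
      tendsto_nhdsWithin_of_tendsto_nhds_of_eventually_within _
        (hFc.tendsto.mono_left nhdsWithin_le_nhds)
        (eventually_nhdsWithin_of_forall fun u hu => hF.injective.ne hu)
    have h4 := h3.eventually h2
    rw [eventually_nhdsWithin_iff, Metric.eventually_nhds_iff] at h4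
    obtain ⟨ε, hε, h5⟩ := h4
    refine ⟨min ε 1, by positivity, fun s' hs' hd => ?_⟩
    have hd1 := lt_of_lt_of_le hd (min_le_left _ _)
    have hd2 := lt_of_lt_of_le hd (min_le_right _ _)
    have hs'I : s' ∈ Icc 0 (t+1) := ⟨hs', by linarith [hs.2, (abs_lt.1 hd2).2]⟩
    have h6 : s' ≠ s → 0 < slope W (F s) (F s') := fun h => h5 hd1 h
    rw [slope_def_field, hWV _ hsI, hWV _ hs'I] at h6
    constructor
    · intro h
      have h7 := h6 h.ne
      have h8 : F s' - F s < 0 := by linarith [hF h]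
      rcases div_pos_iff.1 h7 with h9 | h9 <;> linarith [h9.1, h9.2]
    · intro h
      have h7 := h6 h.ne'
      have h8 : F s' - F s > 0 := by linarith [hF h]
      rcases div_pos_iff.1 h7 with h9 | h9 <;> linarith [h9.1, h9.2]

lemma jordan_aux {α : Type*} [MeasurableSpace α] (a b c d : Measure α)
    (hab : a ⟂ₘ b) (hcd : c ⟂ₘ d) (h : a + d = b + c) : a + b = c + d := by
  obtain ⟨P, hP, haP, hbP⟩ := hab
  obtain ⟨Q, hQ, hcQ, hdQ⟩ := hcd
  have key : ∀ E, a E + d E = b E + c E := fun E => by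
    have := congrArg (fun m : Measure α => m E) h
    simpa using this
  have z : ∀ (m : Measure α) (X E : Set α), m X = 0 → E ⊆ X → m E = 0 :=
    fun m X E h1 h2 => measure_mono_null h2 h1
  ext E hE
  have split : ∀ m : Measure α, m E = (m (E ∩ P ∩ Q) + m ((E ∩ P) \ Q)) +
      (m ((E \ P) ∩ Q) + m ((E \ P) \ Q)) := fun m => by
    rw [measure_inter_add_sdiff _ hQ, measure_inter_add_sdiff _ hQ, measure_inter_add_sdiff _ hP]
  have e : ∀ X, (X ⊆ P ∨ X ⊆ Pᶜ) → (X ⊆ Q ∨ X ⊆ Qᶜ) → a X + b X = c X + d X := by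
    intro X h1 h2
    have k := key X
    rcases h1 with h1 | h1 <;> rcases h2 with h2 | h2
    · rw [z a P X haP h1, z c Q X hcQ h2] at *; simpa using k.symm
    · rw [z a P X haP h1, z d _ X hdQ h2] at *
      simp only [zero_add] at k
      have := add_eq_zero.1 k.symm
      simp [this.1, this.2]
    · rw [z b _ X hbP h1, z c Q X hcQ h2] at *
      simp only [zero_add] at k
      have := add_eq_zero.1 k
      simp [this.1, this.2]
    · rw [z b _ X hbP h1, z d _ X hdQ h2] at *; simpa using k
  have e1 := e (E ∩ P ∩ Q) (Or.inl fun x hx => hx.1.2) (Or.inl fun x hx => hx.2)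
  have e2 := e ((E ∩ P) \ Q) (Or.inl fun x hx => hx.1.2) (Or.inr fun x hx => hx.2)
  have e3 := e ((E \ P) ∩ Q) (Or.inr fun x hx => hx.1.2) (Or.inl fun x hx => hx.2)
  have e4 := e ((E \ P) \ Q) (Or.inr fun x hx => hx.1.2) (Or.inr fun x hx => hx.2)
  simp only [Measure.add_apply]
  calc a E + b E = ((a (E ∩ P ∩ Q) + b (E ∩ P ∩ Q)) + (a ((E ∩ P) \ Q) + b ((E ∩ P) \ Q))) +
      ((a ((E \ P) ∩ Q) + b ((E \ P) ∩ Q)) + (a ((E \ P) \ Q) + b ((E \ P) \ Q))) := by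
        rw [split a, split b]; ring
    _ = c E + d E := by rw [e1, e2, e3, e4, split c, split d]; ring

lemma area (W : ℝ → ℝ) (hWm : Measurable W) (R : Set ℝ) (hR : MeasurableSet R)
    (hd : ∀ r ∈ R, DifferentiableAt ℝ W r ∧ deriv W r ≠ 0) :
    ∃ N : ℝ → ℝ≥0∞, Measurable N ∧ (∀ x, N x = (({r | r ∈ R ∧ W r = x}.encard : ℕ∞) : ℝ≥0∞)) ∧
      ∀ A, MeasurableSet A → ∫⁻ x in A, N x = ∫⁻ r in R ∩ W ⁻¹' A, ENNReal.ofReal |deriv W r| := by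
  classical
  obtain ⟨u, L, hdisj, hum, hcov, happ, hL⟩ :=
    exists_partition_approximatesLinearOn_of_hasFDerivWithinAt W R
      (fun r => ContinuousLinearMap.toSpanSingleton ℝ (deriv W r))
      (fun r hr => (hd r hr).1.hasDerivAt.hasFDerivAt.hasFDerivWithinAt)
      (fun L => if L 1 = 0 then 1 else ‖L 1‖₊ / 2)
      (fun L => by
        split_ifs with h
        · exact one_ne_zero
        · simpa using h)
  have hinj : ∀ n, InjOn W (R ∩ u n) := by
    intro n x hx y hy hxy
    obtain ⟨z, hz, hLz⟩ := hL ⟨x, hx.1⟩ n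
    have hL1 : L n 1 ≠ 0 := by rw [hLz]; simpa using (hd z hz).2
    have h := happ n x hx y hy
    rw [if_neg hL1, hxy, sub_self, zero_sub, norm_neg] at h
    have h2 : L n (x - y) = (x - y) * L n 1 := by
      have := (L n).map_smul (x - y) 1
      simpa using this
    rw [h2, norm_mul] at h
    have h3 : 0 < ‖L n 1‖ := norm_pos_iff.2 hL1
    simp only [NNReal.coe_div, coe_nnnorm, NNReal.coe_ofNat] at h
    have h4 : ‖x - y‖ ≤ 0 := by
      by_contra hh
      push Not at hh
      nlinarith [mul_pos hh h3]
    exact sub_eq_zero.1 (norm_le_zero_iff.1 h4)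
  have himm : ∀ n, MeasurableSet (W '' (R ∩ u n)) := fun n =>
    (hR.inter (hum n)).image_of_measurable_injOn hWm (hinj n)
  refine ⟨fun x => ∑' n, (W '' (R ∩ u n)).indicator 1 x, ?_, ?_, ?_⟩
  · exact Measurable.tsum fun n => measurable_one.indicator (himm n)
  · intro x
    have hZm : ∀ n, MeasurableSet ({r | r ∈ R ∧ W r = x} ∩ u n) := fun n =>
      (hR.inter (hWm (measurableSet_singleton x))).inter (hum n)
    have hZ : {r | r ∈ R ∧ W r = x} = ⋃ n, ({r | r ∈ R ∧ W r = x} ∩ u n) := by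
      rw [← inter_iUnion]
      exact (inter_eq_left.2 fun r hr => hcov hr.1).symm
    have h1 : Measure.count {r | r ∈ R ∧ W r = x} =
        ∑' n, Measure.count ({r | r ∈ R ∧ W r = x} ∩ u n) := by
      conv_lhs => rw [hZ]
      exact measure_iUnion (fun i j hij => (hdisj hij).mono inter_subset_right inter_subset_right)
        hZm
    have hZm' : MeasurableSet {r | r ∈ R ∧ W r = x} :=
      hR.inter (hWm (measurableSet_singleton x))
    rw [← Measure.count_apply hZm', h1]
    refine tsum_congr fun n => ?_
    by_cases hx : x ∈ W '' (R ∩ u n)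
    · obtain ⟨r, hr, hrx⟩ := hx
      have : {r | r ∈ R ∧ W r = x} ∩ u n = {r} := by
        ext q
        constructor
        · rintro ⟨⟨h1, h2⟩, h3⟩
          exact hinj n ⟨h1, h3⟩ hr (h2.trans hrx.symm)
        · rintro rfl
          exact ⟨⟨hr.1, hrx⟩, hr.2⟩
      rw [this, Measure.count_singleton, indicator_of_mem (show x ∈ W '' (R ∩ u n) from ⟨r, hr, hrx⟩)]
      rfl
    · have : {r | r ∈ R ∧ W r = x} ∩ u n = ∅ := by
        ext q
        simp only [mem_empty_iff_false, iff_false]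
        rintro ⟨⟨h1, h2⟩, h3⟩
        exact hx ⟨q, ⟨h1, h3⟩, h2⟩
      rw [this, measure_empty, indicator_of_notMem hx]
  · intro A hA
    rw [lintegral_tsum fun n => (measurable_one.indicator (himm n)).aemeasurable]
    have hcov2 : R ∩ W ⁻¹' A = ⋃ n, ((R ∩ W ⁻¹' A) ∩ u n) := by
      rw [← inter_iUnion]
      exact (inter_eq_left.2 fun r hr => hcov hr.1).symm
    have hm2 : ∀ n, MeasurableSet ((R ∩ W ⁻¹' A) ∩ u n) := fun n =>
      (hR.inter (hWm hA)).inter (hum n)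
    conv_rhs => rw [hcov2]
    rw [lintegral_iUnion hm2 (fun i j hij => (hdisj hij).mono inter_subset_right inter_subset_right)]
    refine tsum_congr fun n => ?_
    rw [lintegral_indicator_one (himm n), Measure.restrict_apply (himm n)]
    have h3 : W '' (R ∩ u n) ∩ A = W '' ((R ∩ W ⁻¹' A) ∩ u n) := by
      ext x
      constructor
      · rintro ⟨⟨r, hr, rfl⟩, hx⟩
        exact ⟨r, ⟨⟨hr.1, hx⟩, hr.2⟩, rfl⟩
      · rintro ⟨r, hr, rfl⟩
        exact ⟨⟨r, ⟨hr.1.1, hr.2⟩, rfl⟩, hr.1.2⟩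
    rw [h3]
    have h4 := lintegral_image_eq_lintegral_abs_deriv_mul (f := W) (f' := deriv W) (hm2 n)
      (fun r hr => (hd r hr.1.1).1.hasDerivAt.hasDerivWithinAt)
      ((hinj n).mono (inter_subset_inter_left _ inter_subset_left)) (fun _ => 1)
    simpa using h4

lemma tsum_pos_neg (f : ℝ → ℝ) (hf : Summable f) :
    (∑' u, ENNReal.ofReal (f u)) ≠ ∞ ∧ (∑' u, ENNReal.ofReal (- f u)) ≠ ∞ ∧
    (∑' u, ENNReal.ofReal (f u)).toReal - (∑' u, ENNReal.ofReal (- f u)).toReal = ∑' u, f u := by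
  have h1 : Summable fun u => |f u| := hf.abs
  have hp : Summable fun u => max (f u) 0 :=
    Summable.of_nonneg_of_le (fun u => le_max_right _ _)
      (fun u => max_le (le_abs_self _) (abs_nonneg _)) h1
  have hn : Summable fun u => max (- f u) 0 :=
    Summable.of_nonneg_of_le (fun u => le_max_right _ _)
      (fun u => max_le (neg_le_abs _) (abs_nonneg _)) h1
  have e1 : (∑' u, ENNReal.ofReal (f u)) = ENNReal.ofReal (∑' u, max (f u) 0) := by
    rw [ENNReal.ofReal_tsum_of_nonneg (fun u => le_max_right _ _) hp]
    exact tsum_congr fun u => by rw [ENNReal.ofReal_max]; simp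
  have e2 : (∑' u, ENNReal.ofReal (- f u)) = ENNReal.ofReal (∑' u, max (- f u) 0) := by
    rw [ENNReal.ofReal_tsum_of_nonneg (fun u => le_max_right _ _) hn]
    exact tsum_congr fun u => by rw [ENNReal.ofReal_max]; simp
  refine ⟨by rw [e1]; exact ENNReal.ofReal_ne_top, by rw [e2]; exact ENNReal.ofReal_ne_top, ?_⟩
  rw [e1, e2, ENNReal.toReal_ofReal (tsum_nonneg fun u => le_max_right _ _),
    ENNReal.toReal_ofReal (tsum_nonneg fun u => le_max_right _ _), ← hp.tsum_sub hn]
  refine tsum_congr fun u => ?_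
  rcases le_total (f u) 0 with h | h
  · rw [max_eq_right h, max_eq_left (by linarith)]; ring
  · rw [max_eq_left h, max_eq_right (by linarith)]; ring

lemma jump_measure (δ : ℝ → ℝ) (hδ : Summable δ) :
    ∃ jp jn : Measure ℝ, IsFiniteMeasure jp ∧ IsFiniteMeasure jn ∧
      (∀ E, MeasurableSet E → (jp E).toReal - (jn E).toReal = ∑' u, E.indicator δ u) ∧
      (∀ E, MeasurableSet E → (∀ u ∈ E, δ u = 0) → jp E = 0 ∧ jn E = 0) := by
  classical
  have hm : ∀ (g : ℝ → ℝ) (E : Set ℝ), MeasurableSet E →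
      Measure.sum (fun u => ENNReal.ofReal (g u) • Measure.dirac u) E =
        ∑' u, ENNReal.ofReal (E.indicator g u) := by
    intro g E hE
    rw [Measure.sum_apply _ hE]
    refine tsum_congr fun u => ?_
    rw [Measure.smul_apply, Measure.dirac_apply' _ hE, smul_eq_mul]
    by_cases hu : u ∈ E <;> simp [hu]
  have hneg : ∀ E : Set ℝ, (fun u => E.indicator (fun u => - δ u) u) = fun u => - E.indicator δ u :=
    fun E => by ext u; by_cases hu : u ∈ E <;> simp [hu]
  refine ⟨Measure.sum (fun u => ENNReal.ofReal (δ u) • Measure.dirac u),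
    Measure.sum (fun u => ENNReal.ofReal (- δ u) • Measure.dirac u), ⟨?_⟩, ⟨?_⟩, ?_, ?_⟩
  · rw [hm δ _ MeasurableSet.univ]
    simpa using (tsum_pos_neg δ hδ).1.lt_top
  · rw [hm (fun u => - δ u) _ MeasurableSet.univ]
    simpa using (tsum_pos_neg δ hδ).2.1.lt_top
  · intro E hE
    rw [hm δ _ hE, hm (fun u => - δ u) _ hE]
    have := (tsum_pos_neg (E.indicator δ) (hδ.indicator E)).2.2
    rw [← this]
    simp_rw [fun u => congrFun (hneg E) u]
  · intro E hE h
    rw [hm δ _ hE, hm (fun u => - δ u) _ hE]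
    simp_rw [fun u => congrFun (hneg E) u]
    have : E.indicator δ = 0 := by
      ext u; by_cases hu : u ∈ E <;> simp [hu]
      exact h u hu
    simp [this]

lemma deriv_measures (W τ F : ℝ → ℝ) (hW : LipschitzWith 1 W) (hτ : Measurable τ)
    (hτF : ∀ r a, τ r ≤ a ↔ r ≤ F a) (hF : StrictMono F) (t : ℝ) :
    ∃ sp sn : Measure ℝ, IsFiniteMeasure (sp.restrict (Ioc 0 t)) ∧
      IsFiniteMeasure (sn.restrict (Ioc 0 t)) ∧
      (∀ E, MeasurableSet E → sp E = ∫⁻ r in τ ⁻¹' E, ENNReal.ofReal (deriv W r)) ∧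
      (∀ E, MeasurableSet E → sn E = ∫⁻ r in τ ⁻¹' E, ENNReal.ofReal (- deriv W r)) ∧
      ∀ a b, a ≤ b →
        (sp (Ioc a b)).toReal - (sn (Ioc a b)).toReal = W (F b) - W (F a) := by
  have hpre : ∀ a b, τ ⁻¹' (Ioc a b) = Ioc (F a) (F b) := by
    intro a b
    ext r
    simp only [mem_preimage, mem_Ioc, ← not_le, hτF]
  have hdm : Measurable (deriv W) := measurable_deriv W
  have hb : ∀ r, |deriv W r| ≤ 1 := fun r => by
    simpa using norm_deriv_le_of_lipschitz (x₀ := r) hW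
  have h1 : ∀ E, MeasurableSet E → ((volume.withDensity fun r => ENNReal.ofReal (deriv W r)).map τ) E
      = ∫⁻ r in τ ⁻¹' E, ENNReal.ofReal (deriv W r) := fun E hE => by
    rw [Measure.map_apply hτ hE, withDensity_apply _ (hτ hE)]
  have h2 : ∀ E, MeasurableSet E →
      ((volume.withDensity fun r => ENNReal.ofReal (- deriv W r)).map τ) E
      = ∫⁻ r in τ ⁻¹' E, ENNReal.ofReal (- deriv W r) := fun E hE => by
    rw [Measure.map_apply hτ hE, withDensity_apply _ (hτ hE)]
  have hfin : ∀ g : ℝ → ℝ, (∀ r, g r ≤ 1) → ∫⁻ r in Ioc (F 0) (F t), ENNReal.ofReal (g r) < ∞ := by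
    intro g hg
    calc ∫⁻ r in Ioc (F 0) (F t), ENNReal.ofReal (g r) ≤ ∫⁻ r in Ioc (F 0) (F t), 1 := by
          apply lintegral_mono
          intro r
          simpa using hg r
      _ < ∞ := by simp
  refine ⟨_, _, ⟨?_⟩, ⟨?_⟩, h1, h2, ?_⟩
  · rw [Measure.restrict_apply_univ, h1 _ measurableSet_Ioc, hpre]
    exact hfin _ fun r => (abs_le.1 (hb r)).2
  · rw [Measure.restrict_apply_univ, h2 _ measurableSet_Ioc, hpre]
    exact hfin _ fun r => by linarith [(abs_le.1 (hb r)).1]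
  · intro a b hab
    rw [h1 _ measurableSet_Ioc, h2 _ measurableSet_Ioc, hpre]
    have hintg : Integrable (deriv W) (volume.restrict (Ioc (F a) (F b))) := by
      refine Integrable.mono' (g := fun _ => 1) (by simp) hdm.aestronglyMeasurable ?_
      exact Eventually.of_forall hb
    rw [← integral_eq_lintegral_pos_part_sub_lintegral_neg_part hintg,
      ← intervalIntegral.integral_of_le (hF.monotone hab)]
    exact (hW.lipschitzOnWith.absolutelyContinuousOnInterval).integral_deriv_eq_sub

lemma tv_formula (V Vm Vc Vd : ℝ → ℝ)
    (hV_ll : ∀ s ∈ Set.Ioi (0 : ℝ),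
      Filter.Tendsto V (nhdsWithin s (Set.Iio s)) (nhds (Vm s)))
    (hdecomp : ∀ s ∈ Set.Ici (0 : ℝ), V s = Vc s + Vd s)
    (hVc_cont : ContinuousOn Vc (Set.Ici 0))
    (hVd_sum : ∀ s ∈ Set.Ici (0 : ℝ),
      HasSum (fun u : Set.Ioc (0 : ℝ) s => V u.1 - Vm u.1) (Vd s))
    (t : ℝ) (ht : 0 < t)
    (μc : MeasureTheory.SignedMeasure ℝ)
    (hμc : ∀ a b : ℝ, 0 ≤ a → a ≤ b → b ≤ t → μc (Set.Ioc a b) = Vc b - Vc a)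
    (F W τ : ℝ → ℝ) (hF : StrictMono F) (hW : LipschitzWith 1 W) (hτ : Measurable τ)
    (hτF : ∀ r a, τ r ≤ a ↔ r ≤ F a) (hWV : ∀ s ∈ Icc 0 (t+1), W (F s) = V s)
    (hinv : ∀ r, ContinuousAt F (τ r) → F (τ r) = r)
    (D : Set ℝ) (hD : D = {s | ¬ ContinuousAt F s})
    (E : Set ℝ) (hE : MeasurableSet E) (hEI : E ⊆ Ioc 0 t) :
    μc.totalVariation E = ∫⁻ r in τ ⁻¹' (E \ D), ENNReal.ofReal |deriv W r| := by
  have hDc : D.Countable := by rw [hD]; exact hF.monotone.countable_not_continuousAt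
  have hDm : MeasurableSet D := hDc.measurableSet
  set S := Ioc 0 t \ D with hS
  have hSm : MeasurableSet S := measurableSet_Ioc.diff hDm
  obtain ⟨sp, sn, hspf, hsnf, hsp, hsn, hsd⟩ := deriv_measures W τ F hW hτ hτF hF t
  set g : ℝ → ℝ := fun u => V u - Vm u with hg
  have hgs : ∀ s ∈ Ici (0 : ℝ), HasSum ((Ioc 0 s).indicator g) (Vd s) := fun s hs =>
    (hasSum_subtype_iff_indicator (f := g) (s := Ioc 0 s)).1 (hVd_sum s hs)
  obtain ⟨jp, jn, hjpf, hjnf, hjd, hj0⟩ := jump_measure ((Ioc 0 t).indicator g) (hgs t ht.le).summable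
  set p := μc.toJordanDecomposition.posPart with hp
  set q := μc.toJordanDecomposition.negPart with hq
  have hpq : p ⟂ₘ q := μc.toJordanDecomposition.mutuallySingular
  have hμ : ∀ E, MeasurableSet E → μc E = (p E).toReal - (q E).toReal := by
    intro E hE
    conv_lhs => rw [← μc.toSignedMeasure_toJordanDecomposition]
    rw [JordanDecomposition.toSignedMeasure, sub_apply,
      Measure.toSignedMeasure_apply_measurable hE, Measure.toSignedMeasure_apply_measurable hE]
    rfl
  -- the three-term identity on intervals
  have key : ∀ a b, 0 ≤ a → a ≤ b → b ≤ t →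
      sp (Ioc a b) + q (Ioc a b) + jn (Ioc a b) = sn (Ioc a b) + p (Ioc a b) + jp (Ioc a b) := by
    intro a b ha hab hbt
    have hsub : Ioc a b ⊆ Ioc 0 t := Ioc_subset_Ioc ha hbt
    have fsp : sp (Ioc a b) ≠ ∞ := by
      have := measure_ne_top (sp.restrict (Ioc 0 t)) (Ioc a b)
      rwa [Measure.restrict_apply measurableSet_Ioc, inter_eq_left.2 hsub] at this
    have fsn : sn (Ioc a b) ≠ ∞ := by
      have := measure_ne_top (sn.restrict (Ioc 0 t)) (Ioc a b)
      rwa [Measure.restrict_apply measurableSet_Ioc, inter_eq_left.2 hsub] at this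
    have fp : p (Ioc a b) ≠ ∞ := measure_ne_top _ _
    have fq : q (Ioc a b) ≠ ∞ := measure_ne_top _ _
    have fjp : jp (Ioc a b) ≠ ∞ := measure_ne_top _ _
    have fjn : jn (Ioc a b) ≠ ∞ := measure_ne_top _ _
    have e1 := hsd a b hab
    rw [hWV a ⟨ha, by linarith⟩, hWV b ⟨by linarith, by linarith⟩] at e1
    have e2 := hμ _ (measurableSet_Ioc (a := a) (b := b))
    rw [hμc a b ha hab hbt] at e2
    have e3 := hjd _ (measurableSet_Ioc (a := a) (b := b))
    have e4 : HasSum ((Ioc a b).indicator ((Ioc 0 t).indicator g)) (Vd b - Vd a) := by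
      have := (hgs b (ha.trans hab)).sub (hgs a ha)
      have hfun : (Ioc a b).indicator ((Ioc 0 t).indicator g) =
          fun u => (Ioc 0 b).indicator g u - (Ioc 0 a).indicator g u := by
        funext u
        simp only [indicator, mem_Ioc]
        by_cases h1 : a < u
        · by_cases h2 : u ≤ b
          · have h3 : 0 < u := by linarith
            have h4 : u ≤ t := by linarith
            simp [h1, h2, h3, h4, not_le.2 h1]
          · simp [h2, not_le.2 h1]
        · have h2 : u ≤ a := not_lt.1 h1
          have h3 : u ≤ b := h2.trans hab
          simp [h1, h2, h3]
      rw [hfun]; exact this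
    rw [e4.tsum_eq] at e3
    have d1 := hdecomp a ha
    have d2 := hdecomp b (ha.trans hab)
    rw [← ENNReal.toReal_eq_toReal_iff' (by finiteness) (by finiteness),
      ENNReal.toReal_add (by finiteness) (by finiteness), ENNReal.toReal_add fsp fq,
      ENNReal.toReal_add (by finiteness) (by finiteness), ENNReal.toReal_add fsn fp]
    linarith
  have keyM : (sp + q + jn).restrict (Ioc 0 t) = (sn + p + jp).restrict (Ioc 0 t) := by
    have : IsFiniteMeasure ((sp + q + jn).restrict (Ioc 0 t)) := by
      rw [Measure.restrict_add, Measure.restrict_add]; infer_instance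
    refine Measure.ext_of_Ioc _ _ fun a b hab => ?_
    rw [Measure.restrict_apply measurableSet_Ioc, Measure.restrict_apply measurableSet_Ioc,
      Ioc_inter_Ioc]
    rcases le_or_gt (a ⊔ 0) (b ⊓ t) with h | h
    · exact key _ _ le_sup_right h inf_le_right
    · rw [Ioc_eq_empty (not_lt.2 h.le)]; simp
  have hjS : jp S = 0 ∧ jn S = 0 := by
    refine hj0 S hSm fun u hu => ?_
    rw [indicator_of_mem hu.1]
    have hc : ContinuousAt F u := by
      by_contra h; exact hu.2 (by rw [hD]; exact h)
    have h1 : Tendsto (W ∘ F) (𝓝[<] u) (𝓝 (W (F u))) :=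
      (ContinuousAt.comp hW.continuous.continuousAt hc).tendsto.mono_left nhdsWithin_le_nhds
    have h2 : (W ∘ F) =ᶠ[𝓝[<] u] V := by
      filter_upwards [Ioo_mem_nhdsLT hu.1.1] with v hv
      exact hWV v ⟨hv.1.le, by linarith [hv.2, hu.1.2]⟩
    have h3 := tendsto_nhds_unique (h1.congr' h2) (hV_ll u hu.1.1)
    rw [hWV u ⟨hu.1.1.le, by linarith [hu.1.2]⟩] at h3
    simp [hg, h3]
  have hSI : S ⊆ Ioc 0 t := sdiff_subset
  have keyS : p.restrict S + sn.restrict S = q.restrict S + sp.restrict S := by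
    have h1 := congrArg (fun m : Measure ℝ => m.restrict S) keyM
    simp only [Measure.restrict_restrict hSm, inter_eq_left.2 hSI, Measure.restrict_add] at h1
    rw [Measure.restrict_eq_zero.2 hjS.1, Measure.restrict_eq_zero.2 hjS.2, add_zero, add_zero] at h1
    rw [add_comm, ← h1, add_comm]
  have hinvS : ∀ r, τ r ∈ S → F (τ r) = r := fun r hr => hinv r (by
    by_contra h; exact hr.2 (by rw [hD]; exact h))
  have hdm : Measurable (deriv W) := measurable_deriv W
  have hs : sp.restrict S ⟂ₘ sn.restrict S := by
    have hm : MeasurableSet (F ⁻¹' {r | deriv W r ≤ 0}) :=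
      hF.monotone.measurable (hdm measurableSet_Iic)
    refine ⟨F ⁻¹' {r | deriv W r ≤ 0}, hm, ?_, ?_⟩
    · rw [Measure.restrict_apply hm, hsp _ (hm.inter hSm)]
      refine (setLIntegral_congr_fun (hτ (hm.inter hSm)) (g := fun _ => 0) ?_).trans (by simp)
      intro r hr
      have h1 : deriv W (F (τ r)) ≤ 0 := hr.1
      rw [hinvS r hr.2] at h1
      simpa using h1
    · rw [Measure.restrict_apply hm.compl, hsn _ (hm.compl.inter hSm)]
      refine (setLIntegral_congr_fun (hτ (hm.compl.inter hSm)) (g := fun _ => 0) ?_).trans (by simp)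
      intro r hr
      have h1 : ¬ deriv W (F (τ r)) ≤ 0 := hr.1
      rw [hinvS r hr.2, not_le] at h1
      simpa using h1.le
  have hTS : p.restrict S + q.restrict S = sp.restrict S + sn.restrict S :=
    jordan_aux _ _ _ _ (hpq.mono_ac Measure.restrict_le_self.absolutelyContinuous
      Measure.restrict_le_self.absolutelyContinuous) hs keyS
  -- no atoms
  have hatom : ∀ s ∈ Ioc 0 t, p {s} = 0 ∧ q {s} = 0 := by
    intro s hs
    obtain ⟨u, hum, hu, hul⟩ := exists_seq_strictMono_tendsto' hs.1
    have hI : ⋂ n, Ioc (u n) s = {s} := by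
      ext x
      simp only [mem_iInter, mem_Ioc, mem_singleton_iff]
      constructor
      · intro h
        exact le_antisymm (h 0).2 (le_of_tendsto' hul fun n => (h n).1.le)
      · rintro rfl
        exact fun n => ⟨(hu n).2, le_rfl⟩
    have hT : ∀ m : Measure ℝ, IsFiniteMeasure m →
        Tendsto (fun n => (m (Ioc (u n) s)).toReal) atTop (𝓝 (m {s}).toReal) := by
      intro m _
      refine (ENNReal.tendsto_toReal (measure_ne_top _ _)).comp ?_
      rw [← hI]
      refine tendsto_measure_iInter_atTop (fun n => measurableSet_Ioc.nullMeasurableSet) ?_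
        ⟨0, measure_ne_top _ _⟩
      exact fun i j hij => Ioc_subset_Ioc_left (hum.monotone hij)
    have h1 := (hT p inferInstance).sub (hT q inferInstance)
    have h2 : Tendsto (fun n => Vc s - Vc (u n)) atTop (𝓝 (Vc s - Vc s)) := by
      refine tendsto_const_nhds.sub ?_
      have := (hVc_cont.continuousAt (Ici_mem_nhds hs.1)).tendsto
      exact this.comp hul
    have h3 := tendsto_nhds_unique (h1.congr fun n => by
      rw [← hμ _ measurableSet_Ioc, hμc _ _ (hu n).1.le (hu n).2.le hs.2]) h2
    have h4 : p {s} = q {s} := by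
      rw [← ENNReal.toReal_eq_toReal_iff' (measure_ne_top _ _) (measure_ne_top _ _)]
      linarith
    obtain ⟨P, hP, h5, h6⟩ := hpq
    by_cases hsP : s ∈ P
    · have : p {s} = 0 := measure_mono_null (singleton_subset_iff.2 hsP) h5
      exact ⟨this, h4 ▸ this⟩
    · have : q {s} = 0 := measure_mono_null (singleton_subset_iff.2 hsP) h6
      exact ⟨h4 ▸ this, this⟩
  have hTV : ∀ E, μc.totalVariation E = p E + q E := fun E => rfl
  have hTVD : μc.totalVariation (E ∩ D) = 0 := by
    rw [← biUnion_of_singleton (E ∩ D), measure_biUnion_null_iff (hDc.mono inter_subset_right)]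
    intro s hs
    rw [hTV, (hatom s (hEI hs.1)).1, (hatom s (hEI hs.1)).2, add_zero]
  have hEm : MeasurableSet (E \ D) := hE.diff hDm
  have hES : (E \ D) ∩ S = E \ D := inter_eq_left.2 fun s hs => ⟨hEI hs.1, hs.2⟩
  have h7 := congrArg (fun m : Measure ℝ => m (E \ D)) hTS
  simp only [Measure.add_apply, Measure.restrict_apply hEm, hES] at h7
  rw [← measure_inter_add_sdiff E hDm, hTVD, zero_add, hTV, h7, hsp _ hEm, hsn _ hEm,
    ← lintegral_add_left (by fun_prop)]
  refine lintegral_congr fun r => ?_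
  rcases le_total (deriv W r) 0 with h | h
  · rw [abs_of_nonpos h, ENNReal.ofReal_of_nonpos h, zero_add]
  · rw [abs_of_nonneg h, ENNReal.ofReal_of_nonpos (p := - deriv W r) (by linarith), add_zero]

end Helpers

/-- For a càdlàg function `V` on `[0,∞)` of finite variation on compacts,
with canonical decomposition `V = Vc + Vd`, and `μc` the signed Stieltjes measure of the
continuous part `Vc` (on `[0,t]`), the absolute occupation measure
`ϑ_t(A) = ∫_0^t 1_A(V s) |μc|(ds)` is absolutely continuous with respect to Lebesgue
measure, with density `x ↦ λ^x(t)`; in particular `λ^x(t)` is well defined for a.e. `x`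
and `ϑ_t(A) = ∫_A λ^x(t) dx` for every Borel set `A`. -/
theorem abs_occupation_density
    (V Vm Vc Vd : ℝ → ℝ)
    (hV_rc : ∀ s ∈ Set.Ici (0 : ℝ), ContinuousWithinAt V (Set.Ici s) s)
    (hV_ll : ∀ s ∈ Set.Ioi (0 : ℝ),
      Filter.Tendsto V (nhdsWithin s (Set.Iio s)) (nhds (Vm s)))
    (hV_bv : ∀ T : ℝ, BoundedVariationOn V (Set.Icc 0 T))
    (hdecomp : ∀ s ∈ Set.Ici (0 : ℝ), V s = Vc s + Vd s)
    (hVc_cont : ContinuousOn Vc (Set.Ici 0))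
    (hVc_bv : ∀ T : ℝ, BoundedVariationOn Vc (Set.Icc 0 T))
    (hVd_sum : ∀ s ∈ Set.Ici (0 : ℝ),
      HasSum (fun u : Set.Ioc (0 : ℝ) s => V u.1 - Vm u.1) (Vd s))
    (hVd_abs : ∀ s ∈ Set.Ici (0 : ℝ),
      Summable (fun u : Set.Ioc (0 : ℝ) s => |V u.1 - Vm u.1|))
    (t : ℝ) (ht : 0 < t)
    (μc : MeasureTheory.SignedMeasure ℝ)
    (hμc : ∀ a b : ℝ, 0 ≤ a → a ≤ b → b ≤ t → μc (Set.Ioc a b) = Vc b - Vc a) :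
    (∀ᵐ x : ℝ ∂volume, (incSet V x t).Finite ∧ (decSet V x t).Finite) ∧
      MeasureTheory.Integrable (fun x : ℝ => (absLocalTime V x t : ℝ)) volume ∧
      ∀ A : Set ℝ, MeasurableSet A →
        ∫ s in Set.Ioc (0 : ℝ) t, A.indicator (fun _ => (1 : ℝ)) (V s)
            ∂μc.totalVariation =
          ∫ x in A, (absLocalTime V x t : ℝ) ∂volume := by
  obtain ⟨F, W, τ, hF, hW, hτ, hτF, hWV⟩ :=
    exists_param V hV_rc (t + 1) (by linarith) (hV_bv (t + 1))
  have hinv : ∀ r, ContinuousAt F (τ r) → F (τ r) = r := by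
    intro r hc
    refine le_antisymm ?_ ((hτF _ _).1 le_rfl)
    refine le_of_tendsto (hc.tendsto.mono_left (nhdsWithin_le_nhds (s := Iio (τ r)))) ?_
    refine eventually_nhdsWithin_of_forall fun u hu => ?_
    by_contra h
    exact absurd ((hτF r u).2 (not_le.1 h).le) (not_le.2 hu)
  have hτFs : ∀ s, τ (F s) = s := fun s =>
    le_antisymm ((hτF _ _).2 le_rfl) (hF.le_iff_le.1 ((hτF _ _).1 le_rfl))
  set D : Set ℝ := {s | ¬ ContinuousAt F s} with hD
  have hDc : D.Countable := hF.monotone.countable_not_continuousAt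
  have hDm : MeasurableSet D := hDc.measurableSet
  set S : Set ℝ := Ioc 0 t \ D with hS
  have hSm : MeasurableSet S := measurableSet_Ioc.diff hDm
  have hWm : Measurable W := hW.continuous.measurable
  have hFm : Measurable F := hF.monotone.measurable
  set G : Set ℝ := {r | DifferentiableAt ℝ W r ∧ deriv W r ≠ 0} with hG
  have hGm : MeasurableSet G :=
    (measurableSet_of_differentiableAt ℝ W).inter
      ((measurable_deriv W) (measurableSet_singleton 0).compl)
  have hinvS : ∀ r, τ r ∈ S → F (τ r) = r := fun r hr => hinv r (by
    by_contra h; exact hr.2 h)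
  have hRm : MeasurableSet (τ ⁻¹' S ∩ G) := (hτ hSm).inter hGm
  obtain ⟨N, hNm, hN, hNint⟩ := area W hWm (τ ⁻¹' S ∩ G) hRm (fun r hr => hr.2)
  -- the integral of the indicatrix
  have hmain : ∀ A, MeasurableSet A →
      ∫⁻ x in A, N x = μc.totalVariation (Ioc 0 t ∩ (fun s => W (F s)) ⁻¹' A) := by
    intro A hA
    have hE : MeasurableSet (Ioc 0 t ∩ (fun s => W (F s)) ⁻¹' A) :=
      measurableSet_Ioc.inter ((hWm.comp hFm) hA)
    rw [hNint A hA, tv_formula V Vm Vc Vd hV_ll hdecomp hVc_cont hVd_sum t ht μc hμc F W τ hF hW hτ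
      hτF hWV hinv D hD _ hE inter_subset_left]
    have h1 : τ ⁻¹' ((Ioc 0 t ∩ (fun s => W (F s)) ⁻¹' A) \ D) = τ ⁻¹' S ∩ W ⁻¹' A := by
      ext r
      constructor
      · rintro ⟨⟨h1, h2⟩, h3⟩
        have h4 : τ r ∈ S := ⟨h1, h3⟩
        refine ⟨h4, ?_⟩
        have h5 : W (F (τ r)) ∈ A := h2
        rwa [hinvS r h4] at h5
      · rintro ⟨h1, h2⟩
        refine ⟨⟨h1.1, ?_⟩, h1.2⟩
        change W (F (τ r)) ∈ A
        rw [hinvS r h1]; exact h2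
    rw [h1, ← lintegral_inter_add_sdiff _ (τ ⁻¹' S ∩ W ⁻¹' A) hGm]
    have h2 : ∫⁻ r in (τ ⁻¹' S ∩ W ⁻¹' A) \ G, ENNReal.ofReal |deriv W r| = 0 := by
      refine (setLIntegral_congr_fun (((hτ hSm).inter (hWm hA)).diff hGm)
        (g := fun _ => 0) ?_).trans (by simp)
      intro r hr
      have : deriv W r = 0 := by
        by_contra h
        exact hr.2 ⟨differentiableAt_of_deriv_ne_zero h, h⟩
      simp [this]
    rw [h2, add_zero]
    congr 2
    ext r
    simp only [mem_inter_iff]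
    tauto
  have hfinTV : ∀ E, μc.totalVariation E ≠ ∞ := by
    intro E
    have h1 : μc.toJordanDecomposition.posPart E ≠ ∞ := measure_ne_top _ _
    have h2 : μc.toJordanDecomposition.negPart E ≠ ∞ := measure_ne_top _ _
    exact ENNReal.add_ne_top.2 ⟨h1, h2⟩
  have hNtop : ∫⁻ x, N x ≠ ∞ := by
    have := hmain univ MeasurableSet.univ
    rw [Measure.restrict_univ] at this
    rw [this]
    exact hfinTV _
  -- identification of the indicatrix
  have hnull : volume (W '' Gᶜ ∪ V '' D) = 0 :=
    measure_union_null (null_image W hW) ((hDc.image V).measure_zero _)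
  have hae : ∀ᵐ x : ℝ ∂volume, x ∉ W '' Gᶜ ∪ V '' D := measure_eq_zero_iff_ae_notMem.1 hnull
  have hset : ∀ x, x ∉ W '' Gᶜ ∪ V '' D →
      incSet V x t ∪ decSet V x t = τ '' {r | r ∈ τ ⁻¹' S ∩ G ∧ W r = x} := by
    intro x hx
    ext s
    constructor
    · intro hs
      have hs1 : s ∈ Ioc 0 t ∧ V s = x := by
        rcases hs with hs | hs
        · exact ⟨hs.1, hs.2.2.1⟩
        · exact ⟨hs.1, neg_injective hs.2.2.1⟩
      have hsW : W (F s) = x := by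
        rw [hWV s ⟨hs1.1.1.le, by linarith [hs1.1.2]⟩]; exact hs1.2
      have hsD : s ∉ D := fun h => hx (Or.inr ⟨s, h, hs1.2⟩)
      refine ⟨F s, ⟨⟨?_, ?_⟩, hsW⟩, hτFs s⟩
      · change τ (F s) ∈ S
        rw [hτFs]; exact ⟨hs1.1, hsD⟩
      · by_contra h
        exact hx (Or.inl ⟨F s, h, hsW⟩)
    · rintro ⟨r, ⟨⟨hr1, hr2⟩, hrx⟩, rfl⟩
      have hr1' : τ r ∈ S := hr1
      have hFr := hinvS r hr1'
      have hc : ContinuousAt F (τ r) := by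
        by_contra h; exact hr1'.2 h
      have hVx : V (τ r) = x := by
        rw [← hWV (τ r) ⟨hr1'.1.1.le, by linarith [hr1'.1.2]⟩, hFr, hrx]
      have hdW : HasDerivAt W (deriv W r) (F (τ r)) := by rw [hFr]; exact hr2.1.hasDerivAt
      rcases lt_or_gt_of_ne hr2.2 with h | h
      · right
        obtain ⟨h1, h2, h3⟩ := inc_of_deriv_pos (fun s => - V s) F (fun r => - W r) hF t (τ r)
          (- deriv W r) hr1'.1 (fun s hs => by rw [hWV s hs]) hc hdW.neg (by linarith)
        exact ⟨hr1'.1, h1, congrArg Neg.neg hVx, h2, h3⟩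
      · left
        obtain ⟨h1, h2, h3⟩ := inc_of_deriv_pos V F W hF t (τ r)
          (deriv W r) hr1'.1 hWV hc hdW h
        exact ⟨hr1'.1, h1, hVx, h2, h3⟩
  have hdisj : ∀ x, Disjoint (incSet V x t) (decSet V x t) := by
    intro x
    rw [Set.disjoint_left]
    rintro s ⟨hs, h0, -, -, ε, hε, h1⟩ ⟨-, -, -, -, ε', hε', h2⟩
    have hm : 0 < min ε ε' := lt_min hε hε'
    have ha : |s + min ε ε' / 2 - s| < min ε ε' := by
      rw [add_sub_cancel_left, abs_of_pos (by linarith)]; linarith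
    have hmem : s + min ε ε' / 2 ∈ Ici (0 : ℝ) := by
      simp only [mem_Ici]; linarith
    have e1 := (h1 _ hmem (ha.trans_le (min_le_left _ _))).2 (by linarith)
    have e2 := (h2 _ hmem (ha.trans_le (min_le_right _ _))).2 (by linarith)
    simp only at e2
    linarith
  have hNenc : ∀ x, x ∉ W '' Gᶜ ∪ V '' D →
      N x = (((incSet V x t).encard + (decSet V x t).encard : ℕ∞) : ℝ≥0∞) := by
    intro x hx
    rw [hN, ← encard_union_eq (hdisj x), hset x hx, InjOn.encard_image]
    intro r hr r' hr' h
    rw [← hinvS r hr.1.1, ← hinvS r' hr'.1.1, h]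
  have hNlt : ∀ᵐ x : ℝ ∂volume, N x < ∞ := ae_lt_top hNm hNtop
  have hfinae : ∀ᵐ x : ℝ ∂volume, (incSet V x t).Finite ∧ (decSet V x t).Finite := by
    filter_upwards [hae, hNlt] with x hx hlt
    rw [hNenc x hx] at hlt
    have h1 : (incSet V x t).encard + (decSet V x t).encard ≠ ⊤ := by
      intro h; rw [h] at hlt; simp at hlt
    rw [← encard_ne_top_iff, ← encard_ne_top_iff]
    constructor <;> intro h <;> rw [h] at h1 <;> simp at h1
  have hloc : (fun x => (absLocalTime V x t : ℝ)) =ᵐ[volume] fun x => (N x).toReal := by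
    filter_upwards [hae, hfinae] with x hx hf
    rw [hNenc x hx, ← hf.1.cast_ncard_eq, ← hf.2.cast_ncard_eq, absLocalTime]
    norm_cast
  refine ⟨hfinae, ?_, ?_⟩
  · exact (integrable_toReal_of_lintegral_ne_top hNm.aemeasurable hNtop).congr hloc.symm
  · intro A hA
    rw [integral_congr_ae (ae_restrict_of_ae hloc),
      integral_toReal hNm.aemeasurable (ae_restrict_of_ae hNlt), hmain A hA]
    have hE : MeasurableSet ((fun s => W (F s)) ⁻¹' A) := (hWm.comp hFm) hA
    have h1 : ∫ s in Set.Ioc (0 : ℝ) t, A.indicator (fun _ => (1 : ℝ)) (V s)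
        ∂μc.totalVariation = ∫ s in Set.Ioc (0 : ℝ) t,
          ((fun s => W (F s)) ⁻¹' A).indicator (fun _ => (1 : ℝ)) s ∂μc.totalVariation := by
      refine setIntegral_congr_fun measurableSet_Ioc fun s hs => ?_
      have h2 : V s = W (F s) := (hWV s ⟨hs.1.le, by linarith [hs.2]⟩).symm
      simp only [h2]
      rfl
    rw [h1, integral_indicator hE, Measure.restrict_restrict hE, setIntegral_const, inter_comm]
    simp [Measure.real]
end
end

section
/- Let V : [0,∞) → ℝ be a right-continuous function with left limits, of finite variation on every compact interval, and let t > 0. Then the function x ↦ ℓ^x(t), defined for Lebesgue-almost every x ∈ ℝ (namely, at every simple level x with x ≠ V(0) and x ≠ V(t)), is Lebesgue-measurable and belongs to L¹(dx). -/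
open MeasureTheory Set Filter
open scoped ENNReal NNReal

noncomputable section

namespace SLT

lemma rat_le {W : ℝ → ℝ} (hrc : ∀ s, ContinuousWithinAt W (Ioi s) s) {a b c : ℝ}
    (h : ∀ q : ℚ, a < q → (q : ℝ) < b → W q ≤ c) {r : ℝ} (ha : a < r) (hb : r < b) : W r ≤ c := by
  by_contra hc
  push Not at hc
  have h1 : ∀ᶠ u in nhdsWithin r (Ioi r), c < W u := (hrc r).eventually (lt_mem_nhds hc)
  obtain ⟨u, hu, hsub⟩ := (mem_nhdsGT_iff_exists_Ioo_subset).1 h1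
  obtain ⟨q, hq1, hq2⟩ := exists_rat_btwn (lt_min (show r < u from hu) hb)
  have h2 : c < W q := hsub ⟨hq1, hq2.trans_le (min_le_left _ _)⟩
  have := h q (ha.trans hq1) (hq2.trans_le (min_le_right _ _))
  linarith

lemma locmax {W : ℝ → ℝ} {a b r : ℝ} (ha : a < r) (hb : r < b)
    (h : ∀ s, a < s → s < b → W s ≤ W r) :
    W r ∈ range (fun p : ℚ × ℚ => sSup (W '' Ioo (p.1 : ℝ) p.2)) := by
  obtain ⟨p, hp1, hp2⟩ := exists_rat_btwn ha
  obtain ⟨q, hq1, hq2⟩ := exists_rat_btwn hb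
  refine ⟨(p, q), ?_⟩
  refine IsGreatest.csSup_eq ⟨⟨r, ⟨hp2, hq1⟩, rfl⟩, ?_⟩
  rintro _ ⟨s, hs, rfl⟩
  exact h s (hp1.trans hs.1) (hs.2.trans hq2)

lemma locmin {W : ℝ → ℝ} {a b r : ℝ} (ha : a < r) (hb : r < b)
    (h : ∀ s, a < s → s < b → W r ≤ W s) :
    W r ∈ range (fun p : ℚ × ℚ => sInf (W '' Ioo (p.1 : ℝ) p.2)) := by
  obtain ⟨p, hp1, hp2⟩ := exists_rat_btwn ha
  obtain ⟨q, hq1, hq2⟩ := exists_rat_btwn hb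
  refine ⟨(p, q), ?_⟩
  refine IsLeast.csInf_eq ⟨⟨r, ⟨hp2, hq1⟩, rfl⟩, ?_⟩
  rintro _ ⟨s, hs, rfl⟩
  exact h s (hp1.trans hs.1) (hs.2.trans hq2)

/-- values of local extrema (a countable superset) -/
def C (W : ℝ → ℝ) : Set ℝ :=
  range (fun p : ℚ × ℚ => sSup (W '' Ioo (p.1 : ℝ) p.2)) ∪
  range (fun p : ℚ × ℚ => sInf (W '' Ioo (p.1 : ℝ) p.2))

lemma C_countable (W : ℝ → ℝ) : (C W).Countable := (countable_range _).union (countable_range _)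

/-- uniform increase points -/
def E (W : ℝ → ℝ) (t e : ℝ) : Set ℝ :=
  {s | s ∈ Ioc 0 t ∧ ContinuousAt W s ∧ W s ∉ C W ∧
    ∀ q : ℚ, (s - e < q → (q : ℝ) < s → W q ≤ W s) ∧ (s < q → (q : ℝ) < s + e → W s ≤ W q)}

/-- increase points -/
def P (W : ℝ → ℝ) (s : ℝ) : Prop :=
  ContinuousAt W s ∧ ∃ ε > 0, ∀ r, (s - ε < r → r < s → W r < W s) ∧
    (s < r → r < s + ε → W s < W r)

lemma E_strict {W : ℝ → ℝ} (hrc : ∀ s, ContinuousWithinAt W (Ioi s) s) {t e s : ℝ}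
    (hs : s ∈ E W t e) (r : ℝ) : (s - e < r → r < s → W r < W s) ∧
    (s < r → r < s + e → W s < W r) := by
  obtain ⟨_, _, hC, hq⟩ := hs
  have h1 : ∀ r, s - e < r → r < s → W r ≤ W s := fun r ha hb =>
    rat_le hrc (fun q => (hq q).1) ha hb
  have hrc' : ∀ s, ContinuousWithinAt (fun u => - W u) (Ioi s) s := fun s => (hrc s).neg
  have h2 : ∀ r, s < r → r < s + e → W s ≤ W r := fun r ha hb =>
    neg_le_neg_iff.1 (rat_le hrc' (c := - W s) (fun q h h' => neg_le_neg ((hq q).2 h h')) ha hb)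
  refine ⟨fun ha hb => lt_of_le_of_ne (h1 r ha hb) fun h => hC (Or.inl ?_),
    fun ha hb => lt_of_le_of_ne (h2 r ha hb) fun h => hC (Or.inr ?_)⟩
  · rw [← h]; exact locmax ha hb (by rw [h]; exact h1)
  · rw [h]; exact locmin ha hb (by rw [← h]; exact h2)

lemma E_meas {W : ℝ → ℝ} (hm : Measurable W) (t e : ℝ) : MeasurableSet (E W t e) := by
  have h1 : MeasurableSet {s | ContinuousAt W s} := (IsGδ.setOfPred_continuousAt W).measurableSet
  have h2 : MeasurableSet {s | W s ∈ C W} := hm (C_countable W).measurableSet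
  have h3 : ∀ q : ℚ, MeasurableSet {s : ℝ | (s - e < q → (q : ℝ) < s → W q ≤ W s) ∧
      (s < q → (q : ℝ) < s + e → W s ≤ W q)} := by
    intro q
    have a1 : MeasurableSet {s : ℝ | s - e < q} := measurableSet_lt (by fun_prop) (by fun_prop)
    have a2 : MeasurableSet {s : ℝ | (q : ℝ) < s} := measurableSet_lt (by fun_prop) (by fun_prop)
    have a3 : MeasurableSet {s : ℝ | W q ≤ W s} := measurableSet_le (by fun_prop) (by fun_prop)
    have b1 : MeasurableSet {s : ℝ | s < q} := measurableSet_lt (by fun_prop) (by fun_prop)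
    have b2 : MeasurableSet {s : ℝ | (q : ℝ) < s + e} := measurableSet_lt (by fun_prop) (by fun_prop)
    have b3 : MeasurableSet {s : ℝ | W s ≤ W q} := measurableSet_le (by fun_prop) (by fun_prop)
    exact (a1.imp (a2.imp a3)).inter (b1.imp (b2.imp b3))
  have h4 := MeasurableSet.iInter h3
  have : E W t e = Ioc 0 t ∩ ({s | ContinuousAt W s} ∩ ({s | W s ∈ C W}ᶜ ∩
      ⋂ q : ℚ, {s : ℝ | (s - e < q → (q : ℝ) < s → W q ≤ W s) ∧
      (s < q → (q : ℝ) < s + e → W s ≤ W q)})) := by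
    ext s; simp [E]
  rw [this]
  exact measurableSet_Ioc.inter (h1.inter (h2.compl.inter h4))

lemma E_anti {W : ℝ → ℝ} {t e e' : ℝ} (h : e ≤ e') : E W t e' ⊆ E W t e := by
  rintro s ⟨h1, h2, h3, h4⟩
  exact ⟨h1, h2, h3, fun q => ⟨fun a b => (h4 q).1 (by linarith) b,
    fun a b => (h4 q).2 a (by linarith)⟩⟩

lemma iUnion_E {W : ℝ → ℝ} (hrc : ∀ s, ContinuousWithinAt W (Ioi s) s) {t : ℝ} (ht : 0 < t)
    {x : ℝ} (hx : x ∉ C W) :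
    {s | s ∈ Ioc 0 t ∧ W s = x ∧ P W s} = ⋃ m : ℕ, E W t (t / (m + 1)) ∩ W ⁻¹' {x} := by
  ext s
  simp only [mem_ofPred_eq, mem_iUnion, mem_inter_iff, mem_preimage, mem_singleton_iff]
  constructor
  · rintro ⟨hs, rfl, hc, ε, hε, h⟩
    obtain ⟨m, hm⟩ := exists_nat_gt (t / ε)
    have hm1 : (0 : ℝ) < m + 1 := by positivity
    have he : t / (m + 1) ≤ ε := by
      rw [div_le_iff₀ hm1]
      rw [div_lt_iff₀ hε] at hm
      nlinarith
    exact ⟨m, ⟨hs, hc, hx, fun q => ⟨fun a b => ((h q).1 (by linarith) b).le,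
      fun a b => ((h q).2 a (by linarith)).le⟩⟩, rfl⟩
  · rintro ⟨m, hE, rfl⟩
    exact ⟨hE.1, rfl, hE.2.1, t / (m + 1), by positivity, E_strict hrc hE⟩

/-- pieces -/
def J (W : ℝ → ℝ) (t e : ℝ) (k : ℕ) : Set ℝ := E W t e ∩ Ioc (k * e) ((k + 1) * e)

lemma J_inj {W : ℝ → ℝ} (hrc : ∀ s, ContinuousWithinAt W (Ioi s) s) (t e : ℝ) (k : ℕ) :
    InjOn W (J W t e k) := by
  have key : ∀ a ∈ J W t e k, ∀ b ∈ J W t e k, a < b → W a < W b := by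
    intro a ha b hb hab
    exact (E_strict hrc ha.1 b).2 hab (by linarith [ha.2.1, hb.2.2])
  intro a ha b hb hab
  rcases lt_trichotomy a b with h | h | h
  · exact absurd hab (key a ha b hb h).ne
  · exact h
  · exact absurd hab (key b hb a ha h).ne'

lemma J_meas {W : ℝ → ℝ} (hm : Measurable W) (t e : ℝ) (k : ℕ) : MeasurableSet (J W t e k) :=
  (E_meas hm t e).inter measurableSet_Ioc

lemma count_E {W : ℝ → ℝ} (hm : Measurable W) (hrc : ∀ s, ContinuousWithinAt W (Ioi s) s)
    {t : ℝ} (ht : 0 < t) (m : ℕ) (x : ℝ) :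
    Measure.count (E W t (t / (m + 1)) ∩ W ⁻¹' {x}) =
      ∑ k ∈ Finset.range (m + 1), (W '' J W t (t / (m + 1)) k).indicator (fun _ => (1 : ℝ≥0∞)) x := by
  set e := t / ((m : ℝ) + 1) with he
  have he0 : 0 < e := by positivity
  have hmt : (m + 1) * e = t := by rw [he]; field_simp
  have hU : E W t e ∩ W ⁻¹' {x} = ⋃ k ∈ Finset.range (m + 1), J W t e k ∩ W ⁻¹' {x} := by
    ext s
    simp only [mem_iUnion, Finset.mem_range, mem_inter_iff, exists_prop, J]
    constructor
    · rintro ⟨hE, hx⟩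
      have hs := hE.1
      have hse : 0 < s / e := div_pos hs.1 he0
      have hc : 0 < ⌈s / e⌉₊ := Nat.ceil_pos.2 hse
      obtain ⟨k, hk⟩ : ∃ k, ⌈s / e⌉₊ = k + 1 := ⟨_, (Nat.succ_pred_eq_of_pos hc).symm⟩
      have h1 : s / e ≤ (k : ℝ) + 1 := by have := Nat.le_ceil (s / e); rw [hk] at this; exact_mod_cast this
      have h2 : (k : ℝ) < s / e := Nat.lt_ceil.1 (by omega)
      refine ⟨k, ?_, ⟨hE, ?_, ?_⟩, hx⟩
      · have : ⌈s / e⌉₊ ≤ m + 1 := by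
          apply Nat.ceil_le.2
          rw [div_le_iff₀ he0]; push_cast; rw [hmt]; exact hs.2
        omega
      · rwa [lt_div_iff₀ he0] at h2
      · rwa [div_le_iff₀ he0] at h1
    · rintro ⟨k, _, ⟨hE, _⟩, hx⟩
      exact ⟨hE, hx⟩
  rw [hU, measure_biUnion_finset]
  · refine Finset.sum_congr rfl fun k _ => ?_
    by_cases hx : x ∈ W '' J W t e k
    · rw [indicator_of_mem hx]
      obtain ⟨s, hs, rfl⟩ := hx
      have : J W t e k ∩ W ⁻¹' {W s} = {s} := by
        ext r
        simp only [mem_inter_iff, mem_preimage, mem_singleton_iff]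
        constructor
        · rintro ⟨hr, h⟩; exact J_inj hrc t e k hr hs h
        · rintro rfl; exact ⟨hs, rfl⟩
      rw [this, Measure.count_singleton]
    · rw [indicator_of_notMem hx, Measure.count_eq_zero_iff]
      ext r
      simp only [mem_inter_iff, mem_preimage, mem_singleton_iff, mem_empty_iff_false, iff_false]
      rintro ⟨hr, h⟩
      exact hx ⟨r, hr, h⟩
  · intro k _ l _ hkl
    have key : ∀ k l : ℕ, k < l → Disjoint (J W t e k ∩ W ⁻¹' {x}) (J W t e l ∩ W ⁻¹' {x}) := by
      intro k l h
      rw [Set.disjoint_left]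
      rintro s ⟨⟨_, h1⟩, _⟩ ⟨⟨_, h2⟩, _⟩
      have : ((k : ℝ) + 1) ≤ l := by exact_mod_cast h
      have := mul_le_mul_of_nonneg_right this he0.le
      linarith [h1.2, h2.1]
    rcases lt_or_gt_of_ne hkl with h | h
    · exact key k l h
    · exact (key l k h).symm
  · intro k _
    exact (J_meas hm t e k).inter (hm (measurableSet_singleton x))

lemma lintegral_count_E {W : ℝ → ℝ} (hm : Measurable W)
    (hrc : ∀ s, ContinuousWithinAt W (Ioi s) s) {t : ℝ} (ht : 0 < t) (m : ℕ) :
    Measurable (fun x => Measure.count (E W t (t / (m + 1)) ∩ W ⁻¹' {x})) ∧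
    ∫⁻ x, Measure.count (E W t (t / (m + 1)) ∩ W ⁻¹' {x}) ≤ eVariationOn W (Icc 0 t) := by
  simp_rw [count_E hm hrc ht m]
  set e := t / ((m : ℝ) + 1) with he
  have he0 : 0 < e := by positivity
  have hmt : (m + 1) * e = t := by rw [he]; field_simp
  have hJ : ∀ k, MeasurableSet (W '' J W t e k) := fun k =>
    (J_meas hm t e k).image_of_measurable_injOn hm (J_inj hrc t e k)
  have hI : ∀ k, Measurable ((W '' J W t e k).indicator (fun _ => (1 : ℝ≥0∞))) := fun k =>
    measurable_const.indicator (hJ k)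
  refine ⟨Finset.measurable_fun_sum _ fun k _ => hI k, ?_⟩
  rw [lintegral_finsetSum _ fun k _ => hI k]
  have hmono : Monotone (fun k : ℕ => (k : ℝ) * e) := by
    intro a b h
    exact mul_le_mul_of_nonneg_right (by exact_mod_cast h) he0.le
  have hsum := eVariationOn.sum' W hmono (n := m + 1)
  simp only [Nat.cast_zero, zero_mul, Nat.cast_add, Nat.cast_one, hmt] at hsum
  rw [← hsum]
  refine Finset.sum_le_sum fun k _ => ?_
  rw [lintegral_indicator_const (hJ k), one_mul]
  refine (Real.volume_le_diam _).trans ?_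
  refine Metric.ediam_le ?_
  rintro _ ⟨a, ha, rfl⟩ _ ⟨b, hb, rfl⟩
  exact eVariationOn.edist_le W (Ioc_subset_Icc_self ha.2) (Ioc_subset_Icc_self hb.2)

lemma core {W : ℝ → ℝ} (hm : Measurable W)
    (hrc : ∀ s, ContinuousWithinAt W (Ioi s) s) {t : ℝ} (ht : 0 < t)
    (hbv : eVariationOn W (Icc 0 t) ≠ ⊤) :
    AEMeasurable (fun x => Measure.count {s | s ∈ Ioc 0 t ∧ W s = x ∧ P W s}) volume ∧
    ∫⁻ x, Measure.count {s | s ∈ Ioc 0 t ∧ W s = x ∧ P W s} ≠ ⊤ := by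
  have hmono : ∀ x, Monotone fun m : ℕ => E W t (t / (m + 1)) ∩ W ⁻¹' {x} := by
    intro x a b h
    refine inter_subset_inter_left _ (E_anti ?_)
    gcongr
  have hae : (fun x => Measure.count {s | s ∈ Ioc 0 t ∧ W s = x ∧ P W s}) =ᵐ[volume]
      fun x => ⨆ m : ℕ, Measure.count (E W t (t / (m + 1)) ∩ W ⁻¹' {x}) := by
    have : ∀ᵐ x : ℝ, x ∉ C W := (C_countable W).ae_notMem volume
    filter_upwards [this] with x hx
    rw [iUnion_E hrc ht hx, (hmono x).measure_iUnion]
  refine ⟨⟨_, Measurable.iSup fun m => (lintegral_count_E hm hrc ht m).1, hae⟩, ?_⟩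
  rw [lintegral_congr_ae hae, lintegral_iSup (fun m => (lintegral_count_E hm hrc ht m).1)
    (fun a b h x => measure_mono (hmono x h))]
  exact ne_top_of_le_ne_top hbv (iSup_le fun m => (lintegral_count_E hm hrc ht m).2)

lemma incSet_eq (V : ℝ → ℝ) (x t : ℝ) :
    incSet V x t = {s | s ∈ Ioc 0 t ∧ V (max s 0) = x ∧ P (fun u => V (max u 0)) s} := by
  ext s
  simp only [incSet, IncreasesThrough, mem_ofPred_eq, P]
  constructor
  · rintro ⟨hs, h0, hx, hc, ε, hε, h⟩
    have hm : max s 0 = s := max_eq_left h0.le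
    refine ⟨hs, by rw [hm, hx], ?_, min ε s, lt_min hε h0, fun r => ⟨fun a b => ?_, fun a b => ?_⟩⟩
    · have hcV : ContinuousAt V s := hc.continuousAt (Ici_mem_nhds h0)
      refine hcV.congr ?_
      filter_upwards [lt_mem_nhds h0] with u hu
      rw [max_eq_left hu.le]
    · have h1 := min_le_left ε s
      have h2 := min_le_right ε s
      have hr : 0 ≤ r := by linarith
      rw [hm, max_eq_left hr]
      exact (h r hr (by rw [abs_lt]; constructor <;> linarith)).1 b
    · have h1 := min_le_left ε s
      have hr : 0 ≤ r := by linarith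
      rw [hm, max_eq_left hr]
      exact (h r hr (by rw [abs_lt]; constructor <;> linarith)).2 a
  · rintro ⟨hs, hx, hc, ε, hε, h⟩
    have h0 := hs.1
    have hm : max s 0 = s := max_eq_left h0.le
    rw [hm] at hx
    refine ⟨hs, h0, hx, ?_, ε, hε, fun r hr har => ?_⟩
    · refine ContinuousAt.continuousWithinAt (hc.congr ?_)
      filter_upwards [lt_mem_nhds h0] with u hu
      rw [max_eq_left hu.le]
    · have := h r
      rw [hm, max_eq_left (show (0 : ℝ) ≤ r from hr)] at this
      rw [abs_lt] at har
      exact ⟨fun b => this.1 (by linarith) b, fun a => this.2 a (by linarith)⟩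

lemma main (V : ℝ → ℝ)
    (hV_rc : ∀ s ∈ Set.Ici (0 : ℝ), ContinuousWithinAt V (Set.Ici s) s)
    (hV_bv : ∀ T : ℝ, BoundedVariationOn V (Set.Icc 0 T))
    (t : ℝ) (ht : 0 < t) :
    (∀ᵐ x : ℝ ∂volume, (incSet V x t).Finite) ∧
      Integrable (fun x : ℝ => ((incSet V x t).ncard : ℝ)) volume := by
  have hmx : Monotone (fun s : ℝ => max s 0) := fun a b h => max_le_max_right 0 h
  have hm : Measurable (fun s => V (max s 0)) := by
    have hl : LocallyBoundedVariationOn (fun s => V (max s 0)) univ := by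
      intro a b _ _
      refine ne_top_of_le_ne_top (hV_bv (max b 0))
        (eVariationOn.comp_le_of_monotoneOn V (fun s : ℝ => max s 0) (hmx.monotoneOn _) ?_)
      rintro s ⟨_, hs⟩
      exact ⟨le_max_right _ _, hmx hs.2⟩
    obtain ⟨p, q, hp, hq, h⟩ := hl.exists_monotoneOn_sub_monotoneOn
    rw [h]
    exact (monotoneOn_univ.1 hp).measurable.sub (monotoneOn_univ.1 hq).measurable
  have hrc : ∀ s, ContinuousWithinAt (fun s => V (max s 0)) (Ioi s) s := by
    intro s
    refine ContinuousWithinAt.comp (t := Ici (max s 0)) (hV_rc _ (mem_Ici.2 (le_max_right _ _)))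
      (by fun_prop) ?_
    intro u hu
    exact hmx (le_of_lt hu)
  have hbv : eVariationOn (fun s => V (max s 0)) (Icc 0 t) ≠ ⊤ := by
    rw [eVariationOn.congr (g := V)]
    · exact hV_bv t
    · intro s hs
      simp [max_eq_left hs.1]
  obtain ⟨h1, h2⟩ := core hm hrc ht hbv
  simp only [← incSet_eq] at h1 h2
  constructor
  · filter_upwards [ae_lt_top' h1 h2] with x hx
    exact Measure.count_apply_lt_top.1 hx
  · refine (integrable_toReal_of_lintegral_ne_top h1 h2).congr ?_
    filter_upwards [ae_lt_top' h1 h2] with x hx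
    have hf := Measure.count_apply_lt_top.1 hx
    rw [Measure.count_apply_finite _ hf, ENNReal.toReal_natCast, ncard_eq_toFinset_card _ hf]

end SLT

/-- Let `V` be càdlàg on `[0,∞)` with finite variation on compacts and
`t > 0`. The function `x ↦ ℓ^x(t)` (defined for Lebesgue-almost every `x`, in particular
at every simple level `x` with `x ≠ V 0`, `x ≠ V t`) is Lebesgue-measurable and belongs
to `L¹(dx)`: it is a.e. well defined, a.e.-measurable, and integrable. -/
theorem signedLocalTime_integrable
    (V Vm : ℝ → ℝ)
    (hV_rc : ∀ s ∈ Set.Ici (0 : ℝ), ContinuousWithinAt V (Set.Ici s) s)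
    (hV_ll : ∀ s ∈ Set.Ioi (0 : ℝ),
      Filter.Tendsto V (nhdsWithin s (Set.Iio s)) (nhds (Vm s)))
    (hV_bv : ∀ T : ℝ, BoundedVariationOn V (Set.Icc 0 T))
    (t : ℝ) (ht : 0 < t) :
    (∀ᵐ x : ℝ ∂volume, (incSet V x t).Finite ∧ (decSet V x t).Finite) ∧
      AEMeasurable (fun x : ℝ => (signedLocalTime V x t : ℝ)) volume ∧
      MeasureTheory.Integrable (fun x : ℝ => (signedLocalTime V x t : ℝ)) volume := by
  obtain ⟨h1, h2⟩ := SLT.main V hV_rc hV_bv t ht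
  obtain ⟨h3, h4⟩ := SLT.main (fun s => -V s) (fun s hs => (hV_rc s hs).neg)
    (fun T => by
      have h := hV_bv T
      unfold BoundedVariationOn eVariationOn at h ⊢
      simpa only [edist_neg_neg] using h) t ht
  have hd : ∀ x, decSet V x t = incSet (fun s => -V s) (-x) t := fun x => rfl
  have h5 : ∀ᵐ x : ℝ ∂volume, (decSet V x t).Finite := by
    simp only [hd]
    exact (Measure.measurePreserving_neg (volume : Measure ℝ)).quasiMeasurePreserving.ae h3
  have h6 : Integrable (fun x : ℝ => ((decSet V x t).ncard : ℝ)) volume := by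
    simp only [hd]
    exact h4.comp_neg
  have h7 : Integrable (fun x : ℝ => (signedLocalTime V x t : ℝ)) volume := by
    refine (h2.sub h6).congr (Eventually.of_forall fun x => ?_)
    simp [signedLocalTime]
  exact ⟨h1.and h5, h7.aemeasurable, h7⟩
end
end

section
/- Let V : [0,∞) → ℝ be a right-continuous function with left limits, of finite variation on every compact interval, with canonical decomposition V = V^c + V^d into its continuous part V^c and pure-jump part V^d. Then for every t > 0 and all bounded measurable functions f : ℝ → ℝ and g : [0,t] → ℝ, ∫_0^t f(V(s)) g(s) V^c(ds) = ∫_ℝ ( ∫_{[0,t]} g(s) ℓ^x(ds) ) f(x) dx, where for Lebesgue-almost every x the signed measure ℓ^x(ds) is the Stieltjes measure of the right-continuous step function s ↦ ℓ^x(s). -/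
open MeasureTheory Set Filter
open scoped ENNReal NNReal

noncomputable section

lemma aux_time_change (V : ℝ → ℝ) (T : ℝ) (hT : 0 ≤ T)
    (hrc : ∀ s ∈ Set.Ici (0 : ℝ), ContinuousWithinAt V (Set.Ici s) s)
    (hbv : BoundedVariationOn V (Set.Icc 0 T)) :
    ∃ A U : ℝ → ℝ, StrictMono A ∧ (∀ s, ContinuousWithinAt A (Set.Ici s) s) ∧
      Tendsto A atTop atTop ∧ Tendsto A atBot atBot ∧ LipschitzWith 1 U ∧
      ∀ s ∈ Set.Icc 0 T, U (A s) = V s := by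
  set c : ℝ → ℝ := fun s => max 0 (min s T) with hc
  have hcm : Monotone c := fun a b hab => by simp only [hc]; gcongr
  have hcc : Continuous c := by fun_prop
  have hcT : ∀ s, c s ∈ Icc 0 T := fun s => ⟨le_max_left _ _, max_le hT (min_le_right _ _)⟩
  set W : ℝ → ℝ := V ∘ c with hW
  have hWbv : BoundedVariationOn W univ := by
    have := eVariationOn.comp_le_of_monotoneOn V (t := univ) (s := Icc 0 T) c (hcm.monotoneOn _)
      (fun s _ => hcT s)
    exact ne_top_of_le_ne_top hbv this
  have hWrc : ∀ s, ContinuousWithinAt W (Ici s) s := by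
    intro s
    exact (hrc (c s) (hcT s).1).comp hcc.continuousWithinAt (fun x hx => hcm hx)
  set v := variationOnFromTo W univ 0 with hv
  have hvm : Monotone v := by
    have := variationOnFromTo.monotoneOn hWbv.locallyBoundedVariationOn (mem_univ (0:ℝ))
    exact fun a b h => this (mem_univ _) (mem_univ _) h
  have hvrc : ∀ s, ContinuousWithinAt v (Ici s) s := fun s =>
    hWbv.continuousWithinAt_variationOnFromTo_Ici (hWrc s)
  have hvd : ∀ a b, a ≤ b → |W b - W a| ≤ v b - v a := fun a b hab =>
    variationOnFromTo.abs_sub_le_sub_of_le hWbv.locallyBoundedVariationOn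
      (mem_univ _) (mem_univ _) (mem_univ _) hab
  have hv0 : v 0 = 0 := variationOnFromTo.self _ _ _
  set A : ℝ → ℝ := fun s => s + v s with hA
  have hAs : StrictMono A := fun a b hab => by
    simp only [hA]; have := hvm hab.le; linarith
  have hinj : Function.Injective A := hAs.injective
  have hlip : LipschitzOnWith 1 (W ∘ Function.invFun A) (range A) := by
    apply LipschitzOnWith.of_dist_le_mul
    rintro _ ⟨a, rfl⟩ _ ⟨b, rfl⟩
    simp only [Function.comp, Function.leftInverse_invFun hinj a,
      Function.leftInverse_invFun hinj b, Real.dist_eq, NNReal.coe_one, one_mul]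
    rcases le_total a b with h | h
    · rw [abs_sub_comm, abs_sub_comm (A a)]
      refine (hvd a b h).trans (le_trans ?_ (le_abs_self _)); simp only [hA]; linarith
    · refine (hvd b a h).trans (le_trans ?_ (le_abs_self _)); simp only [hA]; linarith
  obtain ⟨U, hU, hUe⟩ := hlip.extend_real
  refine ⟨A, U, hAs, fun s => continuousWithinAt_id.add (hvrc s), ?_, ?_, hU, ?_⟩
  · refine tendsto_atTop_mono' _ ?_ tendsto_id
    filter_upwards [eventually_ge_atTop 0] with s hs
    have := hvm hs; simp only [hA, id]; linarith
  · refine tendsto_atBot_mono' _ ?_ tendsto_id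
    filter_upwards [eventually_le_atBot 0] with s hs
    have := hvm hs; simp only [hA, id]; linarith
  · intro s hs
    rw [← hUe (mem_range_self s)]
    simp only [Function.comp, Function.leftInverse_invFun hinj s, hW, hc]
    rw [min_eq_left hs.2, max_eq_right hs.1]

lemma aux_phi (A : ℝ → ℝ) (hA : StrictMono A) (hrc : ∀ s, ContinuousWithinAt A (Set.Ici s) s)
    (htop : Tendsto A atTop atTop) (hbot : Tendsto A atBot atBot) :
    ∃ φ : ℝ → ℝ, ∀ y s, φ y ≤ s ↔ y ≤ A s := by
  refine ⟨fun y => sInf {s | y ≤ A s}, fun y s => ?_⟩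
  have hne : {s | y ≤ A s}.Nonempty := (htop.eventually_ge_atTop y).exists
  have hbd : BddBelow {s | y ≤ A s} := by
    obtain ⟨b, hb⟩ := (hbot.eventually_lt_atBot y).exists
    exact ⟨b, fun s hs => by
      by_contra h
      have := hA (not_le.1 h)
      simp only [mem_ofPred_eq] at hs
      linarith⟩
  constructor
  · intro h
    refine le_trans ?_ (hA.monotone h)
    set u := sInf {s | y ≤ A s}
    have h1 : Tendsto A (nhdsWithin u (Ioi u)) (nhds (A u)) :=
      (hrc u).mono_left (nhdsWithin_mono _ Ioi_subset_Ici_self)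
    refine ge_of_tendsto h1 ?_
    filter_upwards [self_mem_nhdsWithin] with x hx
    obtain ⟨z, hz, hzx⟩ := exists_lt_of_csInf_lt hne hx
    exact le_trans hz (hA.monotone hzx.le)
  · intro h
    exact csInf_le hbd h

lemma aux_gap (A U φ V Vm : ℝ → ℝ) (hA : StrictMono A) (hφ : ∀ y s, φ y ≤ s ↔ y ≤ A s)
    (hU : LipschitzWith 1 U) (a b D : ℝ) (hab : a ≤ b)
    (hUV : ∀ s ∈ Icc a b, U (A s) = V s)
    (hVm : ∀ u ∈ Ioc a b, Tendsto V (nhdsWithin u (Iio u)) (nhds (Vm u)))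
    (hD : HasSum (fun u : Ioc a b => V u.1 - Vm u.1) D) :
    ∫ y in {y | A (φ y) = y} ∩ Ioc (A a) (A b), deriv U y = V b - V a - D := by
  have hφm : Monotone φ := fun x y hxy => (hφ _ _).2 (hxy.trans ((hφ y _).1 le_rfl))
  have hRm : MeasurableSet {y | A (φ y) = y} :=
    measurableSet_eq_fun (hA.monotone.measurable.comp hφm.measurable) measurable_id
  set R := {y | A (φ y) = y} with hR
  have ftc : ∀ x y, x ≤ y → ∫ z in Ioc x y, deriv U z = U y - U x := by
    intro x y hxy
    rw [← intervalIntegral.integral_of_le hxy]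
    exact (hU.lipschitzOnWith (s := uIcc x y)).absolutelyContinuousOnInterval.integral_deriv_eq_sub
  have hint : ∀ x y, IntegrableOn (deriv U) (Ioc x y) := by
    intro x y
    apply Measure.integrableOn_of_bounded (M := 1) (by simp)
      (measurable_deriv U).aestronglyMeasurable
    filter_upwards with z
    simpa using norm_deriv_le_of_lipschitz hU (x₀ := z)
  have hleft : ∀ u ∈ Ioc a b, U (Function.leftLim A u) = Vm u := by
    intro u hu
    have h1 : Tendsto A (nhdsWithin u (Iio u)) (nhds (Function.leftLim A u)) :=
      hA.monotone.tendsto_leftLim u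
    have h2 := (hU.continuous.tendsto (Function.leftLim A u)).comp h1
    refine tendsto_nhds_unique (h2.congr' ?_) (hVm u hu)
    filter_upwards [Ioo_mem_nhdsLT hu.1] with s hs
    exact hUV s ⟨hs.1.le, hs.2.le.trans hu.2⟩
  set C : Set (Ioc a b) := {u | ¬ ContinuousAt A u.1} with hC
  have hCc : Countable C := by
    have := hA.monotone.countable_not_continuousAt.preimage
      (Subtype.val_injective (p := fun x => x ∈ Ioc a b))
    exact this.to_subtype
  set S : C → Set ℝ := fun u => φ ⁻¹' {u.1.1} \ R with hS
  have hSm : ∀ u, MeasurableSet (S u) := fun u =>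
    (hφm.measurable (measurableSet_singleton _)).diff hRm
  have hSd : Pairwise (Function.onFun Disjoint S) := by
    intro u v huv
    rw [Function.onFun, Set.disjoint_left]
    rintro y ⟨hy1, -⟩ ⟨hy2, -⟩
    apply huv
    apply Subtype.ext; apply Subtype.ext
    exact (mem_singleton_iff.1 hy1).symm.trans (mem_singleton_iff.1 hy2)
  have hlow : ∀ y, Function.leftLim A (φ y) ≤ y := by
    intro y
    refine le_of_tendsto (hA.monotone.tendsto_leftLim (φ y)) ?_
    filter_upwards [self_mem_nhdsWithin] with s hs
    by_contra h
    exact absurd ((hφ y s).2 (not_le.1 h).le) (not_le.2 hs)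
  have hup : ∀ y, y ≤ A (φ y) := fun y => (hφ y _).1 le_rfl
  have hSu : (⋃ u, S u) = Ioc (A a) (A b) \ R := by
    ext y
    simp only [mem_iUnion, hS]
    have hmem : y ∈ Ioc (A a) (A b) ↔ φ y ∈ Ioc a b := by
      simp only [mem_Ioc, hφ, ← not_le]
    constructor
    · rintro ⟨u, hu, hy⟩
      rw [mem_preimage, mem_singleton_iff] at hu
      exact ⟨hmem.2 (hu ▸ u.1.2), hy⟩
    · rintro ⟨hy, hyR⟩
      refine ⟨⟨⟨φ y, hmem.1 hy⟩, ?_⟩, rfl, hyR⟩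
      intro hcont
      apply hyR
      have := hcont.continuousWithinAt (s := Iio (φ y))
      have h3 := tendsto_nhds_unique this (hA.monotone.tendsto_leftLim (φ y))
      exact le_antisymm (h3 ▸ hlow y) (hup y)
  have hSi : ∀ u : C, ∫ y in S u, deriv U y = V u.1.1 - Vm u.1.1 := by
    intro u
    have hu := u.1.2
    have hle : Function.leftLim A u.1.1 ≤ A u.1.1 := hA.monotone.leftLim_le le_rfl
    have h1 : S u =ᵐ[volume] Ioc (Function.leftLim A u.1.1) (A u.1.1) := by
      have h2 : Ioo (Function.leftLim A u.1.1) (A u.1.1) ⊆ S u := by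
        intro y hy
        have : φ y = u.1.1 := by
          apply le_antisymm ((hφ _ _).2 hy.2.le)
          by_contra h
          have h4 := hA.monotone.le_leftLim (not_le.1 h)
          exact absurd (hup y) (not_le.2 (h4.trans_lt hy.1))
        refine ⟨this, fun h => ?_⟩
        rw [hR, mem_ofPred_eq, this] at h
        exact hy.2.ne' h
      have h3 : S u ⊆ Icc (Function.leftLim A u.1.1) (A u.1.1) := by
        rintro y ⟨hy, -⟩
        rw [mem_preimage, mem_singleton_iff] at hy
        rw [← hy]
        exact ⟨hlow y, hup y⟩
      refine EventuallyLE.antisymm ?_ ?_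
      · exact (LE.le.eventuallyLE h3).trans Ioc_ae_eq_Icc.symm.le
      · exact Ioo_ae_eq_Ioc.symm.le.trans (LE.le.eventuallyLE h2)
    rw [setIntegral_congr_set h1, ftc _ _ hle, hleft _ hu, hUV _ ⟨hu.1.le, hu.2⟩]
  have hsum := hasSum_integral_iUnion (f := deriv U) (μ := volume) hSm hSd
    (by rw [hSu]; exact (hint _ _).mono_set sdiff_subset)
  simp only [hSi] at hsum
  have hsup : Function.support (fun u : Ioc a b => V u.1 - Vm u.1) ⊆ C := by
    intro u hu hcont
    apply hu
    have h3 := tendsto_nhds_unique (hcont.continuousWithinAt (s := Iio u.1))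
      (hA.monotone.tendsto_leftLim u.1)
    simp only
    rw [← hleft _ u.2, ← h3, hUV _ ⟨u.2.1.le, u.2.2⟩, sub_self]
  have hD2 := (hasSum_subtype_iff_of_support_subset hsup).2 hD
  have hDeq : ∫ y in Ioc (A a) (A b) \ R, deriv U y = D := by
    rw [← hSu]; exact hsum.unique hD2
  have := integral_inter_add_sdiff (f := deriv U) hRm (hint (A a) (A b))
  rw [hDeq, ftc _ _ (hA.monotone hab), hUV _ ⟨hab, le_rfl⟩, hUV _ ⟨le_rfl, hab⟩] at this
  rw [inter_comm]
  linarith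

lemma aux_signed (μ : SignedMeasure ℝ) (K : Set ℝ) (hK : MeasurableSet K) (hKf : volume K ≠ ⊤)
    (ψ φ : ℝ → ℝ) (hψ : Measurable ψ) (hψb : ∀ y, |ψ y| ≤ 1) (hφ : Measurable φ) (t : ℝ)
    (hKt : K ⊆ φ ⁻¹' Ioc 0 t)
    (h : ∀ a b : ℝ, 0 ≤ a → a ≤ b → b ≤ t → μ (Ioc a b) = ∫ y in K ∩ φ ⁻¹' (Ioc a b), ψ y)
    (F : ℝ → ℝ) (hF : Measurable F) (hFb : ∃ C : ℝ, ∀ s, |F s| ≤ C) :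
    signedIntegral μ (Ioc 0 t) F = ∫ y in K, F (φ y) * ψ y := by
  obtain ⟨C, hC⟩ := hFb
  have hKf' : Fact (volume K < ⊤) := ⟨hKf.lt_top⟩
  have key : ∀ ψ' : ℝ → ℝ, Measurable ψ' → (∀ y, |ψ' y| ≤ 1) →
      IsFiniteMeasure (((volume.restrict K).withDensity fun y => ENNReal.ofReal (ψ' y)).map φ) ∧
      ∫ s, F s ∂(((volume.restrict K).withDensity fun y => ENNReal.ofReal (ψ' y)).map φ) =
        ∫ y in K, max (ψ' y) 0 * F (φ y) := by
    intro ψ' hm hb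
    constructor
    · have : IsFiniteMeasure ((volume.restrict K).withDensity fun y => ENNReal.ofReal (ψ' y)) := by
        apply isFiniteMeasure_withDensity
        refine ne_top_of_le_ne_top (b := ∫⁻ y in K, 1) (by simpa using hKf) ?_
        refine lintegral_mono fun y => ?_
        simpa using (le_abs_self _).trans (hb y)
      infer_instance
    · rw [integral_map hφ.aemeasurable hF.aestronglyMeasurable,
        integral_withDensity_eq_integral_toReal_smul (by fun_prop) (by simp)]
      simp [ENNReal.toReal_ofReal']
  obtain ⟨hPf, hPi⟩ := key ψ hψ hψb
  obtain ⟨hNf, hNi⟩ := key (fun y => -ψ y) hψ.neg (by simpa using hψb)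
  set P := ((volume.restrict K).withDensity fun y => ENNReal.ofReal (ψ y)).map φ with hP
  set N := ((volume.restrict K).withDensity fun y => ENNReal.ofReal (-ψ y)).map φ with hN
  set p := μ.toJordanDecomposition.posPart with hp
  set n := μ.toJordanDecomposition.negPart with hn
  have hψi : IntegrableOn ψ K := Measure.integrableOn_of_bounded (M := 1) hKf
      hψ.aestronglyMeasurable (by filter_upwards with z; simpa using hψb z)
  have hbase : ∀ a b : ℝ, 0 ≤ a → a ≤ b → b ≤ t →
      p (Ioc a b) + N (Ioc a b) = n (Ioc a b) + P (Ioc a b) := by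
    intro a b ha hab hb
    have h1 : μ (Ioc a b) = p.real (Ioc a b) - n.real (Ioc a b) := by
      conv_lhs => rw [← SignedMeasure.toSignedMeasure_toJordanDecomposition μ]
      simp [JordanDecomposition.toSignedMeasure, measurableSet_Ioc, p, n]
    have hms : MeasurableSet (φ ⁻¹' Ioc a b) := hφ measurableSet_Ioc
    have h2 : ∫ y in K ∩ φ ⁻¹' (Ioc a b), ψ y = P.real (Ioc a b) - N.real (Ioc a b) := by
      rw [integral_eq_lintegral_pos_part_sub_lintegral_neg_part (hψi.mono_set inter_subset_left)]
      simp only [hP, hN, Measure.real]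
      rw [Measure.map_apply hφ measurableSet_Ioc, Measure.map_apply hφ measurableSet_Ioc,
        withDensity_apply _ hms, withDensity_apply _ hms, Measure.restrict_restrict hms,
        inter_comm]
    have h3 := h a b ha hab hb
    rw [h1, h2] at h3
    rw [← ENNReal.toReal_eq_toReal_iff' (by finiteness) (by finiteness),
      ENNReal.toReal_add (by finiteness) (by finiteness),
      ENNReal.toReal_add (by finiteness) (by finiteness)]
    simp only [Measure.real] at h3
    linarith
  have hPt : ∀ ψ' : ℝ → ℝ, ∀ S, MeasurableSet S →
      (((volume.restrict K).withDensity fun y => ENNReal.ofReal (ψ' y)).map φ) S =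
      (((volume.restrict K).withDensity fun y => ENNReal.ofReal (ψ' y)).map φ) (S ∩ Ioc 0 t) := by
    intro ψ' S hS
    rw [Measure.map_apply hφ hS, Measure.map_apply hφ (hS.inter measurableSet_Ioc),
      withDensity_apply _ (hφ hS), withDensity_apply _ (hφ (hS.inter measurableSet_Ioc)),
      Measure.restrict_restrict (hφ hS),
      Measure.restrict_restrict (hφ (hS.inter measurableSet_Ioc))]
    congr 2
    ext y
    simp only [mem_inter_iff, mem_preimage]
    constructor
    · rintro ⟨h1, h2⟩; exact ⟨⟨h1, hKt h2⟩, h2⟩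
    · rintro ⟨⟨h1, -⟩, h2⟩; exact ⟨h1, h2⟩
  have heq : p.restrict (Ioc 0 t) + N = n.restrict (Ioc 0 t) + P := by
    apply Measure.ext_of_Ioc
    intro a b hab
    simp only [Measure.coe_add, Pi.add_apply, Measure.restrict_apply measurableSet_Ioc]
    rw [hN, hPt _ _ measurableSet_Ioc, hP, hPt _ _ measurableSet_Ioc, Ioc_inter_Ioc]
    by_cases hle : max a 0 ≤ min b t
    · exact hbase _ _ (le_max_right _ _) hle (min_le_right _ _)
    · rw [Ioc_eq_empty (fun h => hle h.le)]; simp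
  have hFi : ∀ m : Measure ℝ, IsFiniteMeasure m → Integrable F m := fun m _ =>
    Integrable.of_bound hF.aestronglyMeasurable C (by filter_upwards with z; simpa using hC z)
  have h5 : ∫ s, F s ∂(p.restrict (Ioc 0 t) + N) = ∫ s, F s ∂(n.restrict (Ioc 0 t) + P) := by
    rw [heq]
  rw [integral_add_measure (hFi _ inferInstance) (hFi _ inferInstance),
    integral_add_measure (hFi _ inferInstance) (hFi _ inferInstance), hPi, hNi] at h5
  have hbi : ∀ ψ' : ℝ → ℝ, Measurable ψ' → (∀ y, |ψ' y| ≤ 1) →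
      IntegrableOn (fun y => max (ψ' y) 0 * F (φ y)) K := by
    intro ψ' hm hb
    apply Measure.integrableOn_of_bounded (M := C) hKf (by fun_prop)
    filter_upwards with z
    rw [norm_mul, Real.norm_eq_abs, Real.norm_eq_abs]
    have : |max (ψ' z) 0| ≤ 1 := by
      rw [abs_of_nonneg (le_max_right _ _)]
      exact max_le ((le_abs_self _).trans (hb z)) zero_le_one
    calc _ ≤ 1 * |F (φ z)| := by gcongr
      _ ≤ C := by simpa using hC _
  have h6 : ∫ y in K, F (φ y) * ψ y = (∫ y in K, max (ψ y) 0 * F (φ y)) -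
      ∫ y in K, max (-ψ y) 0 * F (φ y) := by
    rw [← integral_sub (hbi ψ hψ hψb) (hbi (fun y => -ψ y) hψ.neg (by simpa using hψb))]
    congr 1
    ext y
    rw [← sub_mul, mul_comm]
    congr 1
    rcases le_total (ψ y) 0 with h | h
    · rw [max_eq_right h, max_eq_left (by linarith)]; ring
    · rw [max_eq_left h, max_eq_right (by linarith)]; ring
  rw [h6, signedIntegral]
  linarith

lemma aux_partition (U : ℝ → ℝ) (E : Set ℝ) (hE : MeasurableSet E)
    (hd : ∀ y ∈ E, DifferentiableAt ℝ U y ∧ deriv U y ≠ 0) :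
    ∃ s : ℕ → Set ℝ, Pairwise (Function.onFun Disjoint s) ∧ (∀ n, MeasurableSet (s n)) ∧
      (⋃ n, s n) = E ∧ ∀ n, InjOn U (s n) := by
  classical
  let r : (ℝ →L[ℝ] ℝ) → ℝ≥0 := fun L => if L 1 = 0 then 1 else ‖L 1‖₊ / 2
  have hr : ∀ L, r L ≠ 0 := by
    intro L
    simp only [r]
    split_ifs with h
    · exact one_ne_zero
    · simpa using h
  obtain ⟨s, L, hs1, hs2, hs3, hs4, hs5⟩ :=
    exists_partition_approximatesLinearOn_of_hasFDerivWithinAt U E (fderiv ℝ U)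
      (fun x hx => (hd x hx).1.hasFDerivAt.hasFDerivWithinAt) r hr
  refine ⟨fun n => E ∩ s n, ?_, fun n => hE.inter (hs2 n), ?_, ?_⟩
  · intro i j hij
    exact (hs1 hij).mono inter_subset_right inter_subset_right
  · rw [← inter_iUnion]; exact inter_eq_left.2 hs3
  · intro n x hx y hy hxy
    obtain ⟨z, hz, hLz⟩ := hs5 ⟨x, hx.1⟩ n
    have h1 : L n 1 ≠ 0 := by
      rw [hLz, fderiv_apply_one_eq_deriv]
      exact (hd z hz).2
    by_contra hne
    have h2 := hs4 n x hx y hy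
    have h3 : L n (x - y) = (x - y) * L n 1 := by
      conv_lhs => rw [← mul_one (x - y), ← smul_eq_mul, map_smul, smul_eq_mul]
    rw [hxy, sub_self, zero_sub, norm_neg, h3, norm_mul] at h2
    simp only [r, h1, if_false] at h2
    push_cast at h2
    have h4 : 0 < ‖L n 1‖ := norm_pos_iff.2 h1
    have h5 : 0 < ‖x - y‖ := norm_pos_iff.2 (sub_ne_zero.2 hne)
    nlinarith [mul_pos h4 h5]

lemma aux_area (U : ℝ → ℝ) (hU : LipschitzWith 1 U) (E : Set ℝ) (hE : MeasurableSet E)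
    (hEf : volume E ≠ ⊤) (hd : ∀ y ∈ E, DifferentiableAt ℝ U y ∧ deriv U y ≠ 0)
    (H : ℝ → ℝ) (hH : Measurable H) (hHb : ∃ C : ℝ, ∀ s, |H s| ≤ C) :
    (∀ᵐ x : ℝ, (E ∩ U ⁻¹' {x}).Finite) ∧
    ∫ x : ℝ, ∑ᶠ y ∈ (E ∩ U ⁻¹' {x}), H y = ∫ y in E, |deriv U y| * H y := by
  obtain ⟨C, hC⟩ := hHb
  obtain ⟨s, hs1, hs2, hs3, hs4⟩ := aux_partition U E hE hd
  have hsE : ∀ n, s n ⊆ E := fun n => hs3 ▸ subset_iUnion s n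
  have hder : ∀ n, ∀ x ∈ s n, HasDerivWithinAt U (deriv U x) (s n) x := fun n x hx =>
    (hd x (hsE n hx)).1.hasDerivAt.hasDerivWithinAt
  have hdb : ∀ y, |deriv U y| ≤ 1 := fun y => by
    simpa using norm_deriv_le_of_lipschitz hU (x₀ := y)
  have hdm := measurable_deriv U
  have himm : ∀ n, MeasurableSet (U '' s n) := fun n =>
    (hs2 n).image_of_continuousOn_injOn hU.continuous.continuousOn (hs4 n)
  have hi1 : ∀ H' : ℝ → ℝ, Measurable H' → (∀ y, |H' y| ≤ C) →
      IntegrableOn (fun y => |deriv U y| * H' y) E := by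
    intro H' hm hb
    apply Measure.integrableOn_of_bounded (M := C) hEf (by fun_prop)
    filter_upwards with z
    rw [norm_mul, Real.norm_eq_abs, Real.norm_eq_abs, abs_abs]
    calc _ ≤ 1 * |H' z| := by gcongr; exact hdb z
      _ ≤ C := by simpa using hb _
  -- finiteness
  have hbc : ∀ᵐ x : ℝ, {n | x ∈ U '' s n}.Finite := by
    apply ae_finite_setOfPred_mem
    have h1 : ∀ n, volume (U '' s n) ≤ volume (s n) := by
      intro n
      rw [← setLIntegral_one, lintegral_image_eq_lintegral_abs_deriv_mul (hs2 n) (hder n) (hs4 n),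
        ← setLIntegral_one]
      refine lintegral_mono fun y => ?_
      simpa using hdb y
    refine ne_top_of_le_ne_top hEf ?_
    rw [← hs3, measure_iUnion hs1 hs2]
    exact ENNReal.tsum_le_tsum h1
  let l : ℕ → ℝ → Set ℝ := fun n x => s n ∩ U ⁻¹' {x}
  have hlsub : ∀ n x, (l n x).Subsingleton := fun n x y hy z hz =>
    hs4 n hy.1 hz.1 (hy.2.trans hz.2.symm)
  have hlU : ∀ x, (E ∩ U ⁻¹' {x}) = ⋃ n ∈ {n | x ∈ U '' s n}, l n x := by
    intro x
    ext y
    simp only [mem_iUnion, l]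
    constructor
    · rintro ⟨hy, hx⟩
      rw [← hs3] at hy
      obtain ⟨n, hn⟩ := mem_iUnion.1 hy
      exact ⟨n, ⟨y, hn, hx⟩, hn, hx⟩
    · rintro ⟨n, -, hn, hx⟩
      exact ⟨hsE n hn, hx⟩
  have hfin : ∀ᵐ x : ℝ, (E ∩ U ⁻¹' {x}).Finite := by
    filter_upwards [hbc] with x hx
    rw [hlU]
    exact hx.biUnion fun n _ => (hlsub n x).finite
  refine ⟨hfin, ?_⟩
  let G : ℕ → ℝ → ℝ := fun n x => ∑ᶠ y ∈ l n x, H y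
  have hG1 : ∀ n, ∀ y ∈ s n, G n (U y) = H y := by
    intro n y hy
    have : l n (U y) = {y} := by
      apply (hlsub n (U y)).eq_singleton_of_mem
      exact ⟨hy, rfl⟩
    simp only [G, this, finsum_mem_singleton]
  have hG0 : ∀ n x, x ∉ U '' s n → G n x = 0 := by
    intro n x hx
    have : l n x = ∅ := by
      ext y; constructor
      · rintro ⟨h1, h2⟩; exact hx ⟨y, h1, h2⟩
      · exact fun h => h.elim
    simp only [G, this, finsum_mem_empty]
  have hGi : ∀ n, Integrable (G n) := by
    intro n
    have : IntegrableOn (G n) (U '' s n) := by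
      rw [integrableOn_image_iff_integrableOn_abs_deriv_smul (hs2 n) (hder n) (hs4 n)]
      refine ((hi1 H hH hC).mono_set (hsE n)).congr_fun (fun y hy => ?_) (hs2 n)
      simp only [smul_eq_mul, hG1 n y hy]
    exact this.integrable_of_forall_notMem_eq_zero (hG0 n)
  have hGI : ∀ n, ∫ x, G n x = ∫ y in s n, |deriv U y| * H y := by
    intro n
    rw [← setIntegral_eq_integral_of_forall_compl_eq_zero (hG0 n),
      integral_image_eq_integral_abs_deriv_smul (hs2 n) (hder n) (hs4 n)]
    refine setIntegral_congr_fun (hs2 n) (fun y hy => ?_)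
    simp only [smul_eq_mul, hG1 n y hy]
  have hGN : ∀ n, ∫ x, ‖G n x‖ = ∫ y in s n, |deriv U y| * |H y| := by
    intro n
    rw [← setIntegral_eq_integral_of_forall_compl_eq_zero (s := U '' s n)
        (fun x hx => by rw [hG0 n x hx, norm_zero]),
      integral_image_eq_integral_abs_deriv_smul (hs2 n) (hder n) (hs4 n)]
    refine setIntegral_congr_fun (hs2 n) (fun y hy => ?_)
    simp only [smul_eq_mul, hG1 n y hy, Real.norm_eq_abs]
  have hS1 := hasSum_integral_of_summable_integral_norm hGi (by
    simp only [hGN]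
    refine (hasSum_integral_iUnion hs2 hs1 ?_).summable
    rw [hs3]
    exact hi1 (fun y => |H y|) (by fun_prop) (by simpa using hC))
  simp only [hGI] at hS1
  have hS2 := hasSum_integral_iUnion (f := fun y => |deriv U y| * H y) (μ := volume) hs2 hs1
    (by rw [hs3]; exact hi1 H hH hC)
  rw [hs3] at hS2
  rw [← hS1.unique hS2]
  apply integral_congr_ae
  filter_upwards [hbc] with x hx
  rw [hlU, finsum_mem_biUnion _ hx (fun n _ => (hlsub n x).finite)]
  · rw [finsum_mem_eq_finite_toFinset_sum _ hx, tsum_eq_sum (s := hx.toFinset)]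
    intro n hn
    exact hG0 n x (by simpa using hn)
  · intro i _ j _ hij
    refine Disjoint.mono ?_ ?_ (hs1 hij) <;> exact fun y hy => hy.1

lemma aux_null (U : ℝ → ℝ) (hU : LipschitzWith 1 U) :
    ∀ᵐ x : ℝ, ∀ y, U y = x → deriv U y ≠ 0 := by
  have h1 : volume (U '' {y | ¬ DifferentiableAt ℝ U y}) = 0 := by
    have h0 : volume {y | ¬ DifferentiableAt ℝ U y} = 0 := hU.ae_differentiableAt_real
    have h2 := (hU.lipschitzOnWith (s := {y | ¬ DifferentiableAt ℝ U y})).hausdorffMeasure_image_le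
      (d := 1) zero_le_one
    rw [hausdorffMeasure_real, h0, mul_zero] at h2
    exact le_antisymm h2 bot_le
  have h2 : volume (U '' {y | DifferentiableAt ℝ U y ∧ deriv U y = 0}) = 0 := by
    apply addHaar_image_eq_zero_of_det_fderivWithin_eq_zero volume (f' := fderiv ℝ U)
    · intro x hx
      exact hx.1.hasFDerivAt.hasFDerivWithinAt
    · intro x hx
      have : fderiv ℝ U x = 0 := by
        ext; simpa using hx.2
      rw [this]; simp
  filter_upwards [measure_eq_zero_iff_ae_notMem.1 h1, measure_eq_zero_iff_ae_notMem.1 h2]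
    with x hx1 hx2 y hy h0
  by_cases hd : DifferentiableAt ℝ U y
  · exact hx2 ⟨y, ⟨hd, h0⟩, hy⟩
  · exact hx1 ⟨y, hd, hy⟩

lemma aux_cross (A U V : ℝ → ℝ) (T : ℝ) (hA : StrictMono A)
    (hU : Continuous U) (hUV : ∀ s ∈ Icc 0 T, U (A s) = V s) (s : ℝ) (hs : s ∈ Ioo 0 T)
    (hc : ContinuousAt A s) (hd : 0 < deriv U (A s)) : IncreasesThrough V (V s) s := by
  have hnear : ∀ᶠ r in nhds s, U (A r) = V r := by
    filter_upwards [Ioo_mem_nhds hs.1 hs.2] with r hr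
    exact hUV r ⟨hr.1.le, hr.2.le⟩
  have hVs := hUV s ⟨hs.1.le, hs.2.le⟩
  refine ⟨hs.1, rfl, ?_, ?_⟩
  · have h1 : ContinuousAt (U ∘ A) s := hU.continuousAt.comp hc
    exact (h1.congr hnear).continuousWithinAt
  · have hder : HasDerivAt U (deriv U (A s)) (A s) :=
      (differentiableAt_of_deriv_ne_zero hd.ne').hasDerivAt
    have h2 := (hasDerivAt_iff_tendsto_slope.1 hder).eventually_const_lt hd
    have h3 : Tendsto A (nhdsWithin s {s}ᶜ) (nhdsWithin (A s) {A s}ᶜ) := by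
      refine tendsto_nhdsWithin_iff.2 ⟨hc.mono_left nhdsWithin_le_nhds, ?_⟩
      filter_upwards [self_mem_nhdsWithin] with r hr
      exact fun h => hr (hA.injective h)
    have h4 := h3.eventually h2
    rw [eventually_nhdsWithin_iff] at h4
    obtain ⟨ε, hε, h5⟩ := Metric.eventually_nhds_iff.1 (h4.and hnear)
    refine ⟨ε, hε, fun r _ hr => ?_⟩
    obtain ⟨h6, h7⟩ := h5 (y := r) (by simpa [Real.dist_eq] using hr)
    rw [slope_def_field] at h6
    constructor
    · intro hlt
      have h8 := h6 hlt.ne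
      have h9 : A r - A s < 0 := sub_neg.2 (hA hlt)
      rw [div_pos_iff] at h8
      rw [← h7, ← hVs]
      rcases h8 with h | h <;> linarith
    · intro hlt
      have h8 := h6 hlt.ne'
      have h9 : 0 < A r - A s := sub_pos.2 (hA hlt)
      rw [div_pos_iff] at h8
      rw [← h7, ← hVs]
      rcases h8 with h | h <;> linarith

lemma aux_cross_dec (A U V : ℝ → ℝ) (T : ℝ) (hA : StrictMono A)
    (hU : Continuous U) (hUV : ∀ s ∈ Icc 0 T, U (A s) = V s) (s : ℝ) (hs : s ∈ Ioo 0 T)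
    (hc : ContinuousAt A s) (hd : deriv U (A s) < 0) : DecreasesThrough V (V s) s := by
  refine aux_cross A (fun y => - U y) (fun r => - V r) T hA hU.neg
    (fun r hr => by simp [hUV r hr]) s hs hc ?_
  rw [deriv.fun_neg]; linarith

lemma aux_excl (V : ℝ → ℝ) (x s : ℝ) (h1 : IncreasesThrough V x s)
    (h2 : DecreasesThrough V x s) : False := by
  obtain ⟨h0, -, -, ε, hε, h3⟩ := h1
  obtain ⟨-, -, -, δ, hδ, h4⟩ := h2
  have hm : 0 < min ε δ := lt_min hε hδ
  have h5 := (h3 (s + min ε δ / 2) (mem_Ici.2 (by linarith)) (by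
    rw [add_sub_cancel_left, abs_of_pos (by linarith)]
    linarith [min_le_left ε δ])).2 (by linarith)
  have h6 := (h4 (s + min ε δ / 2) (mem_Ici.2 (by linarith)) (by
    rw [add_sub_cancel_left, abs_of_pos (by linarith)]
    linarith [min_le_right ε δ])).2 (by linarith)
  linarith

set_option maxHeartbeats 4000000 in
/-- Let `V` be càdlàg on `[0,∞)` with finite variation on compacts,
with canonical decomposition `V = Vc + Vd`, and let `μc` be the signed Stieltjes measure
of `Vc` on `[0,t]`. For all bounded measurable `f : ℝ → ℝ` and `g : [0,t] → ℝ`,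
`∫_0^t f(V s) g(s) μc(ds) = ∫_ℝ (∫_{[0,t]} g(s) ℓ^x(ds)) f(x) dx`, where for a.e. `x`
(namely those with finitely many passage times) the Stieltjes measure `ℓ^x(ds)` of the
step function `s ↦ ℓ^x(s)` is `Σ_{s∈ℐ(x)} δ_s − Σ_{s∈𝒟(x)} δ_s`, so that
`∫_{[0,t]} g(s) ℓ^x(ds) = Σ_{s ∈ (0,t]∩ℐ(x)} g(s) − Σ_{s ∈ (0,t]∩𝒟(x)} g(s)`. -/
theorem fubini_signed_local_time
    (V Vm Vc Vd : ℝ → ℝ)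
    (hV_rc : ∀ s ∈ Set.Ici (0 : ℝ), ContinuousWithinAt V (Set.Ici s) s)
    (hV_ll : ∀ s ∈ Set.Ioi (0 : ℝ),
      Filter.Tendsto V (nhdsWithin s (Set.Iio s)) (nhds (Vm s)))
    (hV_bv : ∀ T : ℝ, BoundedVariationOn V (Set.Icc 0 T))
    (hdecomp : ∀ s ∈ Set.Ici (0 : ℝ), V s = Vc s + Vd s)
    (hVc_cont : ContinuousOn Vc (Set.Ici 0))
    (hVc_bv : ∀ T : ℝ, BoundedVariationOn Vc (Set.Icc 0 T))
    (hVd_sum : ∀ s ∈ Set.Ici (0 : ℝ),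
      HasSum (fun u : Set.Ioc (0 : ℝ) s => V u.1 - Vm u.1) (Vd s))
    (hVd_abs : ∀ s ∈ Set.Ici (0 : ℝ),
      Summable (fun u : Set.Ioc (0 : ℝ) s => |V u.1 - Vm u.1|))
    (t : ℝ) (ht : 0 < t)
    (μc : MeasureTheory.SignedMeasure ℝ)
    (hμc : ∀ a b : ℝ, 0 ≤ a → a ≤ b → b ≤ t → μc (Set.Ioc a b) = Vc b - Vc a)
    (f g : ℝ → ℝ) (hf_meas : Measurable f) (hf_bdd : ∃ C : ℝ, ∀ y, |f y| ≤ C)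
    (hg_meas : Measurable g) (hg_bdd : ∃ C : ℝ, ∀ s, |g s| ≤ C) :
    (∀ᵐ x : ℝ ∂volume, (incSet V x t).Finite ∧ (decSet V x t).Finite) ∧
      signedIntegral μc (Set.Ioc 0 t) (fun s => f (V s) * g s) =
        ∫ x : ℝ, ((∑ᶠ s ∈ incSet V x t, g s) - ∑ᶠ s ∈ decSet V x t, g s) * f x ∂volume := by
  obtain ⟨A, U, hA, hArc, hAtop, hAbot, hU, hUV⟩ :=
    aux_time_change V (t + 1) (by linarith) hV_rc (hV_bv (t + 1))
  obtain ⟨φ, hφ⟩ := aux_phi A hA hArc hAtop hAbot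
  have hφm : Monotone φ := fun x y hxy => (hφ _ _).2 (hxy.trans ((hφ y _).1 le_rfl))
  have hAm : Measurable A := hA.monotone.measurable
  have hφmeas : Measurable φ := hφm.measurable
  have hφA : ∀ s, φ (A s) = s := by
    intro s
    apply le_antisymm ((hφ _ _).2 le_rfl)
    exact hA.le_iff_le.1 ((hφ (A s) _).1 le_rfl)
  have hUm : Measurable U := hU.continuous.measurable
  have hdm : Measurable (deriv U) := measurable_deriv U
  have hdb : ∀ y, |deriv U y| ≤ 1 := fun y => by
    simpa using norm_deriv_le_of_lipschitz hU (x₀ := y)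
  have hpre : ∀ a b, φ ⁻¹' Ioc a b = Ioc (A a) (A b) := by
    intro a b
    ext y
    simp only [mem_preimage, mem_Ioc, hφ, ← not_le]
  set R : Set ℝ := {y | A (φ y) = y} with hR
  have hRm : MeasurableSet R := measurableSet_eq_fun (hAm.comp hφmeas) measurable_id
  set K : Set ℝ := R ∩ Ioc (A 0) (A t) with hK
  have hKm : MeasurableSet K := hRm.inter measurableSet_Ioc
  have hKf : volume K ≠ ⊤ :=
    ne_top_of_le_ne_top (by simp) (measure_mono (inter_subset_right (s := R)))
  obtain ⟨Cf, hCf⟩ := hf_bdd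
  obtain ⟨Cg, hCg⟩ := hg_bdd
  have hCf0 : 0 ≤ Cf := (abs_nonneg _).trans (hCf 0)
  have hCg0 : 0 ≤ Cg := (abs_nonneg _).trans (hCg 0)
  have hUV' : ∀ s ∈ Icc 0 t, U (A s) = V s := fun s hs => hUV s ⟨hs.1, by linarith [hs.2]⟩
  -- the left-hand side after the time change
  have hsig : ∀ a b : ℝ, 0 ≤ a → a ≤ b → b ≤ t →
      μc (Ioc a b) = ∫ y in K ∩ φ ⁻¹' (Ioc a b), deriv U y := by
    intro a b ha hab hb
    have hset : K ∩ φ ⁻¹' (Ioc a b) = R ∩ Ioc (A a) (A b) := by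
      rw [hpre, hK, inter_assoc]
      congr 1
      exact inter_eq_right.2 (Ioc_subset_Ioc (hA.monotone ha) (hA.monotone hb))
    have hsum : HasSum (fun u : Ioc a b => V u.1 - Vm u.1) (Vd b - Vd a) := by
      have h1 := hasSum_subtype_iff_indicator (f := fun u => V u - Vm u) |>.1 (hVd_sum b (ha.trans hab))
      have h2 := hasSum_subtype_iff_indicator (f := fun u => V u - Vm u) |>.1 (hVd_sum a ha)
      have h3 := h1.sub h2
      refine (hasSum_subtype_iff_indicator (f := fun u => V u - Vm u)).2 ?_
      have h4 : (Ioc a b).indicator (fun u => V u - Vm u) =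
          fun u => (Ioc 0 b).indicator (fun u => V u - Vm u) u -
            (Ioc 0 a).indicator (fun u => V u - Vm u) u := by
        ext u
        simp only [indicator, mem_Ioc]
        split_ifs <;> grind
      rw [h4]
      exact h3
    rw [hset, aux_gap A U φ V Vm hA hφ hU a b (Vd b - Vd a) hab
      (fun s hs => hUV' s ⟨ha.trans hs.1, hs.2.trans hb⟩)
      (fun u hu => hV_ll u (ha.trans_lt hu.1)) hsum, hμc a b ha hab hb,
      hdecomp a ha, hdecomp b (ha.trans hab)]
    ring
  have hL : signedIntegral μc (Ioc 0 t) (fun s => f (V s) * g s) =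
      ∫ y in K, (f (U (A (φ y))) * g (φ y)) * deriv U y := by
    have h1 : signedIntegral μc (Ioc 0 t) (fun s => f (V s) * g s) =
        signedIntegral μc (Ioc 0 t) (fun s => f (U (A s)) * g s) := by
      unfold signedIntegral
      congr 1 <;>
      · refine setIntegral_congr_fun measurableSet_Ioc (fun s hs => ?_)
        simp only [hUV' s ⟨hs.1.le, hs.2⟩]
    rw [h1]
    refine aux_signed μc K hKm hKf (deriv U) φ hdm hdb hφmeas t ?_ hsig
      (fun s => f (U (A s)) * g s) (by fun_prop) ⟨Cf * Cg, fun s => ?_⟩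
    · rw [hpre]; exact inter_subset_right
    · rw [abs_mul]
      exact mul_le_mul (hCf _) (hCg _) (abs_nonneg _) hCf0
  -- the area formula
  set E : Set ℝ := K ∩ {y | deriv U y ≠ 0} with hE
  have hEm : MeasurableSet E := hKm.inter (hdm (measurableSet_singleton 0).compl)
  have hEK : E ⊆ K := inter_subset_left
  have hEf : volume E ≠ ⊤ := ne_top_of_le_ne_top hKf (measure_mono hEK)
  let sg : ℝ → ℝ := fun y => if 0 < deriv U y then 1 else -1
  have hsgm : Measurable sg :=
    Measurable.ite (measurableSet_lt measurable_const hdm) measurable_const measurable_const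
  let H : ℝ → ℝ := fun y => f (U y) * g (φ y) * sg y
  have hHm : Measurable H := by
    simp only [H]; fun_prop
  obtain ⟨hfin, hint⟩ := aux_area U hU E hEm hEf
    (fun y hy => ⟨differentiableAt_of_deriv_ne_zero hy.2, hy.2⟩) H hHm ⟨Cf * Cg, fun s => by
      have h1 : |sg s| = 1 := by
        simp only [sg]; split_ifs <;> simp
      simp only [H]
      rw [abs_mul, h1, mul_one, abs_mul]
      exact mul_le_mul (hCf _) (hCg _) (abs_nonneg _) hCf0⟩
  have hL2 : ∫ y in K, (f (U (A (φ y))) * g (φ y)) * deriv U y =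
      ∫ y in E, |deriv U y| * H y := by
    have hEKi : ∫ y in K, (f (U (A (φ y))) * g (φ y)) * deriv U y =
        ∫ y in E, (f (U (A (φ y))) * g (φ y)) * deriv U y := by
      refine setIntegral_eq_of_subset_of_forall_sdiff_eq_zero hKm hEK ?_
      intro y hy
      have h0 : deriv U y = 0 := by
        by_contra h
        exact hy.2 ⟨hy.1, h⟩
      rw [h0, mul_zero]
    rw [hEKi]
    · refine setIntegral_congr_fun hEm (fun y hy => ?_)
      have hy1 : A (φ y) = y := hy.1.1
      simp only [H, hy1]
      have h2 : |deriv U y| * sg y = deriv U y := by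
        simp only [sg]
        split_ifs with h
        · rw [abs_of_pos h, mul_one]
        · rw [abs_of_nonpos (not_lt.1 h)]; ring
      calc f (U y) * g (φ y) * deriv U y = f (U y) * g (φ y) * (|deriv U y| * sg y) := by rw [h2]
        _ = _ := by ring
  -- identification of the passage times for almost every level
  have hjump : ∀ᵐ x : ℝ, ∀ s, ¬ ContinuousAt A s → V s ≠ x := by
    have h1 : (V '' {s | ¬ ContinuousAt A s}).Countable :=
      hA.monotone.countable_not_continuousAt.image V
    filter_upwards [h1.ae_notMem volume] with x hx s hs hVs
    exact hx ⟨s, hs, hVs⟩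
  have hid : ∀ᵐ x : ℝ, ((incSet V x t).Finite ∧ (decSet V x t).Finite) ∧
      ((∑ᶠ s ∈ incSet V x t, g s) - ∑ᶠ s ∈ decSet V x t, g s) * f x =
        ∑ᶠ y ∈ E ∩ U ⁻¹' {x}, H y := by
    filter_upwards [hjump, hfin, aux_null U hU] with x hxj hxf hxn
    have hT : ∀ s, s ∈ Ioc 0 t → s ∈ Ioo 0 (t + 1) := fun s hs => ⟨hs.1, by linarith [hs.2]⟩
    have hVinc : ∀ s ∈ incSet V x t, V s = x := fun s hs => hs.2.2.1
    have hVdec : ∀ s ∈ decSet V x t, V s = x := fun s hs => neg_inj.1 hs.2.2.1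
    have hdich : ∀ s ∈ Ioc 0 t, V s = x → (0 < deriv U (A s) ∧ s ∈ incSet V x t) ∨
        (deriv U (A s) < 0 ∧ s ∈ decSet V x t) := by
      intro s hs hVs
      have hc : ContinuousAt A s := by
        by_contra h
        exact hxj s h hVs
      have hn : deriv U (A s) ≠ 0 := hxn (A s) ((hUV' s ⟨hs.1.le, hs.2⟩).trans hVs)
      rcases lt_or_gt_of_ne hn with h | h
      · refine Or.inr ⟨h, hs, ?_⟩
        have := aux_cross_dec A U V (t + 1) hA hU.continuous hUV s (hT s hs) hc h
        rwa [hVs] at this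
      · refine Or.inl ⟨h, hs, ?_⟩
        have := aux_cross A U V (t + 1) hA hU.continuous hUV s (hT s hs) hc h
        rwa [hVs] at this
    have hdisj : Disjoint (incSet V x t) (decSet V x t) := by
      rw [Set.disjoint_left]
      intro s h1 h2
      exact aux_excl V x s h1.2 h2.2
    have hset : E ∩ U ⁻¹' {x} = A '' (incSet V x t ∪ decSet V x t) := by
      ext y
      constructor
      · rintro ⟨⟨⟨hyR, hyI⟩, hyd⟩, hyx⟩
        have hyR' : A (φ y) = y := hyR
        have hs : φ y ∈ Ioc 0 t := by
          rw [← hpre] at hyI; exact hyI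
        have hV : V (φ y) = x := by
          rw [← hUV' _ ⟨hs.1.le, hs.2⟩, hyR']; exact hyx
        refine ⟨φ y, ?_, hyR'⟩
        rcases hdich _ hs hV with h | h
        · exact Or.inl h.2
        · exact Or.inr h.2
      · rintro ⟨s, hs, rfl⟩
        have hs1 : s ∈ Ioc 0 t := by
          rcases hs with h | h
          · exact h.1
          · exact h.1
        have hVs : V s = x := by
          rcases hs with h | h
          · exact hVinc s h
          · exact hVdec s h
        have hUx : U (A s) = x := (hUV' s ⟨hs1.1.le, hs1.2⟩).trans hVs
        refine ⟨⟨⟨?_, hA hs1.1, hA.monotone hs1.2⟩, hxn _ hUx⟩, hUx⟩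
        change A (φ (A s)) = A s
        rw [hφA]
    have hfu : (incSet V x t ∪ decSet V x t).Finite := by
      rw [hset] at hxf
      exact hxf.of_finite_image hA.injective.injOn
    have hfi := hfu.subset subset_union_left
    have hfd := hfu.subset subset_union_right
    refine ⟨⟨hfi, hfd⟩, ?_⟩
    rw [hset, finsum_mem_image hA.injective.injOn, finsum_mem_union hdisj hfi hfd, sub_mul,
      sub_eq_add_neg, ← neg_mul, ← finsum_mem_neg_distrib _ hfd, finsum_mem_mul, finsum_mem_mul]
    congr 1
    · refine finsum_mem_congr rfl (fun s hs => ?_)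
      have hVs := hVinc s hs
      have hUx : U (A s) = x := (hUV' s ⟨hs.1.1.le, hs.1.2⟩).trans hVs
      have hpos : 0 < deriv U (A s) := by
        rcases hdich s hs.1 hVs with h | h
        · exact h.1
        · exact (aux_excl V x s hs.2 h.2.2).elim
      simp only [H, sg, hφA, hUx, if_pos hpos]
      ring
    · refine finsum_mem_congr rfl (fun s hs => ?_)
      have hVs := hVdec s hs
      have hUx : U (A s) = x := (hUV' s ⟨hs.1.1.le, hs.1.2⟩).trans hVs
      have hneg : deriv U (A s) < 0 := by
        rcases hdich s hs.1 hVs with h | h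
        · exact (aux_excl V x s h.2.2 hs.2).elim
        · exact h.1
      simp only [H, sg, hφA, hUx, if_neg hneg.not_gt]
      ring
  refine ⟨hid.mono fun x hx => hx.1, ?_⟩
  rw [hL, hL2, ← hint]
  exact (integral_congr_ae (hid.mono fun x hx => hx.2)).symm
end
end
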